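/- Every Z=(X,Y) ∈ Ω₁ is locally Σ-equivalent near the origin to its piecewise linear part Z_L = (X_L, Y_L), where X_L(x,y) = A⁺·(x,y)ᵀ and Y_L(x,y) = A⁻·(x,y)ᵀ and A⁺, A⁻ are the Jacobian matrices of X, Y at the origin. -/

import Mathlib

open Set Filter

noncomputable section

/-- Entry (1,1) of the Jacobian matrix of `X` at the origin. -/
noncomputable def jac11 (X : ℝ × ℝ → ℝ × ℝ) : ℝ := (fderiv ℝ X (0, 0) (1, 0)).1
/-- Entry (1,2) of the Jacobian matrix of `X` at the origin. -/
noncomputable def jac12 (X : ℝ × ℝ → ℝ × ℝ) : ℝ := (fderiv ℝ X (0, 0) (0, 1)).1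
/-- Entry (2,1) of the Jacobian matrix of `X` at the origin, i.e. `∂ₓX₂(0,0)`. -/
noncomputable def jac21 (X : ℝ × ℝ → ℝ × ℝ) : ℝ := (fderiv ℝ X (0, 0) (1, 0)).2
/-- Entry (2,2) of the Jacobian matrix of `X` at the origin. -/
noncomputable def jac22 (X : ℝ × ℝ → ℝ × ℝ) : ℝ := (fderiv ℝ X (0, 0) (0, 1)).2

/-- Determinant of the Jacobian matrix of `X` at the origin. -/
noncomputable def detJ (X : ℝ × ℝ → ℝ × ℝ) : ℝ := jac11 X * jac22 X - jac12 X * jac21 X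
/-- Trace of the Jacobian matrix of `X` at the origin. -/
noncomputable def trJ (X : ℝ × ℝ → ℝ × ℝ) : ℝ := jac11 X + jac22 X

/-- The first (complex) eigenvalue of the Jacobian matrix of `X` at the origin. -/
noncomputable def eig1 (X : ℝ × ℝ → ℝ × ℝ) : ℂ :=
  if 0 ≤ trJ X ^ 2 - 4 * detJ X then
    (((trJ X + Real.sqrt (trJ X ^ 2 - 4 * detJ X)) / 2 : ℝ) : ℂ)
  else
    (((trJ X / 2 : ℝ) : ℂ) + (Real.sqrt (4 * detJ X - trJ X ^ 2) / 2 : ℝ) * Complex.I)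

/-- The second (complex) eigenvalue of the Jacobian matrix of `X` at the origin. -/
noncomputable def eig2 (X : ℝ × ℝ → ℝ × ℝ) : ℂ :=
  if 0 ≤ trJ X ^ 2 - 4 * detJ X then
    (((trJ X - Real.sqrt (trJ X ^ 2 - 4 * detJ X)) / 2 : ℝ) : ℂ)
  else
    (((trJ X / 2 : ℝ) : ℂ) - (Real.sqrt (4 * detJ X - trJ X ^ 2) / 2 : ℝ) * Complex.I)

/-- The quantity ℓ : `Re λ₁⁺/|Im λ₁⁺| + Re λ₁⁻/|Im λ₁⁻|` when both imaginary parts are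
nonzero, and `1` otherwise. -/
noncomputable def ellVal (X Y : ℝ × ℝ → ℝ × ℝ) : ℝ :=
  if (eig1 X).im * (eig1 Y).im ≠ 0 then
    (eig1 X).re / |(eig1 X).im| + (eig1 Y).re / |(eig1 Y).im|
  else 1

/-- Membership in Ω₀ : `Z = (X, Y)` is a piecewise `C¹` vector field on the open set `U`
containing the origin, the origin is a zero of both `X` and `Y`, it is non-degenerate for
both, and `∂ₓX₂(0,0) ⬝ ∂ₓY₂(0,0) > 0`. -/
def InOmega0 (U : Set (ℝ × ℝ)) (X Y : ℝ × ℝ → ℝ × ℝ) : Prop :=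
  IsOpen U ∧ (0, 0) ∈ U ∧ ContDiffOn ℝ 1 X U ∧ ContDiffOn ℝ 1 Y U ∧
    X (0, 0) = (0, 0) ∧ Y (0, 0) = (0, 0) ∧ detJ X * detJ Y ≠ 0 ∧ jac21 X * jac21 Y > 0

/-- Membership in Ω₁ : member of Ω₀ with distinct eigenvalues of each Jacobian matrix
and `ℓ ≠ 0`. -/
def InOmega1 (U : Set (ℝ × ℝ)) (X Y : ℝ × ℝ → ℝ × ℝ) : Prop :=
  InOmega0 U X Y ∧ eig1 X ≠ eig2 X ∧ eig1 Y ≠ eig2 Y ∧ ellVal X Y ≠ 0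

/-- `γ` is a solution of `ẋ = X(x)` on the time set `I`. -/
def IsSolutionOn (X : ℝ × ℝ → ℝ × ℝ) (γ : ℝ → ℝ × ℝ) (I : Set ℝ) : Prop :=
  ∀ t ∈ I, HasDerivAt γ (X (γ t)) t

/-- `H` maps orbit arcs of `X` lying in `S` onto orbit arcs of `X'` lying in `S'`,
preserving the direction of time (via an increasing homeomorphism of time intervals). -/
def MapsOrbits (X X' : ℝ × ℝ → ℝ × ℝ) (H : ℝ × ℝ → ℝ × ℝ) (S S' : Set (ℝ × ℝ)) : Prop :=
  ∀ (γ : ℝ → ℝ × ℝ) (I : Set ℝ), I.OrdConnected → IsSolutionOn X γ I →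
    (∀ t ∈ I, γ t ∈ S) →
    ∃ (δ : ℝ → ℝ × ℝ) (J : Set ℝ) (τ : ℝ → ℝ),
      J.OrdConnected ∧ IsSolutionOn X' δ J ∧ (∀ s ∈ J, δ s ∈ S') ∧
      Set.BijOn τ I J ∧ StrictMonoOn τ I ∧ ContinuousOn τ I ∧
      ∀ t ∈ I, H (γ t) = δ (τ t)

/-- Local Σ-equivalence near the origin between the piecewise smooth vector fields
`Z = (X, Y)` and `Z' = (X', Y')`: a homeomorphism `H` between neighborhoods of the origin
fixing the origin, preserving the switching line `{y = 0}`, and mapping orbit arcs of `X`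
(resp. `Y`) in `{y ≥ 0}` (resp. `{y ≤ 0}`) onto orbit arcs of `X'` (resp. `Y'`),
preserving the direction of time, and conversely. -/
def LocalSigmaEquiv (X Y X' Y' : ℝ × ℝ → ℝ × ℝ) : Prop :=
  ∃ (U₀ V₀ : Set (ℝ × ℝ)) (H Hinv : ℝ × ℝ → ℝ × ℝ),
    U₀ ∈ nhds ((0, 0) : ℝ × ℝ) ∧ V₀ ∈ nhds ((0, 0) : ℝ × ℝ) ∧
    ContinuousOn H U₀ ∧ ContinuousOn Hinv V₀ ∧
    Set.BijOn H U₀ V₀ ∧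
    (∀ p ∈ U₀, Hinv (H p) = p) ∧ (∀ q ∈ V₀, H (Hinv q) = q) ∧
    H (0, 0) = (0, 0) ∧
    H '' (U₀ ∩ {p : ℝ × ℝ | p.2 = 0}) = V₀ ∩ {p : ℝ × ℝ | p.2 = 0} ∧
    MapsOrbits X X' H (U₀ ∩ {p : ℝ × ℝ | 0 ≤ p.2}) (V₀ ∩ {p : ℝ × ℝ | 0 ≤ p.2}) ∧
    MapsOrbits Y Y' H (U₀ ∩ {p : ℝ × ℝ | p.2 ≤ 0}) (V₀ ∩ {p : ℝ × ℝ | p.2 ≤ 0}) ∧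
    MapsOrbits X' X Hinv (V₀ ∩ {p : ℝ × ℝ | 0 ≤ p.2}) (U₀ ∩ {p : ℝ × ℝ | 0 ≤ p.2}) ∧
    MapsOrbits Y' Y Hinv (V₀ ∩ {p : ℝ × ℝ | p.2 ≤ 0}) (U₀ ∩ {p : ℝ × ℝ | p.2 ≤ 0})

/-!
Near the origin each field agrees with a globally Lipschitz small perturbation of its linear part,
so it suffices to compare, on each closed half plane, such a perturbation with the linear field.
In blow-up coordinates their orbits are graphs of solutions of scalar equations `z' = g s z`, and an
orbit equivalence is obtained by matching solutions with corresponding data on the boundary line.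

For real eigenvalues the actions `hR`, `hL` of the equivalence on the two boundary rays, in
logarithmic coordinates, can be prescribed arbitrarily. For a focus the half-return map `p` is
close to the translation by `k = ± π Re λ / |Im λ|`, and the only constraint is
`hL (p s) = hR s + k`. Two half planes can therefore be matched as soon as the full return map is
conjugate to the translation by `k₁ + k₂`. It is close to this translation, and an increasing
homeomorphism of the line close to a nonzero translation is conjugate to it. For two foci
`k₁ + k₂ = ± π ℓ ≠ 0`; otherwise one of `k₁`, `k₂` is free.
-/

namespace PiecewiseSmooth

open scoped NNReal Topology

/-! ### Lipschitz differential equations -/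

section LipschitzODE

variable {E : Type*} [NormedAddCommGroup E] [NormedSpace ℝ E] {v : ℝ → E → E} {K : ℝ≥0}

theorem eqOn_of_isIntegralCurveOn {I : Set ℝ} {f g : ℝ → E} {t₀ : ℝ} (hI : I.OrdConnected)
    (hv : ∀ t ∈ I, LipschitzWith K (v t)) (hf : IsIntegralCurveOn f v I)
    (hg : IsIntegralCurveOn g v I) (ht₀ : t₀ ∈ I) (h : f t₀ = g t₀) : EqOn f g I := by
  intro t ht
  rcases le_total t t₀ with hle | hle
  · have hsub : Icc t t₀ ⊆ I := hI.out ht ht₀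
    have left {γ : ℝ → E} (hγ : IsIntegralCurveOn γ v I) (r : ℝ) (hr : r ∈ Ioc t t₀) :
        HasDerivWithinAt γ (v r (γ r)) (Iic r) r :=
      (hγ.mono hsub r (Ioc_subset_Icc_self hr)).mono_of_mem_nhdsWithin (Icc_mem_nhdsLE_of_mem hr)
    exact ODE_solution_unique_of_mem_Icc_left (s := fun _ => univ)
      (fun r hr => (hv r (hsub (Ioc_subset_Icc_self hr))).lipschitzOnWith)
      (hf.mono hsub).continuousOn (left hf) (fun _ _ => mem_univ _)
      (hg.mono hsub).continuousOn (left hg) (fun _ _ => mem_univ _) h ⟨le_rfl, hle⟩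
  · have hsub : Icc t₀ t ⊆ I := hI.out ht₀ ht
    have right {γ : ℝ → E} (hγ : IsIntegralCurveOn γ v I) (r : ℝ) (hr : r ∈ Ico t₀ t) :
        HasDerivWithinAt γ (v r (γ r)) (Ici r) r :=
      (hγ.mono hsub r (Ico_subset_Icc_self hr)).mono_of_mem_nhdsWithin (Icc_mem_nhdsGE_of_mem hr)
    exact ODE_solution_unique_of_mem_Icc_right (s := fun _ => univ)
      (fun r hr => (hv r (hsub (Ico_subset_Icc_self hr))).lipschitzOnWith)
      (hf.mono hsub).continuousOn (right hf) (fun _ _ => mem_univ _)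
      (hg.mono hsub).continuousOn (right hg) (fun _ _ => mem_univ _) h ⟨hle, le_rfl⟩

theorem eq_of_isIntegralCurve {f g : ℝ → E} {t₀ : ℝ} (hv : ∀ t, LipschitzWith K (v t))
    (hf : IsIntegralCurve f v) (hg : IsIntegralCurve g v) (h : f t₀ = g t₀) : f = g :=
  ODE_solution_unique_univ (s := fun _ => univ) (fun t => (hv t).lipschitzOnWith)
    (fun t => ⟨hf t, mem_univ _⟩) (fun t => ⟨hg t, mem_univ _⟩) h

theorem isIntegralCurveOn_comp_neg {γ : ℝ → E} {I : Set ℝ} (hγ : IsIntegralCurveOn γ v I) :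
    IsIntegralCurveOn (fun t => γ (-t)) (fun t x => -v (-t) x) {t | -t ∈ I} := fun t ht => by
  simpa only [Function.comp_def, neg_smul, one_smul] using HasDerivWithinAt.scomp
    (s := {t | -t ∈ I}) t (hγ (-t) ht) (hasDerivAt_neg t).hasDerivWithinAt fun _ hs => hs

theorem isIntegralCurve_comp_neg {γ : ℝ → E} (hγ : IsIntegralCurve γ v) :
    IsIntegralCurve (fun t => γ (-t)) (fun t x => -v (-t) x) := by
  rw [← isIntegralCurveOn_univ] at hγ ⊢
  simpa using isIntegralCurveOn_comp_neg hγ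

theorem dist_le_of_isIntegralCurve {f g : ℝ → E} (hv : ∀ t, LipschitzWith K (v t))
    (hf : IsIntegralCurve f v) (hg : IsIntegralCurve g v) (a b : ℝ) :
    dist (f b) (g b) ≤ dist (f a) (g a) * Real.exp (K * |b - a|) := by
  have forward {w : ℝ → E → E} {φ ψ : ℝ → E} (hw : ∀ t, LipschitzWith K (w t))
      (hφ : IsIntegralCurve φ w) (hψ : IsIntegralCurve ψ w) {c d : ℝ} (hcd : c ≤ d) :
      dist (φ d) (ψ d) ≤ dist (φ c) (ψ c) * Real.exp (K * (d - c)) :=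
    dist_le_of_trajectories_ODE hw hφ.continuous.continuousOn
      (fun t _ => (hφ t).hasDerivWithinAt) hψ.continuous.continuousOn
      (fun t _ => (hψ t).hasDerivWithinAt) le_rfl d ⟨hcd, le_rfl⟩
  rcases le_total a b with h | h
  · simpa [abs_of_nonneg (sub_nonneg.2 h)] using forward hv hf hg h
  · have := forward (fun t => (hv (-t)).neg) (isIntegralCurve_comp_neg hf)
      (isIntegralCurve_comp_neg hg) (neg_le_neg h)
    simpa [abs_of_nonpos (sub_nonpos.2 h), neg_add_eq_sub] using this

theorem exists_isIntegralCurve_of_forall_nat {h t₀ : ℝ} {x₀ : E} (hv : ∀ t, LipschitzWith K (v t))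
    (hpos : 0 < h) (hex : ∀ n : ℕ, ∃ α : ℝ → E, α t₀ = x₀ ∧
      IsIntegralCurveOn α v (Ioo (t₀ - (n + 1) * h) (t₀ + (n + 1) * h))) :
    ∃ α : ℝ → E, α t₀ = x₀ ∧ IsIntegralCurve α v := by
  choose α h0 hα using hex
  have mono {n m : ℕ} (hnm : n ≤ m) : Ioo (t₀ - (n + 1) * h) (t₀ + (n + 1) * h) ⊆
      Ioo (t₀ - (m + 1) * h) (t₀ + (m + 1) * h) := by
    have : (n + 1 : ℝ) * h ≤ (m + 1) * h := by gcongr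
    exact Ioo_subset_Ioo (by linarith) (by linarith)
  have agree {n m : ℕ} (hnm : n ≤ m) :
      EqOn (α n) (α m) (Ioo (t₀ - (n + 1) * h) (t₀ + (n + 1) * h)) := by
    have hn : 0 < (n + 1 : ℝ) * h := by positivity
    exact eqOn_of_isIntegralCurveOn ordConnected_Ioo (fun t _ => hv t) (hα n)
      ((hα m).mono (mono hnm)) ⟨by linarith, by linarith⟩ ((h0 n).trans (h0 m).symm)
  have cover (t : ℝ) : ∃ n : ℕ, t ∈ Ioo (t₀ - (n + 1) * h) (t₀ + (n + 1) * h) := by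
    obtain ⟨n, hn⟩ := exists_nat_gt (|t - t₀| / h)
    rw [div_lt_iff₀ hpos] at hn
    obtain ⟨hl, hr⟩ := abs_lt.1 hn
    exact ⟨n, by linarith, by linarith⟩
  choose N hN using cover
  refine ⟨fun t => α (N t) t, h0 _, fun t => ?_⟩
  refine ((hα (N t) t (hN t)).hasDerivAt (Ioo_mem_nhds (hN t).1 (hN t).2)).congr_of_eventuallyEq ?_
  filter_upwards [Ioo_mem_nhds (hN t).1 (hN t).2] with x hx
  rcases le_total (N t) (N x) with hle | hle
  · exact (agree hle hx).symm
  · exact agree hle (hN x)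

variable [CompleteSpace E]

theorem exists_isIntegralCurveOn_Ioo (hv : ∀ t, LipschitzWith K (v t))
    (hc : ∀ x, Continuous (v · x)) (t₀ : ℝ) (x₀ : E) :
    ∃ α : ℝ → E, α t₀ = x₀ ∧
      IsIntegralCurveOn α v (Ioo (t₀ - 1 / (1 + K)) (t₀ + 1 / (1 + K))) := by
  set h : ℝ := 1 / (1 + K) with hh
  have hpos : 0 < h := by positivity
  obtain ⟨M, hM⟩ := (isCompact_Icc (a := t₀ - h) (b := t₀ + h)).exists_bound_of_continuousOn
    (hc x₀).continuousOn
  have hM0 : 0 ≤ M := (norm_nonneg _).trans (hM t₀ ⟨by linarith, by linarith⟩)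
  have picard : IsPicardLindelof v (tmin := t₀ - h) (tmax := t₀ + h)
      ⟨t₀, by constructor <;> linarith⟩ x₀ ⟨M, hM0⟩ 0 (⟨M, hM0⟩ + K * ⟨M, hM0⟩) K := by
    refine ⟨fun t _ => (hv t).lipschitzOnWith, fun x _ => (hc x).continuousOn, ?_, ?_⟩
    · intro t ht x hx
      calc ‖v t x‖ ≤ ‖v t x₀‖ + ‖v t x - v t x₀‖ := norm_le_insert' _ _
        _ ≤ M + K * M := by
            rw [← dist_eq_norm]
            gcongr
            · exact hM t ht
            · exact (hv t).dist_le_mul_of_le hx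
    · change (M + K * M) * max (t₀ + h - t₀) (t₀ - (t₀ - h)) ≤ M - 0
      have hstep : max (t₀ + h - t₀) (t₀ - (t₀ - h)) = h := by simp
      rw [hstep, hh]
      apply le_of_eq
      field_simp
      ring
  obtain ⟨α, h0, hα⟩ := picard.exists_eq_forall_mem_Icc_hasDerivWithinAt₀
  exact ⟨α, h0, fun t ht => (hα t (Ioo_subset_Icc_self ht)).mono Ioo_subset_Icc_self⟩

theorem exists_isIntegralCurveOn_Ioo_extend_right (hv : ∀ t, LipschitzWith K (v t))
    (hc : ∀ x, Continuous (v · x)) {a b t₀ : ℝ} {x₀ : E} (ht₀ : t₀ ∈ Ioo a b)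
    (hex : ∃ α : ℝ → E, α t₀ = x₀ ∧ IsIntegralCurveOn α v (Ioo a b)) :
    ∃ α : ℝ → E, α t₀ = x₀ ∧ IsIntegralCurveOn α v (Ioo a (b + 1 / (1 + K) / 2)) := by
  obtain ⟨α, h0, hα⟩ := hex
  set h : ℝ := 1 / (1 + K) with hh
  have hpos : 0 < h := by positivity
  obtain ⟨t₁, h1, h2⟩ : ∃ t₁, max t₀ (b - h / 2) < t₁ ∧ t₁ < b :=
    exists_between (max_lt ht₀.2 (by linarith))
  obtain ⟨h3, h4⟩ := max_lt_iff.1 h1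
  obtain ⟨β, hβ1, hβ⟩ := exists_isIntegralCurveOn_Ioo hv hc t₁ (α t₁)
  rw [← hh] at hβ
  have hst : max a (t₁ - h) < t₁ := max_lt (ht₀.1.trans h3) (by linarith)
  have hagree : EqOn α β (Ioo (max a (t₁ - h)) b) :=
    eqOn_of_isIntegralCurveOn ordConnected_Ioo (fun t _ => hv t)
      (hα.mono (Ioo_subset_Ioo_left (le_max_left _ _)))
      (hβ.mono (Ioo_subset_Ioo (le_max_right _ _) (by linarith))) ⟨hst, h2⟩ hβ1.symm
  refine ⟨fun t => if t < t₁ then α t else β t, by simp [h3, h0], fun t ht => ?_⟩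
  apply HasDerivAt.hasDerivWithinAt
  rcases lt_or_ge t t₁ with hlt | hge
  · have hev : (fun t => if t < t₁ then α t else β t) =ᶠ[𝓝 t] α := by
      filter_upwards [Iio_mem_nhds hlt] with x hx using if_pos hx
    have hder := (hα t ⟨ht.1, hlt.trans h2⟩).hasDerivAt (Ioo_mem_nhds ht.1 (hlt.trans h2))
    simpa [hlt] using hder.congr_of_eventuallyEq hev
  · have hev : (fun t => if t < t₁ then α t else β t) =ᶠ[𝓝 t] β := by
      filter_upwards [Ioi_mem_nhds (hst.trans_le hge)] with x hx
      split_ifs with hx'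
      · exact hagree ⟨hx, hx'.trans h2⟩
      · rfl
    have hmem : t ∈ Ioo (t₁ - h) (t₁ + h) := ⟨by linarith, by linarith [ht.2]⟩
    have hder := (hβ t hmem).hasDerivAt (Ioo_mem_nhds hmem.1 hmem.2)
    simpa [not_lt.2 hge] using hder.congr_of_eventuallyEq hev

theorem exists_isIntegralCurveOn_Ioo_extend_left (hv : ∀ t, LipschitzWith K (v t))
    (hc : ∀ x, Continuous (v · x)) {a b t₀ : ℝ} {x₀ : E} (ht₀ : t₀ ∈ Ioo a b)
    (hex : ∃ α : ℝ → E, α t₀ = x₀ ∧ IsIntegralCurveOn α v (Ioo a b)) :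
    ∃ α : ℝ → E, α t₀ = x₀ ∧ IsIntegralCurveOn α v (Ioo (a - 1 / (1 + K) / 2) b) := by
  obtain ⟨α, h0, hα⟩ := hex
  obtain ⟨β, hβ0, hβ⟩ := exists_isIntegralCurveOn_Ioo_extend_right (fun t => (hv (-t)).neg)
    (fun x => ((hc x).comp continuous_neg).neg) (a := -b) (b := -a) (t₀ := -t₀) (x₀ := x₀)
    ⟨neg_lt_neg ht₀.2, neg_lt_neg ht₀.1⟩
    ⟨fun t => α (-t), by simp [h0], (isIntegralCurveOn_comp_neg hα).mono
      fun t ht => ⟨by linarith [ht.2], by linarith [ht.1]⟩⟩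
  refine ⟨fun t => β (-t), hβ0, ?_⟩
  have hneg := isIntegralCurveOn_comp_neg hβ
  simp only [Pi.neg_apply, neg_neg] at hneg
  exact hneg.mono fun t (ht : t ∈ Ioo (a - 1 / (1 + K) / 2) b) =>
    ⟨by linarith [ht.2], by linarith [ht.1]⟩

theorem exists_isIntegralCurve_of_lipschitzWith (hv : ∀ t, LipschitzWith K (v t))
    (hc : ∀ x, Continuous (v · x)) (t₀ : ℝ) (x₀ : E) :
    ∃ α : ℝ → E, α t₀ = x₀ ∧ IsIntegralCurve α v := by
  set h : ℝ := 1 / (1 + K) / 2 with hh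
  have hpos : 0 < h := by positivity
  refine exists_isIntegralCurve_of_forall_nat hv hpos fun n => ?_
  induction n with
  | zero =>
    obtain ⟨α, h0, hα⟩ := exists_isIntegralCurveOn_Ioo hv hc t₀ x₀
    refine ⟨α, h0, hα.mono (Ioo_subset_Ioo ?_ ?_)⟩ <;> push_cast <;> linarith
  | succ n ih =>
    have hn : 0 < (n + 1 : ℝ) * h := by positivity
    have hright := exists_isIntegralCurveOn_Ioo_extend_right hv hc ⟨by linarith, by linarith⟩ ih
    obtain ⟨α, h0, hα⟩ := exists_isIntegralCurveOn_Ioo_extend_left hv hc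
      ⟨by linarith, by rw [← hh]; linarith⟩ hright
    refine ⟨α, h0, hα.mono (Ioo_subset_Ioo ?_ ?_)⟩ <;> rw [← hh] <;> push_cast <;> linarith

end LipschitzODE

/-! ### Flows of scalar equations -/

section ScalarFlow

theorem continuous_of_isIntegralCurve {E : Type*} [NormedAddCommGroup E] [NormedSpace ℝ E]
    {v : ℝ → E → E} {K : ℝ≥0} (hv : ∀ t, LipschitzWith K (v t)) {Φ : ℝ → E → ℝ → E}
    (hini : ∀ s z, Φ s z s = z) (hΦ : ∀ s z, IsIntegralCurve (Φ s z) v) :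
    Continuous fun p : ℝ × E × ℝ => Φ p.1 p.2.1 p.2.2 := by
  rw [continuous_iff_continuousAt]
  rintro ⟨s₀, z₀, t₀⟩
  have hc : Continuous (Φ s₀ z₀) := (hΦ s₀ z₀).continuous
  rw [ContinuousAt, tendsto_iff_dist_tendsto_zero]
  refine squeeze_zero (g := fun p : ℝ × E × ℝ => dist p.2.1 (Φ s₀ z₀ p.1) *
    Real.exp (K * |p.2.2 - p.1|) + dist (Φ s₀ z₀ p.2.2) (Φ s₀ z₀ t₀))
    (fun _ => dist_nonneg) (fun ⟨s, z, t⟩ => ?_) ?_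
  · have hgronwall := dist_le_of_isIntegralCurve hv (hΦ s z) (hΦ s₀ z₀) s t
    rw [hini] at hgronwall
    exact (dist_triangle _ (Φ s₀ z₀ t) _).trans (by gcongr)
  · have hcont : Continuous fun p : ℝ × E × ℝ => dist p.2.1 (Φ s₀ z₀ p.1) *
        Real.exp (K * |p.2.2 - p.1|) + dist (Φ s₀ z₀ p.2.2) (Φ s₀ z₀ t₀) := by fun_prop
    simpa [hini] using hcont.tendsto (s₀, z₀, t₀)

theorem lt_of_isIntegralCurve {g : ℝ → ℝ → ℝ} {K : ℝ≥0} {f h : ℝ → ℝ} {s₀ : ℝ}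
    (hg : ∀ s, LipschitzWith K (g s)) (hf : IsIntegralCurve f g) (hh : IsIntegralCurve h g)
    (hlt : f s₀ < h s₀) (s : ℝ) : f s < h s := by
  by_contra! hle
  obtain ⟨r, hr⟩ : (0 : ℝ) ∈ range (fun s => h s - f s) :=
    mem_range_of_exists_le_of_exists_ge (hh.continuous.sub hf.continuous)
      ⟨s, sub_nonpos.2 hle⟩ ⟨s₀, (sub_pos.2 hlt).le⟩
  rw [eq_of_isIntegralCurve hg hf hh (sub_eq_zero.1 hr).symm] at hlt
  exact hlt.false

/-- `S` is the flow of the scalar equation `z' = g s z` from time `0`: `S s e` is the value at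
time `s` of the solution through `(0, e)`, so `(S s).symm z` is the value at time `0` of the
solution through `(s, z)`. -/
structure IsScalarFlow (g : ℝ → ℝ → ℝ) (S : ℝ → ℝ ≃o ℝ) : Prop where
  exists_lipschitzWith : ∃ K : ℝ≥0, ∀ s, LipschitzWith K (g s)
  zero_apply : ∀ e, S 0 e = e
  isIntegralCurve : ∀ e, IsIntegralCurve (fun s => S s e) g
  continuous_apply : Continuous fun p : ℝ × ℝ => S p.1 p.2
  continuous_symm_apply : Continuous fun p : ℝ × ℝ => (S p.1).symm p.2

variable {g : ℝ → ℝ → ℝ} {S : ℝ → ℝ ≃o ℝ}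

theorem exists_isScalarFlow {K : ℝ≥0} (hg : ∀ s, LipschitzWith K (g s))
    (hc : ∀ z, Continuous (g · z)) : ∃ S, IsScalarFlow g S := by
  choose Φ hini hΦ using exists_isIntegralCurve_of_lipschitzWith hg hc
  have hcont := continuous_of_isIntegralCurve hg hini hΦ
  have hmono (s : ℝ) : StrictMono fun e => Φ 0 e s := fun e₁ e₂ hlt =>
    lt_of_isIntegralCurve hg (hΦ 0 e₁) (hΦ 0 e₂) (s₀ := 0) (by rwa [hini, hini]) s
  have hback (s z : ℝ) : Φ 0 (Φ s z 0) s = z := by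
    rw [eq_of_isIntegralCurve hg (hΦ 0 (Φ s z 0)) (hΦ s z) (hini _ _), hini]
  let S (s : ℝ) : ℝ ≃o ℝ := (hmono s).orderIsoOfRightInverse _ (fun z => Φ s z 0) (hback s)
  exact ⟨S, ⟨K, hg⟩, fun e => hini 0 e, hΦ 0,
    hcont.comp (continuous_const.prodMk (continuous_snd.prodMk continuous_fst)),
    hcont.comp (continuous_fst.prodMk (continuous_snd.prodMk continuous_const))⟩

theorem IsScalarFlow.zero_symm_apply (hS : IsScalarFlow g S) (z : ℝ) : (S 0).symm z = z := by
  rw [OrderIso.symm_apply_eq, hS.zero_apply]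

theorem IsScalarFlow.abs_apply_sub_sub_le (hS : IsScalarFlow g S) {k κ : ℝ}
    (hg : ∀ s z, |g s z - k| ≤ κ) (e s : ℝ) : |S s e - e - k * s| ≤ κ * |s| := by
  have hder (x : ℝ) (_ : x ∈ univ) :
      HasDerivWithinAt (fun s => S s e - k * s) (g x (S x e) - k) univ x := by
    have := (hS.isIntegralCurve e x).fun_sub ((hasDerivAt_id' x).const_mul k)
    rw [mul_one] at this
    exact this.hasDerivWithinAt
  have hmean := convex_univ.norm_image_sub_le_of_norm_hasDerivWithin_le hder
    (fun x _ => hg x (S x e)) (mem_univ 0) (mem_univ s)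
  simp only [hS.zero_apply, mul_zero, sub_zero, Real.norm_eq_abs] at hmean
  rwa [sub_right_comm]

end ScalarFlow

/-! ### Increasing homeomorphisms of the line -/

section OrderIso

theorem exists_lt_pow_apply {α : Type*} [ConditionallyCompleteLinearOrder α] {P : α ≃o α}
    (hP : ∀ s, s < P s) (x y : α) : ∃ n : ℕ, y < (P ^ n) x := by
  by_contra! hle
  have hbdd : BddAbove (range fun n : ℕ => (P ^ n) x) := ⟨y, forall_mem_range.2 hle⟩
  -- the supremum of a bounded orbit would be a fixed point
  refine (hP (⨆ n : ℕ, (P ^ n) x)).not_ge ?_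
  rw [P.map_ciSup hbdd]
  refine ciSup_le fun n => ?_
  simpa only [pow_succ', RelIso.mul_apply] using le_ciSup hbdd (n + 1)

theorem exists_zpow_apply_le_lt {α : Type*} [ConditionallyCompleteLinearOrder α] {P : α ≃o α}
    (hP : ∀ s, s < P s) (x y : α) : ∃ n : ℤ, (P ^ n) x ≤ y ∧ y < (P ^ n) (P x) := by
  have hmono : Monotone fun n : ℤ => (P ^ n) x := monotone_int_of_le_succ fun n => by
    simpa only [zpow_add_one, RelIso.mul_apply] using (P ^ n).monotone (hP x).le
  have hbdd : ∃ b : ℤ, ∀ n : ℤ, (P ^ n) x ≤ y → n ≤ b := by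
    obtain ⟨N, hN⟩ := exists_lt_pow_apply hP x y
    refine ⟨N, fun n hn => ?_⟩
    by_contra! hlt
    exact (hN.trans_le (by simpa using hmono hlt.le)).not_ge hn
  have hne : ∃ n : ℤ, (P ^ n) x ≤ y := by
    obtain ⟨N, hN⟩ := exists_lt_pow_apply hP y x
    refine ⟨-N, ?_⟩
    rw [zpow_neg, zpow_natCast]
    exact ((P ^ N).symm_apply_le.2 hN.le)
  obtain ⟨n, hn, hmax⟩ := Int.exists_greatest_of_bdd hbdd hne
  refine ⟨n, hn, ?_⟩
  by_contra! hle
  have := hmax (n + 1) (by simpa only [zpow_add_one, RelIso.mul_apply] using hle)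
  omega

theorem exists_orderIso_apply_add_one {P : ℝ ≃o ℝ} (hP : ∀ s, s < P s) :
    ∃ j : ℝ ≃o ℝ, ∀ t, j (t + 1) = P (j t) := by
  have hP0 : 0 < P 0 := hP 0
  have hmono : Monotone fun n : ℤ => (P ^ n) 0 := monotone_int_of_le_succ fun n => by
    simpa only [zpow_add_one, RelIso.mul_apply] using (P ^ n).monotone hP0.le
  let j : ℝ → ℝ := fun t => (P ^ ⌊t⌋) (Int.fract t * P 0)
  have hj : StrictMono j := by
    intro t t' h
    rcases (Int.floor_mono h.le).eq_or_lt with heq | hlt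
    · have hfract : Int.fract t < Int.fract t' := by
        rw [Int.fract, Int.fract, heq]
        linarith
      simpa only [j, heq] using (P ^ ⌊t'⌋).strictMono (mul_lt_mul_of_pos_right hfract hP0)
    · calc j t < (P ^ ⌊t⌋) (P 0) :=
            (P ^ ⌊t⌋).strictMono (mul_lt_of_lt_one_left hP0 (Int.fract_lt_one t))
        _ = (P ^ (⌊t⌋ + 1)) 0 := by rw [zpow_add_one, RelIso.mul_apply]
        _ ≤ (P ^ ⌊t'⌋) 0 := hmono (Int.add_one_le_iff.2 hlt)
        _ ≤ j t' := (P ^ ⌊t'⌋).monotone (mul_nonneg (Int.fract_nonneg _) hP0.le)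
  have hsurj : Function.Surjective j := by
    intro y
    obtain ⟨n, hle, hlt⟩ := exists_zpow_apply_le_lt hP 0 y
    obtain ⟨x, rfl⟩ := (P ^ n).surjective y
    have hx0 : 0 ≤ x / P 0 := div_nonneg ((P ^ n).le_iff_le.1 hle) hP0.le
    have hx1 : x / P 0 < 1 := (div_lt_one hP0).2 ((P ^ n).lt_iff_lt.1 hlt)
    have hfloor : ⌊(n : ℝ) + x / P 0⌋ = n := by
      rw [Int.floor_eq_iff]
      constructor <;> linarith
    refine ⟨n + x / P 0, ?_⟩
    simp only [j, Int.fract, hfloor, add_sub_cancel_left, div_mul_cancel₀ x hP0.ne']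
  refine ⟨hj.orderIsoOfSurjective j hsurj, fun t => ?_⟩
  change (P ^ ⌊t + 1⌋) (Int.fract (t + 1) * P 0) = P ((P ^ ⌊t⌋) (Int.fract t * P 0))
  rw [Int.fract_add_one, Int.floor_add_one, add_comm, zpow_one_add]
  rfl

theorem exists_conj_translation_of_pos {P : ℝ ≃o ℝ} {k : ℝ} (hk : 0 < k) (hP : ∀ s, s < P s) :
    ∃ h : ℝ ≃o ℝ, ∀ s, h (P s) = h s + k := by
  obtain ⟨j, hj⟩ := exists_orderIso_apply_add_one hP
  refine ⟨j.symm.trans (OrderIso.mulRight₀ k hk), fun s => ?_⟩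
  obtain ⟨t, rfl⟩ := j.surjective s
  simp [← hj, add_mul]

theorem exists_conj_translation {P : ℝ ≃o ℝ} {k : ℝ} (hP : ∀ s, |P s - s - k| < |k|) :
    ∃ h : ℝ ≃o ℝ, ∀ s, h (P s) = h s + k := by
  have hk : k ≠ 0 := abs_pos.1 ((abs_nonneg _).trans_lt (hP 0))
  rcases lt_or_gt_of_ne hk with hneg | hpos
  · have hsymm (s : ℝ) : s < P.symm s := by
      have := hP (P.symm s)
      rw [abs_of_neg hneg, abs_lt, OrderIso.apply_symm_apply] at this
      linarith
    obtain ⟨h, hh⟩ := exists_conj_translation_of_pos (neg_pos.2 hneg) hsymm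
    refine ⟨h, fun s => ?_⟩
    have := hh (P s)
    rw [OrderIso.symm_apply_apply] at this
    linarith
  · refine exists_conj_translation_of_pos hpos fun s => ?_
    have := hP s
    rw [abs_of_pos hpos, abs_lt] at this
    linarith

/-- The function equal to `T b` at `exp b`, to `B b` at `-exp b` and to `z` at `0`. -/
def logGlue (T B : ℝ → ℝ) (z x : ℝ) : ℝ :=
  if 0 < x then T (Real.log x) else if x < 0 then B (Real.log (-x)) else z

variable {T B : ℝ → ℝ} {z : ℝ}

theorem logGlue_of_pos {x : ℝ} (hx : 0 < x) : logGlue T B z x = T (Real.log x) := if_pos hx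

theorem logGlue_of_neg {x : ℝ} (hx : x < 0) : logGlue T B z x = B (Real.log (-x)) := by
  rw [logGlue, if_neg hx.not_gt, if_pos hx]

theorem logGlue_zero : logGlue T B z 0 = z := by simp [logGlue]

theorem logGlue_exp (b : ℝ) : logGlue T B z (Real.exp b) = T b := by
  rw [logGlue_of_pos (Real.exp_pos b), Real.log_exp]

theorem logGlue_neg_exp (b : ℝ) : logGlue T B z (-Real.exp b) = B b := by
  rw [logGlue_of_neg (neg_neg_of_pos (Real.exp_pos b)), neg_neg, Real.log_exp]

theorem strictMono_logGlue (hT : StrictMono T) (hB : StrictAnti B) (hzT : ∀ b, z < T b)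
    (hBz : ∀ b, B b < z) : StrictMono (logGlue T B z) := by
  intro x y hxy
  rcases lt_trichotomy x 0 with hx | rfl | hx
  · rw [logGlue_of_neg hx]
    rcases lt_trichotomy y 0 with hy | rfl | hy
    · rw [logGlue_of_neg hy]
      exact hB (Real.log_lt_log (by linarith) (by linarith))
    · rw [logGlue_zero]
      exact hBz _
    · rw [logGlue_of_pos hy]
      exact (hBz _).trans (hzT _)
  · rw [logGlue_zero, logGlue_of_pos hxy]
    exact hzT _
  · rw [logGlue_of_pos hx, logGlue_of_pos (hx.trans hxy)]
    exact hT (Real.log_lt_log hx hxy)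

theorem surjective_logGlue (hT : Continuous T) (hB : Continuous B) (hTtop : ∀ M, ∃ b, M ≤ T b)
    (hBbot : ∀ M, ∃ b, B b ≤ M) (hTz : ∀ M > z, ∃ b, T b ≤ M) (hzB : ∀ M < z, ∃ b, M ≤ B b) :
    Function.Surjective (logGlue T B z) := by
  intro y
  rcases lt_trichotomy y z with hy | rfl | hy
  · obtain ⟨b, rfl⟩ := mem_range_of_exists_le_of_exists_ge hB (hBbot y) (hzB y hy)
    exact ⟨_, logGlue_neg_exp b⟩
  · exact ⟨0, logGlue_zero⟩
  · obtain ⟨b, rfl⟩ := mem_range_of_exists_le_of_exists_ge hT (hTz y hy) (hTtop y)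
    exact ⟨_, logGlue_exp b⟩

theorem exists_orderIso_apply_exp (hT : StrictMono T) (hB : StrictAnti B) (hTc : Continuous T)
    (hBc : Continuous B) (hlt : ∀ b, B b < T b) (hTtop : ∀ M, ∃ b, M ≤ T b)
    (hBbot : ∀ M, ∃ b, B b ≤ M) (hTB : ∀ ε > 0, ∃ b, T b - B b < ε) :
    ∃ ξ : ℝ ≃o ℝ, (∀ b, ξ (Real.exp b) = T b) ∧ ∀ b, ξ (-Real.exp b) = B b := by
  have hBT (b b' : ℝ) : B b < T b' :=
    (hB.antitone (min_le_left b b')).trans_lt ((hlt _).trans_le (hT.monotone (min_le_right b b')))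
  have hbdd : BddAbove (range B) := ⟨T 0, forall_mem_range.2 fun b => (hBT b 0).le⟩
  set z := ⨆ b, B b
  have hBz (b : ℝ) : B b < z := (hB (sub_one_lt b)).trans_le (le_ciSup hbdd _)
  have hzT (b : ℝ) : z < T b := (ciSup_le fun b' => (hBT b' _).le).trans_lt (hT (sub_one_lt b))
  have hmono := strictMono_logGlue hT hB hzT hBz
  have hsurj : Function.Surjective (logGlue T B z) := by
    refine surjective_logGlue hTc hBc hTtop hBbot (fun M hM => ?_) (fun M hM => ?_)
    · obtain ⟨b, hb⟩ := hTB (M - z) (sub_pos.2 hM)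
      exact ⟨b, by linarith [hBz b]⟩
    · obtain ⟨b, hb⟩ := hTB (z - M) (sub_pos.2 hM)
      exact ⟨b, by linarith [hzT b]⟩
  exact ⟨hmono.orderIsoOfSurjective _ hsurj, logGlue_exp, logGlue_neg_exp⟩

end OrderIso

/-! ### Orbit equivalences -/

section Piecewise

variable {α β : Type*} {S₁ S₂ T : Set α}

theorem piecewise_eqOn_of_eqOn_inter [∀ x, Decidable (x ∈ S₁)] {f g : α → β}
    (hfg : EqOn f g (S₁ ∩ S₂)) : EqOn (S₁.piecewise f g) g S₂ := by
  intro x hx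
  by_cases hx₁ : x ∈ S₁
  · rw [piecewise_eq_of_mem _ _ _ hx₁, hfg ⟨hx₁, hx⟩]
  · rw [piecewise_eq_of_notMem _ _ _ hx₁]

theorem eqOn_of_leftInvOn_of_surjOn {f₁ f₂ : α → β} {g₁ g₂ : β → α} {T' : Set β}
    (h₁ : LeftInvOn g₁ f₁ T) (h₂ : LeftInvOn g₂ f₂ T) (hf : EqOn f₁ f₂ T)
    (hsurj : SurjOn f₁ T T') : EqOn g₁ g₂ T' := by
  intro y hy
  obtain ⟨x, hx, rfl⟩ := hsurj hy
  rw [h₁ hx, hf hx, h₂ hx]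

end Piecewise

section OrbitEquiv

variable {E : Type*} [NormedAddCommGroup E] {F F' H Hi : E → E} {S S₁ S₂ : Set E}

/-- A globally Lipschitz vector field with an equilibrium at the origin. -/
structure IsLipschitzField (F : E → E) : Prop where
  exists_lipschitzWith : ∃ K : ℝ≥0, LipschitzWith K F
  map_zero : F 0 = 0

theorem IsLipschitzField.continuous (hF : IsLipschitzField F) : Continuous F :=
  let ⟨_, hK⟩ := hF.exists_lipschitzWith
  hK.continuous

variable [NormedSpace ℝ E]

/-- On the time set `I`, the curve `Γ` is an increasing reparametrization of an orbit of `F`. -/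
def IsOrbitArc (F : E → E) (Γ : ℝ → E) (I : Set ℝ) : Prop :=
  ∃ (δ : ℝ → E) (τ : ℝ → ℝ), IsIntegralCurve δ (fun _ => F) ∧ StrictMonoOn τ I ∧
    ContinuousOn τ I ∧ EqOn Γ (δ ∘ τ) I

/-- `H` is a continuous self-map of `S` taking orbit arcs of `F` in `S` to orbit arcs of `F'`,
with their time orientation. -/
structure IsOrbitMap (F F' : E → E) (S : Set E) (H : E → E) : Prop where
  continuousOn : ContinuousOn H S
  mapsTo : MapsTo H S S
  isOrbitArc : ∀ (γ : ℝ → E) (I : Set ℝ), IsIntegralCurve γ (fun _ => F) → I.OrdConnected →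
    MapsTo γ I S → IsOrbitArc F' (H ∘ γ) I

/-- `H` is an oriented orbit equivalence on `S` between `F` and `F'`, with inverse `Hi`. -/
structure IsOrbitEquiv (F F' : E → E) (S : Set E) (H Hi : E → E) : Prop where
  isOrbitMap : IsOrbitMap F F' S H
  isOrbitMap_inv : IsOrbitMap F' F S Hi
  invOn : InvOn Hi H S S

/-- Every orbit arc of `F` in `S₁ ∪ S₂` stays in `S₁`, stays in `S₂`, or passes once from `S₁`
to `S₂`. -/
def CrossesOnce (F : E → E) (S₁ S₂ : Set E) : Prop :=
  ∀ (γ : ℝ → E) (I : Set ℝ), IsIntegralCurve γ (fun _ => F) → I.OrdConnected →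
    MapsTo γ I (S₁ ∪ S₂) → MapsTo γ I S₁ ∨ MapsTo γ I S₂ ∨
      ∃ t₁ ∈ I, MapsTo γ (I ∩ Iic t₁) S₁ ∧ MapsTo γ (I ∩ Ici t₁) S₂

namespace IsLipschitzField

theorem eq_of_isIntegralCurve (hF : IsLipschitzField F) {γ δ : ℝ → E} {t₀ : ℝ}
    (hγ : IsIntegralCurve γ (fun _ => F)) (hδ : IsIntegralCurve δ (fun _ => F))
    (h : γ t₀ = δ t₀) : γ = δ :=
  let ⟨_, hK⟩ := hF.exists_lipschitzWith
  PiecewiseSmooth.eq_of_isIntegralCurve (fun _ => hK) hγ hδ h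

theorem exists_isIntegralCurve [CompleteSpace E] (hF : IsLipschitzField F) (t₀ : ℝ) (x₀ : E) :
    ∃ γ, γ t₀ = x₀ ∧ IsIntegralCurve γ (fun _ => F) :=
  let ⟨_, hK⟩ := hF.exists_lipschitzWith
  exists_isIntegralCurve_of_lipschitzWith (fun _ => hK) (fun _ => continuous_const) t₀ x₀

theorem isIntegralCurve_zero (hF : IsLipschitzField F) :
    IsIntegralCurve (0 : ℝ → E) (fun _ => F) := fun t => by
  simpa only [Pi.zero_def, hF.map_zero] using hasDerivAt_const t (0 : E)

theorem eq_zero_of_isIntegralCurve (hF : IsLipschitzField F) {γ : ℝ → E} {t₀ : ℝ}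
    (hγ : IsIntegralCurve γ (fun _ => F)) (h : γ t₀ = 0) : γ = 0 :=
  hF.eq_of_isIntegralCurve hγ hF.isIntegralCurve_zero h

end IsLipschitzField

namespace IsOrbitArc

variable {Γ Γ' : ℝ → E} {I : Set ℝ} {t₁ : ℝ}

theorem congr (h : IsOrbitArc F Γ I) (heq : EqOn Γ' Γ I) : IsOrbitArc F Γ' I :=
  let ⟨δ, τ, hδ, hmono, hcont, hΓ⟩ := h
  ⟨δ, τ, hδ, hmono, hcont, heq.trans hΓ⟩

theorem of_eqOn_zero (hF : IsLipschitzField F) (h : EqOn Γ 0 I) : IsOrbitArc F Γ I :=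
  ⟨0, id, hF.isIntegralCurve_zero, strictMonoOn_id, continuousOn_id, h⟩

theorem comp {η : ℝ → ℝ} (h : IsOrbitArc F Γ (η '' I)) (hη : StrictMonoOn η I)
    (hηc : ContinuousOn η I) : IsOrbitArc F (Γ ∘ η) I :=
  let ⟨δ, τ, hδ, hmono, hcont, hΓ⟩ := h
  ⟨δ, τ ∘ η, hδ, hmono.comp hη (mapsTo_image η I), hcont.comp hηc (mapsTo_image η I),
    fun _ ht => hΓ (mem_image_of_mem η ht)⟩

theorem comp_neg (h : IsOrbitArc F Γ {t | -t ∈ I}) :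
    IsOrbitArc (fun x => -F x) (fun t => Γ (-t)) I := by
  obtain ⟨δ, τ, hδ, hmono, hcont, hΓ⟩ := h
  have hmem : MapsTo Neg.neg I {t | -t ∈ I} := fun t ht => by simpa using ht
  exact ⟨fun t => δ (-t), fun t => -τ (-t), isIntegralCurve_comp_neg hδ,
    fun x hx y hy hxy => neg_lt_neg (hmono (hmem hy) (hmem hx) (neg_lt_neg hxy)),
    (hcont.comp continuousOn_neg hmem).neg, fun t ht => by simpa using hΓ (hmem ht)⟩

-- The two orbits agree up to a shift of time, since they meet at `Γ t₁`.
theorem exists_common_orbit (hF : IsLipschitzField F) (ht₁ : t₁ ∈ I)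
    (h₁ : IsOrbitArc F Γ (I ∩ Iic t₁)) (h₂ : IsOrbitArc F Γ (I ∩ Ici t₁)) :
    ∃ (δ : ℝ → E) (τ σ : ℝ → ℝ), IsIntegralCurve δ (fun _ => F) ∧ τ t₁ = σ t₁ ∧
      (StrictMonoOn τ (I ∩ Iic t₁) ∧ ContinuousOn τ (I ∩ Iic t₁) ∧
        EqOn Γ (δ ∘ τ) (I ∩ Iic t₁)) ∧
      (StrictMonoOn σ (I ∩ Ici t₁) ∧ ContinuousOn σ (I ∩ Ici t₁) ∧
        EqOn Γ (δ ∘ σ) (I ∩ Ici t₁)) := by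
  obtain ⟨δ, τ, hδ, hτ⟩ := h₁
  obtain ⟨δ', τ', hδ', hτ'mono, hτ'cont, hτ'⟩ := h₂
  have hshift : δ = δ' ∘ (· + (τ' t₁ - τ t₁)) := by
    refine hF.eq_of_isIntegralCurve hδ (hδ'.comp_add _) (t₀ := τ t₁) ?_
    have := (hτ.2.2 ⟨ht₁, self_mem_Iic⟩).symm.trans (hτ' ⟨ht₁, self_mem_Ici⟩)
    simpa using this
  refine ⟨δ, τ, fun t => τ' t - (τ' t₁ - τ t₁), hδ, (sub_sub_cancel _ _).symm, hτ,
    fun x hx y hy hxy => sub_lt_sub_right (hτ'mono hx hy hxy) _, hτ'cont.sub continuousOn_const,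
    fun t ht => ?_⟩
  simpa [hshift] using hτ' ht

theorem union (hF : IsLipschitzField F) (ht₁ : t₁ ∈ I)
    (h₁ : IsOrbitArc F Γ (I ∩ Iic t₁)) (h₂ : IsOrbitArc F Γ (I ∩ Ici t₁)) :
    IsOrbitArc F Γ I := by
  obtain ⟨δ, τ, σ, hδ, hτσ, ⟨hτmono, hτcont, hτ⟩, hσmono, hσcont, hσ⟩ :=
    exists_common_orbit hF ht₁ h₁ h₂
  classical
  set ρ := (Iic t₁).piecewise τ σ
  have hρτ : EqOn ρ τ (I ∩ Iic t₁) := fun t ht => piecewise_eq_of_mem _ _ _ ht.2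
  have hρσ : EqOn ρ σ (I ∩ Ici t₁) := fun t ht => by
    rcases (mem_Ici.1 ht.2).eq_or_lt with rfl | hlt
    · rw [← hτσ, hρτ ⟨ht₁, self_mem_Iic⟩]
    · exact piecewise_eq_of_notMem _ _ _ (notMem_Iic.2 hlt)
  have hI : I = I ∩ Iic t₁ ∪ I ∩ Ici t₁ := by
    rw [← inter_union_distrib_left, Iic_union_Ici, inter_univ]
  refine ⟨δ, ρ, hδ, ?_, ?_, ?_⟩
  · rw [hI]
    exact (hτmono.congr hρτ.symm).union (hσmono.congr hρσ.symm)
      ⟨⟨ht₁, self_mem_Iic⟩, fun _ h => h.2⟩ ⟨⟨ht₁, self_mem_Ici⟩, fun _ h => h.2⟩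
  · refine ContinuousOn.piecewise (fun t ht => ?_) (by rwa [closure_Iic]) (by
      rwa [compl_Iic, closure_Ioi])
    rw [frontier_Iic, mem_inter_iff, mem_singleton_iff] at ht
    rw [ht.2, hτσ]
  · rw [hI]
    rintro t (ht | ht)
    · rw [hτ ht, Function.comp_apply, Function.comp_apply, hρτ ht]
    · rw [hσ ht, Function.comp_apply, Function.comp_apply, hρσ ht]

end IsOrbitArc

namespace IsOrbitMap

theorem congr {H' : E → E} (h : IsOrbitMap F F' S H) (heq : EqOn H' H S) :
    IsOrbitMap F F' S H' :=
  ⟨h.continuousOn.congr heq, h.mapsTo.congr heq.symm, fun γ I hγ hI hS =>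
    (h.isOrbitArc γ I hγ hI hS).congr fun _ ht => heq (hS ht)⟩

theorem union (hF' : IsLipschitzField F') (h₁ : IsOrbitMap F F' S₁ H)
    (h₂ : IsOrbitMap F F' S₂ H) (hS₁ : IsClosed S₁) (hS₂ : IsClosed S₂)
    (hcross : CrossesOnce F S₁ S₂) : IsOrbitMap F F' (S₁ ∪ S₂) H := by
  refine ⟨h₁.continuousOn.union_of_isClosed h₂.continuousOn hS₁ hS₂,
    h₁.mapsTo.union_union h₂.mapsTo, fun γ I hγ hI hS => ?_⟩
  rcases hcross γ I hγ hI hS with h | h | ⟨t₁, ht₁, h, h'⟩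
  · exact h₁.isOrbitArc γ I hγ hI h
  · exact h₂.isOrbitArc γ I hγ hI h
  · exact IsOrbitArc.union hF' ht₁ (h₁.isOrbitArc γ _ hγ (hI.inter ordConnected_Iic) h)
      (h₂.isOrbitArc γ _ hγ (hI.inter ordConnected_Ici) h')

theorem of_neg (h : IsOrbitMap (fun x => -F x) (fun x => -F' x) S H) : IsOrbitMap F F' S H := by
  refine ⟨h.continuousOn, h.mapsTo, fun γ I hγ hI hS => ?_⟩
  have hI' : OrdConnected {t | -t ∈ I} :=
    ⟨fun x hx y hy z hz => hI.out hy hx ⟨neg_le_neg hz.2, neg_le_neg hz.1⟩⟩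
  have harc := h.isOrbitArc _ _ (isIntegralCurve_comp_neg hγ) hI' fun t ht => hS ht
  simpa [Function.comp_def] using harc.comp_neg

end IsOrbitMap

namespace IsOrbitEquiv

theorem congr {H' Hi' : E → E} (h : IsOrbitEquiv F F' S H Hi) (heq : EqOn H' H S)
    (heqi : EqOn Hi' Hi S) : IsOrbitEquiv F F' S H' Hi' :=
  ⟨h.isOrbitMap.congr heq, h.isOrbitMap_inv.congr heqi,
    fun x hx => by rw [heq hx, heqi (h.isOrbitMap.mapsTo hx), h.invOn.1 hx],
    fun x hx => by rw [heqi hx, heq (h.isOrbitMap_inv.mapsTo hx), h.invOn.2 hx]⟩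

theorem invOn_union {G G' : E → E} (h₁ : IsOrbitEquiv F F' S₁ H Hi)
    (h₂ : IsOrbitEquiv G G' S₂ H Hi) : InvOn Hi H (S₁ ∪ S₂) (S₁ ∪ S₂) :=
  ⟨fun _ hx => hx.elim (h₁.invOn.1 ·) (h₂.invOn.1 ·),
    fun _ hx => hx.elim (h₁.invOn.2 ·) (h₂.invOn.2 ·)⟩

theorem union (hF : IsLipschitzField F) (hF' : IsLipschitzField F')
    (h₁ : IsOrbitEquiv F F' S₁ H Hi) (h₂ : IsOrbitEquiv F F' S₂ H Hi) (hS₁ : IsClosed S₁)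
    (hS₂ : IsClosed S₂) (hcross : CrossesOnce F S₁ S₂) (hcross' : CrossesOnce F' S₁ S₂) :
    IsOrbitEquiv F F' (S₁ ∪ S₂) H Hi :=
  ⟨h₁.isOrbitMap.union hF' h₂.isOrbitMap hS₁ hS₂ hcross,
    h₁.isOrbitMap_inv.union hF h₂.isOrbitMap_inv hS₁ hS₂ hcross', h₁.invOn_union h₂⟩

theorem exists_glue {G G' H₁ H₂ Hi₁ Hi₂ : E → E} (h₁ : IsOrbitEquiv F F' S₁ H₁ Hi₁)
    (h₂ : IsOrbitEquiv G G' S₂ H₂ Hi₂) (heq : EqOn H₁ H₂ (S₁ ∩ S₂))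
    (hsurj : SurjOn H₁ (S₁ ∩ S₂) (S₁ ∩ S₂)) :
    ∃ H Hi, IsOrbitEquiv F F' S₁ H Hi ∧ IsOrbitEquiv G G' S₂ H Hi ∧
      EqOn H H₁ S₁ ∧ EqOn H H₂ S₂ := by
  classical
  have heqi : EqOn Hi₁ Hi₂ (S₁ ∩ S₂) :=
    eqOn_of_leftInvOn_of_surjOn (h₁.invOn.1.mono inter_subset_left)
      (h₂.invOn.1.mono inter_subset_right) heq hsurj
  exact ⟨S₁.piecewise H₁ H₂, S₁.piecewise Hi₁ Hi₂,
    h₁.congr (piecewise_eqOn _ _ _) (piecewise_eqOn _ _ _),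
    h₂.congr (piecewise_eqOn_of_eqOn_inter heq) (piecewise_eqOn_of_eqOn_inter heqi),
    piecewise_eqOn _ _ _, piecewise_eqOn_of_eqOn_inter heq⟩

theorem exists_union {H₁ H₂ Hi₁ Hi₂ : E → E} (hF : IsLipschitzField F)
    (hF' : IsLipschitzField F') (h₁ : IsOrbitEquiv F F' S₁ H₁ Hi₁)
    (h₂ : IsOrbitEquiv F F' S₂ H₂ Hi₂) (hS₁ : IsClosed S₁) (hS₂ : IsClosed S₂)
    (heq : EqOn H₁ H₂ (S₁ ∩ S₂)) (hsurj : SurjOn H₁ (S₁ ∩ S₂) (S₁ ∩ S₂))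
    (hcross : CrossesOnce F S₁ S₂) (hcross' : CrossesOnce F' S₁ S₂) :
    ∃ H Hi, IsOrbitEquiv F F' (S₁ ∪ S₂) H Hi ∧ EqOn H H₁ S₁ ∧ EqOn H H₂ S₂ :=
  let ⟨H, Hi, h₁', h₂', heqs⟩ := exists_glue h₁ h₂ heq hsurj
  ⟨H, Hi, union hF hF' h₁' h₂' hS₁ hS₂ hcross hcross', heqs⟩

theorem of_neg (h : IsOrbitEquiv (fun x => -F x) (fun x => -F' x) S H Hi) :
    IsOrbitEquiv F F' S H Hi :=
  ⟨h.isOrbitMap.of_neg, h.isOrbitMap_inv.of_neg, h.invOn⟩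

end IsOrbitEquiv

end OrbitEquiv

section Conj

variable {E : Type*} [NormedAddCommGroup E] [NormedSpace ℝ E] {F F' H Hi : E → E} {S : Set E}
  (L : E ≃L[ℝ] E)

/-- The vector field `F` in the coordinates `L`. -/
def conj (F : E → E) : E → E := L ∘ F ∘ L.symm

theorem isIntegralCurve_conj {γ : ℝ → E} (hγ : IsIntegralCurve γ (fun _ => F)) :
    IsIntegralCurve (L ∘ γ) (fun _ => conj L F) := fun t => by
  simpa [conj] using (L : E →L[ℝ] E).hasFDerivAt.comp_hasDerivAt t (hγ t)

theorem IsOrbitArc.of_conj {Γ : ℝ → E} {I : Set ℝ} (h : IsOrbitArc (conj L F) Γ I) :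
    IsOrbitArc F (L.symm ∘ Γ) I := by
  obtain ⟨δ, τ, hδ, hmono, hcont, hΓ⟩ := h
  refine ⟨L.symm ∘ δ, τ, ?_, hmono, hcont, fun t ht => congrArg L.symm (hΓ ht)⟩
  simpa [conj, Function.comp_def] using isIntegralCurve_conj L.symm hδ

theorem IsOrbitMap.of_conj (h : IsOrbitMap (conj L F) (conj L F') S H) :
    IsOrbitMap F F' (L ⁻¹' S) (L.symm ∘ H ∘ L) :=
  ⟨L.symm.continuous.comp_continuousOn (h.continuousOn.comp L.continuous.continuousOn
      (mapsTo_preimage L S)),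
    fun x hx => by simpa using h.mapsTo hx,
    fun γ I hγ hI hS => (h.isOrbitArc _ I (isIntegralCurve_conj L hγ) hI hS).of_conj L⟩

theorem IsOrbitEquiv.of_conj (h : IsOrbitEquiv (conj L F) (conj L F') S H Hi) :
    IsOrbitEquiv F F' (L ⁻¹' S) (L.symm ∘ H ∘ L) (L.symm ∘ Hi ∘ L) :=
  ⟨h.isOrbitMap.of_conj L, h.isOrbitMap_inv.of_conj L,
    fun x hx => by simp [h.invOn.1 hx], fun x hx => by simp [h.invOn.2 hx]⟩

end Conj

section Perturbation

variable {E : Type*} [NormedAddCommGroup E] [NormedSpace ℝ E] {A : E →L[ℝ] E} {δ : ℝ} {F : E → E}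

/-- `F` vanishes at the origin and `F - A` is `δ`-Lipschitz. -/
structure IsPerturbation (A : E →L[ℝ] E) (δ : ℝ) (F : E → E) : Prop where
  map_zero : F 0 = 0
  norm_sub_le : ∀ x y, ‖(F x - A x) - (F y - A y)‖ ≤ δ * ‖x - y‖

namespace IsPerturbation

theorem norm_sub_apply_le (h : IsPerturbation A δ F) (x : E) : ‖F x - A x‖ ≤ δ * ‖x‖ := by
  simpa [h.map_zero] using h.norm_sub_le x 0

theorem isLipschitzField (h : IsPerturbation A δ F) : IsLipschitzField F := by
  refine ⟨⟨‖A‖₊ + δ.toNNReal, ?_⟩, h.map_zero⟩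
  have hsub : LipschitzWith δ.toNNReal fun x => F x - A x :=
    LipschitzWith.of_dist_le' fun x y => by simpa only [dist_eq_norm] using h.norm_sub_le x y
  simpa using A.lipschitz.add hsub

protected theorem self (A : E →L[ℝ] E) (hδ : 0 ≤ δ) : IsPerturbation A δ A :=
  ⟨A.map_zero, fun x y => by simpa using by positivity⟩

theorem mono {δ' : ℝ} (h : IsPerturbation A δ F) (hδ : δ ≤ δ') : IsPerturbation A δ' F :=
  ⟨h.map_zero, fun x y => (h.norm_sub_le x y).trans (by gcongr)⟩

theorem neg (h : IsPerturbation A δ F) : IsPerturbation (-A) δ fun x => -F x :=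
  ⟨by simp [h.map_zero], fun x y => by
    have hneg : (-F x - (-A) x) - (-F y - (-A) y) = -((F x - A x) - (F y - A y)) := by
      rw [neg_apply, neg_apply]
      abel
    rw [hneg, norm_neg]
    exact h.norm_sub_le x y⟩

theorem conj (hδ : 0 ≤ δ) (h : IsPerturbation A δ F) (L : E ≃L[ℝ] E) :
    IsPerturbation ((L : E →L[ℝ] E) ∘L A ∘L (L.symm : E →L[ℝ] E))
      (‖(L : E →L[ℝ] E)‖ * ‖(L.symm : E →L[ℝ] E)‖ * δ) (PiecewiseSmooth.conj L F) := by
  refine ⟨by simp [PiecewiseSmooth.conj, h.map_zero], fun x y => ?_⟩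
  have hL := (L : E →L[ℝ] E).le_opNorm
    ((F (L.symm x) - A (L.symm x)) - (F (L.symm y) - A (L.symm y)))
  have hLsymm := (L.symm : E →L[ℝ] E).le_opNorm (x - y)
  simp only [map_sub, ContinuousLinearEquiv.coe_coe] at hL hLsymm
  simp only [PiecewiseSmooth.conj, ContinuousLinearMap.comp_apply, Function.comp_apply,
    ContinuousLinearEquiv.coe_coe]
  calc _ ≤ ‖(L : E →L[ℝ] E)‖ *
        ‖(F (L.symm x) - A (L.symm x)) - (F (L.symm y) - A (L.symm y))‖ := hL
    _ ≤ ‖(L : E →L[ℝ] E)‖ * (δ * ‖L.symm x - L.symm y‖) := by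
        gcongr
        exact h.norm_sub_le _ _
    _ ≤ ‖(L : E →L[ℝ] E)‖ * (δ * (‖(L.symm : E →L[ℝ] E)‖ * ‖x - y‖)) := by gcongr
    _ = _ := by ring

theorem exists_pos_forall_conj (A : E →L[ℝ] E) (L : E ≃L[ℝ] E) {ε : ℝ} (hε : 0 < ε) :
    ∃ δ > 0, ∀ F, IsPerturbation A δ F →
      IsPerturbation ((L : E →L[ℝ] E) ∘L A ∘L (L.symm : E →L[ℝ] E)) ε
        (PiecewiseSmooth.conj L F) := by
  set C := ‖(L : E →L[ℝ] E)‖ * ‖(L.symm : E →L[ℝ] E)‖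
  have hC : 0 < C + 1 := by positivity
  have hδ : 0 < ε / (C + 1) := div_pos hε hC
  refine ⟨ε / (C + 1), hδ, fun F hF => (hF.conj hδ.le L).mono ?_⟩
  calc C * (ε / (C + 1)) ≤ (C + 1) * (ε / (C + 1)) := by gcongr; linarith
    _ = ε := mul_div_cancel₀ _ hC.ne'

end IsPerturbation

end Perturbation

/-! ### Blow-up charts -/

section Reparametrization

variable {E : Type*} [NormedAddCommGroup E] [NormedSpace ℝ E] {F : E → E}

theorem lipschitzWith_const_smul {K : ℝ≥0} (hF : LipschitzWith K F) {c M : ℝ} (hc : 0 ≤ c)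
    (hM : c ≤ M) : LipschitzWith (M.toNNReal * K) fun x => c • F x := by
  refine ((lipschitzWith_smul c).comp hF).weaken ?_
  gcongr
  rw [Real.nnnorm_of_nonneg hc, ← Real.toNNReal_of_nonneg]
  exact Real.toNNReal_le_toNNReal hM

theorem isOrbitArc_of_hasDerivAt_smul [CompleteSpace E] (hF : IsLipschitzField F) {f : ℝ → ℝ}
    {M : ℝ} {Q : ℝ → E} {J : Set ℝ} (hJ : J.OrdConnected) (hf : Continuous f)
    (hpos : ∀ s, 0 < f s) (hM : ∀ s, f s ≤ M)
    (hQ : ∀ s ∈ J, HasDerivAt Q (f s • F (Q s)) s) : IsOrbitArc F Q J := by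
  rcases J.eq_empty_or_nonempty with rfl | ⟨s₀, hs₀⟩
  · exact IsOrbitArc.of_eqOn_zero hF (eqOn_empty _ _)
  set θ : ℝ → ℝ := fun s => ∫ x in (0 : ℝ)..s, f x
  have hθ (s : ℝ) : HasDerivAt θ (f s) s := hf.integral_hasStrictDerivAt 0 s |>.hasDerivAt
  have hθmono : StrictMono θ := strictMono_of_deriv_pos fun s => (hθ s).deriv ▸ hpos s
  obtain ⟨δ, hδ₀, hδ⟩ := hF.exists_isIntegralCurve (θ s₀) (Q s₀)
  obtain ⟨K, hK⟩ := hF.exists_lipschitzWith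
  refine ⟨δ, θ, hδ, hθmono.strictMonoOn J,
    fun s _ => (hθ s).continuousAt.continuousWithinAt, ?_⟩
  exact eqOn_of_isIntegralCurveOn (v := fun s x => f s • F x) hJ
    (fun s _ => lipschitzWith_const_smul hK (hpos s).le (hM s))
    (fun s hs => (hQ s hs).hasDerivWithinAt)
    (fun s _ => (HasDerivAt.scomp s (hδ (θ s)) (hθ s)).hasDerivWithinAt) hs₀ hδ₀.symm

theorem IsScalarFlow.eq_apply_of_hasDerivAt {g : ℝ → ℝ → ℝ} {S : ℝ → ℝ ≃o ℝ}
    (hS : IsScalarFlow g S) {x y u : ℝ → ℝ} {M : ℝ} {I : Set ℝ} (hI : I.OrdConnected)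
    (hu : ∀ t, 0 ≤ u t) (hM : ∀ t, u t ≤ M) (hx : ∀ t ∈ I, HasDerivAt x (u t) t)
    (hy : ∀ t ∈ I, HasDerivAt y (u t * g (x t) (y t)) t) {t₀ t : ℝ} (ht₀ : t₀ ∈ I)
    (ht : t ∈ I) : y t = S (x t) ((S (x t₀)).symm (y t₀)) := by
  obtain ⟨K, hK⟩ := hS.exists_lipschitzWith
  refine eqOn_of_isIntegralCurveOn (v := fun t z => u t • g (x t) z) hI
    (fun t _ => lipschitzWith_const_smul (hK (x t)) (hu t) (hM t))
    (fun t ht => (hy t ht).hasDerivWithinAt)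
    (g := fun t => S (x t) ((S (x t₀)).symm (y t₀))) (fun t ht => ?_) ht₀ (by simp) ht
  exact (HasDerivAt.scomp t (hS.isIntegralCurve _ (x t)) (hx t ht)).hasDerivWithinAt

end Reparametrization

section FlowConj

variable {g g' : ℝ → ℝ → ℝ} {S S' : ℝ → ℝ ≃o ℝ}

/-- The homeomorphism of the plane that acts by `η` on the time variable and takes the graph of
the solution with value `e` at time `0` to the graph of the solution with value `β e`. -/
def flowConj (hS : IsScalarFlow g S) (hS' : IsScalarFlow g' S') (η β : ℝ ≃o ℝ) :
    ℝ × ℝ ≃ₜ ℝ × ℝ where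
  toFun c := (η c.1, S' (η c.1) (β ((S c.1).symm c.2)))
  invFun c := (η.symm c.1, S (η.symm c.1) (β.symm ((S' c.1).symm c.2)))
  left_inv c := by simp
  right_inv c := by simp
  continuous_toFun := by
    have hη := η.continuous.comp (continuous_fst (X := ℝ) (Y := ℝ))
    exact hη.prodMk (hS'.continuous_apply.comp
      (hη.prodMk (β.continuous.comp hS.continuous_symm_apply)))
  continuous_invFun := by
    have hη := η.symm.continuous.comp (continuous_fst (X := ℝ) (Y := ℝ))
    exact hη.prodMk (hS.continuous_apply.comp
      (hη.prodMk (β.symm.continuous.comp hS'.continuous_symm_apply)))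

theorem flowConj_apply (hS : IsScalarFlow g S) (hS' : IsScalarFlow g' S') (η β : ℝ ≃o ℝ)
    (s z : ℝ) : flowConj hS hS' η β (s, z) = (η s, S' (η s) (β ((S s).symm z))) := rfl

theorem flowConj_apply_apply (hS : IsScalarFlow g S) (hS' : IsScalarFlow g' S') (η β : ℝ ≃o ℝ)
    (s e : ℝ) : flowConj hS hS' η β (s, S s e) = (η s, S' (η s) (β e)) := by
  simp [flowConj]

end FlowConj

section BlowUpChart

variable {E : Type*} [NormedAddCommGroup E] {C : Set E} {D : Set (ℝ × ℝ)}
  {Ψ : ℝ × ℝ → E} {Ξ : E → ℝ × ℝ} {N : ℝ × ℝ → ℝ} {B : ℝ}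

/-- Coordinates `Ψ : D → C \ {0}`, with inverse `Ξ`, on a punctured region `C`; the origin is
blown up to `N = -∞`, the norm of `Ψ c` being comparable to `exp (N c)`. -/
structure IsBlowUpChart (C : Set E) (D : Set (ℝ × ℝ)) (Ψ : ℝ × ℝ → E) (Ξ : E → ℝ × ℝ)
    (N : ℝ × ℝ → ℝ) (B : ℝ) : Prop where
  zero_mem : 0 ∈ C
  mapsTo : MapsTo Ψ D (C \ {0})
  mapsTo_inv : MapsTo Ξ (C \ {0}) D
  invOn : InvOn Ξ Ψ D (C \ {0})
  continuous : Continuous Ψ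
  continuousAt_inv : ∀ x ∈ C, x ≠ 0 → ContinuousAt Ξ x
  pos : 0 < B
  norm_le : ∀ c ∈ D, ‖Ψ c‖ ≤ B * Real.exp (N c)
  exp_le : ∀ c ∈ D, Real.exp (N c) ≤ B * ‖Ψ c‖

open Classical in
/-- The map `K` of the coordinate domain transported by a blow-up chart, fixing the origin. -/
def chartMap (Ψ : ℝ × ℝ → E) (Ξ : E → ℝ × ℝ) (K : ℝ × ℝ → ℝ × ℝ) (x : E) : E :=
  if x = 0 then 0 else Ψ (K (Ξ x))

variable {K K' : ℝ × ℝ → ℝ × ℝ}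

theorem chartMap_zero : chartMap Ψ Ξ K 0 = 0 := if_pos rfl

theorem chartMap_of_ne {x : E} (hx : x ≠ 0) : chartMap Ψ Ξ K x = Ψ (K (Ξ x)) := if_neg hx

namespace IsBlowUpChart

theorem mapsTo_chartMap (hC : IsBlowUpChart C D Ψ Ξ N B) (hK : MapsTo K D D) :
    MapsTo (chartMap Ψ Ξ K) C C := by
  intro x hx
  by_cases h0 : x = 0
  · rw [h0, chartMap_zero]
    exact hC.zero_mem
  · rw [chartMap_of_ne h0]
    exact (hC.mapsTo (hK (hC.mapsTo_inv ⟨hx, h0⟩))).1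

theorem leftInvOn_chartMap (hC : IsBlowUpChart C D Ψ Ξ N B) (hK : MapsTo K D D)
    (hinv : LeftInvOn K' K D) : LeftInvOn (chartMap Ψ Ξ K') (chartMap Ψ Ξ K) C := by
  intro x hx
  by_cases h0 : x = 0
  · rw [h0, chartMap_zero, chartMap_zero]
  · have hD := hC.mapsTo_inv ⟨hx, h0⟩
    rw [chartMap_of_ne h0, chartMap_of_ne (hC.mapsTo (hK hD)).2, hC.invOn.1 (hK hD), hinv hD,
      hC.invOn.2 ⟨hx, h0⟩]

theorem continuousWithinAt_chartMap_zero (hC : IsBlowUpChart C D Ψ Ξ N B) (hK : MapsTo K D D)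
    (hN : ∀ M, ∃ M', ∀ c ∈ D, N c ≤ M' → N (K c) ≤ M) :
    ContinuousWithinAt (chartMap Ψ Ξ K) C 0 := by
  rw [Metric.continuousWithinAt_iff]
  intro ε hε
  have hB := hC.pos
  obtain ⟨M', hM'⟩ := hN (Real.log (ε / (2 * B)))
  refine ⟨Real.exp M' / B, by positivity, fun {x} hx hdist => ?_⟩
  rw [chartMap_zero]
  by_cases h0 : x = 0
  · rwa [h0, chartMap_zero, dist_self]
  have hD := hC.mapsTo_inv ⟨hx, h0⟩
  have hsmall : N (Ξ x) ≤ M' := by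
    rw [dist_zero_right, lt_div_iff₀ hB] at hdist
    have := hC.exp_le _ hD
    rw [hC.invOn.2 ⟨hx, h0⟩] at this
    rw [← Real.exp_le_exp]
    linarith
  rw [chartMap_of_ne h0, dist_zero_right]
  calc ‖Ψ (K (Ξ x))‖ ≤ B * Real.exp (N (K (Ξ x))) := hC.norm_le _ (hK hD)
    _ ≤ B * Real.exp (Real.log (ε / (2 * B))) := by
        gcongr
        exact hM' _ hD hsmall
    _ = ε / 2 := by
        rw [Real.exp_log (by positivity)]
        field_simp
    _ < ε := half_lt_self hε

theorem continuousOn_chartMap (hC : IsBlowUpChart C D Ψ Ξ N B) (hK : MapsTo K D D)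
    (hKc : Continuous K) (hN : ∀ M, ∃ M', ∀ c ∈ D, N c ≤ M' → N (K c) ≤ M) :
    ContinuousOn (chartMap Ψ Ξ K) C := by
  intro x hx
  by_cases h0 : x = 0
  · exact h0 ▸ hC.continuousWithinAt_chartMap_zero hK hN
  · have hcont : ContinuousAt (fun x => Ψ (K (Ξ x))) x :=
      hC.continuous.continuousAt.comp (hKc.continuousAt.comp (hC.continuousAt_inv x hx h0))
    refine (hcont.congr ?_).continuousWithinAt
    filter_upwards [isOpen_ne.mem_nhds h0] with y hy
    exact (chartMap_of_ne hy).symm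

end IsBlowUpChart

variable [NormedSpace ℝ E]

/-- In the blow-up coordinates `(s, z)` the orbits of `F` are graphs of solutions of
`z' = g s z`, traversed with speed `w` in the `s`-direction. -/
structure StraightensTo (C : Set E) (D : Set (ℝ × ℝ)) (Ψ : ℝ × ℝ → E) (Ξ : E → ℝ × ℝ)
    (F : E → E) (w : ℝ × ℝ → ℝ) (g : ℝ → ℝ → ℝ) : Prop where
  hasDerivAt_fst : ∀ (γ : ℝ → E) (t : ℝ), HasDerivAt γ (F (γ t)) t → γ t ∈ C → γ t ≠ 0 →
    HasDerivAt (fun t => (Ξ (γ t)).1) (w (Ξ (γ t))) t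
  hasDerivAt_snd : ∀ (γ : ℝ → E) (t : ℝ), HasDerivAt γ (F (γ t)) t → γ t ∈ C → γ t ≠ 0 →
    HasDerivAt (fun t => (Ξ (γ t)).2) (w (Ξ (γ t)) * g (Ξ (γ t)).1 (Ξ (γ t)).2) t
  hasDerivAt_graph : ∀ (ζ : ℝ → ℝ) (s : ℝ), (s, ζ s) ∈ D → HasDerivAt ζ (g s (ζ s)) s →
    HasDerivAt (fun s => Ψ (s, ζ s)) ((1 / w (s, ζ s)) • F (Ψ (s, ζ s))) s
  continuous_speed : Continuous w
  exists_pos_le_speed : ∃ w₀ > 0, ∀ c, w₀ ≤ w c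
  exists_speed_le : ∃ M, ∀ c, w c ≤ M

variable {F F' : E → E} {w w' : ℝ × ℝ → ℝ} {g g' : ℝ → ℝ → ℝ} {S S' : ℝ → ℝ ≃o ℝ}

namespace StraightensTo

theorem isOrbitArc_graph [CompleteSpace E] (hF : StraightensTo C D Ψ Ξ F w g)
    (hS : IsScalarFlow g S) (hLip : IsLipschitzField F) {J : Set ℝ} (hJ : J.OrdConnected)
    {e : ℝ} (hD : ∀ s ∈ J, (s, S s e) ∈ D) : IsOrbitArc F (fun s => Ψ (s, S s e)) J := by
  obtain ⟨w₀, hw₀, hlo⟩ := hF.exists_pos_le_speed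
  have hpos (c : ℝ × ℝ) : 0 < w c := hw₀.trans_le (hlo c)
  have hspeed : Continuous fun s => w (s, S s e) :=
    hF.continuous_speed.comp (continuous_id.prodMk (hS.isIntegralCurve e).continuous)
  exact isOrbitArc_of_hasDerivAt_smul (f := fun s => 1 / w (s, S s e)) hLip hJ
    (continuous_const.div hspeed fun s => (hpos _).ne') (fun s => one_div_pos.2 (hpos _))
    (fun s => one_div_le_one_div_of_le hw₀ (hlo _))
    fun s hs => hF.hasDerivAt_graph (fun s => S s e) s (hD s hs) (hS.isIntegralCurve e s)

theorem exists_graph (hF : StraightensTo C D Ψ Ξ F w g) (hS : IsScalarFlow g S) {γ : ℝ → E}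
    {I : Set ℝ} (hγ : IsIntegralCurve γ (fun _ => F)) (hI : I.OrdConnected)
    (hC : MapsTo γ I (C \ {0})) :
    ∃ (σ : ℝ → ℝ) (e : ℝ), StrictMonoOn σ I ∧ ContinuousOn σ I ∧
      ∀ t ∈ I, Ξ (γ t) = (σ t, S (σ t) e) := by
  obtain ⟨w₀, hw₀, hlo⟩ := hF.exists_pos_le_speed
  obtain ⟨M, hhi⟩ := hF.exists_speed_le
  have hpos (c : ℝ × ℝ) : 0 < w c := hw₀.trans_le (hlo c)
  have hfst (t : ℝ) (ht : t ∈ I) := hF.hasDerivAt_fst γ t (hγ t) (hC ht).1 (hC ht).2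
  have hsnd (t : ℝ) (ht : t ∈ I) := hF.hasDerivAt_snd γ t (hγ t) (hC ht).1 (hC ht).2
  have hcont : ContinuousOn (fun t => (Ξ (γ t)).1) I :=
    fun t ht => (hfst t ht).continuousAt.continuousWithinAt
  have hmono : StrictMonoOn (fun t => (Ξ (γ t)).1) I :=
    strictMonoOn_of_deriv_pos hI.convex hcont fun t ht =>
      (hfst t (interior_subset ht)).deriv ▸ hpos _
  rcases I.eq_empty_or_nonempty with rfl | ⟨t₀, ht₀⟩
  · exact ⟨_, 0, hmono, hcont, fun t ht => ht.elim⟩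
  refine ⟨_, (S (Ξ (γ t₀)).1).symm (Ξ (γ t₀)).2, hmono, hcont, fun t ht => ?_⟩
  exact Prod.ext rfl (hS.eq_apply_of_hasDerivAt hI (fun t => (hpos (Ξ (γ t))).le)
    (fun t => hhi _) hfst hsnd ht₀ ht)

theorem isOrbitMap_chartMap [CompleteSpace E] (hC : IsBlowUpChart C D Ψ Ξ N B)
    (hF : StraightensTo C D Ψ Ξ F w g) (hF' : StraightensTo C D Ψ Ξ F' w' g')
    (hS : IsScalarFlow g S) (hS' : IsScalarFlow g' S') (hLip : IsLipschitzField F)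
    (hLip' : IsLipschitzField F') {η β : ℝ ≃o ℝ} (hK : MapsTo (flowConj hS hS' η β) D D)
    (hN : ∀ M, ∃ M', ∀ c ∈ D, N c ≤ M' → N (flowConj hS hS' η β c) ≤ M) :
    IsOrbitMap F F' C (chartMap Ψ Ξ (flowConj hS hS' η β)) := by
  refine ⟨hC.continuousOn_chartMap hK (flowConj hS hS' η β).continuous hN,
    hC.mapsTo_chartMap hK, fun γ I hγ hI hIC => ?_⟩
  by_cases hzero : ∃ t₀, γ t₀ = 0
  · obtain ⟨t₀, h0⟩ := hzero
    refine IsOrbitArc.of_eqOn_zero hLip' fun t _ => ?_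
    rw [hLip.eq_zero_of_isIntegralCurve hγ h0]
    exact chartMap_zero
  push Not at hzero
  have hIC₀ : MapsTo γ I (C \ {0}) := fun t ht => ⟨hIC ht, hzero t⟩
  obtain ⟨σ, e, hmono, hcont, hgraph⟩ := hF.exists_graph hS hγ hI hIC₀
  have hKΞ (t : ℝ) (ht : t ∈ I) :
      flowConj hS hS' η β (Ξ (γ t)) = (η (σ t), S' (η (σ t)) (β e)) := by
    rw [hgraph t ht, flowConj_apply_apply]
  have hησ : ContinuousOn (η ∘ σ) I := η.continuous.comp_continuousOn hcont
  have hJ : ((η ∘ σ) '' I).OrdConnected := (hI.isPreconnected.image _ hησ).ordConnected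
  refine ((hF'.isOrbitArc_graph hS' hLip' hJ (e := β e) ?_).comp
    (η.strictMono.comp_strictMonoOn hmono) hησ).congr fun t ht => ?_
  · rintro _ ⟨t, ht, rfl⟩
    exact hKΞ t ht ▸ hK (hC.mapsTo_inv (hIC₀ ht))
  · rw [Function.comp_apply, chartMap_of_ne (hzero t), hKΞ t ht]
    rfl

theorem isOrbitEquiv_chartMap [CompleteSpace E] (hC : IsBlowUpChart C D Ψ Ξ N B)
    (hF : StraightensTo C D Ψ Ξ F w g) (hF' : StraightensTo C D Ψ Ξ F' w' g')
    (hS : IsScalarFlow g S) (hS' : IsScalarFlow g' S') (hLip : IsLipschitzField F)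
    (hLip' : IsLipschitzField F') {η β : ℝ ≃o ℝ} (hK : MapsTo (flowConj hS hS' η β) D D)
    (hK' : MapsTo (flowConj hS' hS η.symm β.symm) D D)
    (hN : ∀ M, ∃ M', ∀ c ∈ D, N c ≤ M' → N (flowConj hS hS' η β c) ≤ M)
    (hN' : ∀ M, ∃ M', ∀ c ∈ D, N c ≤ M' → N (flowConj hS' hS η.symm β.symm c) ≤ M) :
    IsOrbitEquiv F F' C (chartMap Ψ Ξ (flowConj hS hS' η β))
      (chartMap Ψ Ξ (flowConj hS' hS η.symm β.symm)) :=
  ⟨isOrbitMap_chartMap hC hF hF' hS hS' hLip hLip' hK hN,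
    isOrbitMap_chartMap hC hF' hF hS' hS hLip' hLip hK' hN',
    hC.leftInvOn_chartMap hK fun c _ => (flowConj hS hS' η β).symm_apply_apply c,
    hC.leftInvOn_chartMap hK' fun c _ => (flowConj hS hS' η β).apply_symm_apply c⟩

end StraightensTo

end BlowUpChart

/-! ### Half-plane equivalences -/

section HalfPlane

variable {E : Type*} [NormedAddCommGroup E] [NormedSpace ℝ E] {F F' : E → E} {S : Set E} {u : E}

/-- `F` and `F'` are orbit equivalent on `S` by a map that fixes the origin and acts on the rays
through `u` and `-u`, in logarithmic coordinates, by `hR` and `hL`. Here `S` is a half plane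
bounded by the line through `u`. -/
def HalfPlaneEquiv (S : Set E) (u : E) (F F' : E → E) (hR hL : ℝ → ℝ) : Prop :=
  ∃ H Hi, IsOrbitEquiv F F' S H Hi ∧ H 0 = 0 ∧
    (∀ s, H (Real.exp s • u) = Real.exp (hR s) • u) ∧
    ∀ s, H (Real.exp s • -u) = Real.exp (hL s) • -u

theorem HalfPlaneEquiv.of_neg {hR hL : ℝ → ℝ}
    (h : HalfPlaneEquiv S u (fun x => -F x) (fun x => -F' x) hR hL) :
    HalfPlaneEquiv S u F F' hR hL :=
  let ⟨H, Hi, hequiv, hrays⟩ := h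
  ⟨H, Hi, hequiv.of_neg, hrays⟩

theorem HalfPlaneEquiv.of_conj (L : E ≃L[ℝ] E) {hR hL : ℝ → ℝ}
    (h : HalfPlaneEquiv S (L u) (conj L F) (conj L F') hR hL) :
    HalfPlaneEquiv (L ⁻¹' S) u F F' hR hL := by
  obtain ⟨H, Hi, hequiv, hzero, hright, hleft⟩ := h
  refine ⟨_, _, hequiv.of_conj L, by simp [hzero], fun s => ?_, fun s => ?_⟩
  · simp [hright]
  · rw [← map_neg] at hleft
    rw [Function.comp_apply, Function.comp_apply, map_smul, hleft, ← map_smul,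
      L.symm_apply_apply]

/-- Every small perturbation `F` of `A` has a map `p`, close to the translation by `k`, such that
`F` and `A` are equivalent on the half plane `S` with any boundary maps `hR`, `hL` intertwining `p`
with that translation. For a focus `p` is the half-return map in logarithmic coordinates; when
the eigenvalues are real the boundary maps are unconstrained and every `k` is admissible. -/
def HasReturnShift (S : Set E) (u : E) (A : E →L[ℝ] E) (k : ℝ) : Prop :=
  ∀ ε > 0, ∃ δ > 0, ∀ F, IsPerturbation A δ F → ∃ p : ℝ ≃o ℝ, (∀ s, |p s - s - k| ≤ ε) ∧
    ∀ hR hL : ℝ ≃o ℝ, (∀ s, hL (p s) = hR s + k) → HalfPlaneEquiv S u F A hR hL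

variable {A : E →L[ℝ] E} {k : ℝ}

theorem HasReturnShift.of_neg (h : HasReturnShift S u (-A) k) : HasReturnShift S u A k := by
  intro ε hε
  obtain ⟨δ, hδ, h⟩ := h ε hε
  refine ⟨δ, hδ, fun F hF => ?_⟩
  obtain ⟨p, hp, h⟩ := h _ hF.neg
  exact ⟨p, hp, fun hR hL hRL => (h hR hL hRL).of_neg⟩

theorem HasReturnShift.of_semiconj (L : E ≃L[ℝ] E) {B : E →L[ℝ] E} (hL : ∀ x, L (A x) = B (L x))
    (h : HasReturnShift S (L u) B k) : HasReturnShift (L ⁻¹' S) u A k := by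
  obtain rfl : (L : E →L[ℝ] E) ∘L A ∘L (L.symm : E →L[ℝ] E) = B := by
    ext x
    simp [hL]
  intro ε hε
  obtain ⟨η, hη, h⟩ := h ε hε
  obtain ⟨δ, hδ, hconj⟩ := IsPerturbation.exists_pos_forall_conj A L hη
  refine ⟨δ, hδ, fun F hF => ?_⟩
  obtain ⟨p, hp, h⟩ := h _ (hconj F hF)
  exact ⟨p, hp, fun hR hL hRL => (h hR hL hRL).of_conj L⟩

end HalfPlane

/-! ### Foci -/

section Plane

/-- The linear map of the plane with matrix `!![a, b; c, d]`. -/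
def matrixMap (a b c d : ℝ) : ℝ × ℝ →L[ℝ] ℝ × ℝ :=
  (a • ContinuousLinearMap.fst ℝ ℝ ℝ + b • ContinuousLinearMap.snd ℝ ℝ ℝ).prod
    (c • ContinuousLinearMap.fst ℝ ℝ ℝ + d • ContinuousLinearMap.snd ℝ ℝ ℝ)

theorem matrixMap_apply (a b c d : ℝ) (p : ℝ × ℝ) :
    matrixMap a b c d p = (a * p.1 + b * p.2, c * p.1 + d * p.2) := by
  simp [matrixMap]

theorem eq_matrixMap (A : ℝ × ℝ →L[ℝ] ℝ × ℝ) :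
    A = matrixMap (A (1, 0)).1 (A (0, 1)).1 (A (1, 0)).2 (A (0, 1)).2 := by
  ext <;> simp [matrixMap_apply]

/-- The closed upper half plane. -/
def upperHalfPlane : Set (ℝ × ℝ) := {p | 0 ≤ p.2}

end Plane

section Polar

/-- Logarithmic polar coordinates: `c.1` is the angle and `c.2` the logarithm of the radius. -/
def polar (c : ℝ × ℝ) : ℝ × ℝ := (Real.exp c.2 * Real.cos c.1, Real.exp c.2 * Real.sin c.1)

/-- The point `p` rotated by `-π / 2`, as a complex number: this moves the closed upper half plane
away from the branch cut of the logarithm. -/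
def rotatedComplex (p : ℝ × ℝ) : ℂ := ⟨p.2, -p.1⟩

/-- The inverse of `polar` on the punctured upper half plane. -/
def polarInv (p : ℝ × ℝ) : ℝ × ℝ :=
  (Real.pi / 2 + (Complex.log (rotatedComplex p)).im, (Complex.log (rotatedComplex p)).re)

theorem continuous_polar : Continuous polar := by unfold polar; fun_prop

theorem rotatedComplex_eq (p : ℝ × ℝ) : rotatedComplex p = p.2 - p.1 * Complex.I := by
  apply Complex.ext <;> simp [rotatedComplex]

theorem rotatedComplex_ne_zero {p : ℝ × ℝ} (hp : p ≠ 0) : rotatedComplex p ≠ 0 := by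
  contrapose! hp
  simpa [rotatedComplex, Complex.ext_iff, Prod.ext_iff, and_comm] using hp

theorem rotatedComplex_mem_slitPlane {p : ℝ × ℝ} (hp : p ∈ upperHalfPlane) (h0 : p ≠ 0) :
    rotatedComplex p ∈ Complex.slitPlane := by
  rw [Complex.mem_slitPlane_iff]
  rcases (show 0 ≤ p.2 from hp).eq_or_lt with h | h
  · refine Or.inr fun h1 => h0 (Prod.ext ?_ h.symm)
    simpa [rotatedComplex] using h1
  · exact Or.inl h

theorem polar_polarInv {p : ℝ × ℝ} (hp : p ≠ 0) : polar (polarInv p) = p := by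
  have hexp := Complex.exp_log (rotatedComplex_ne_zero hp)
  have hre := congrArg Complex.re hexp
  have him := congrArg Complex.im hexp
  rw [Complex.exp_re] at hre
  rw [Complex.exp_im] at him
  simp only [rotatedComplex] at hre him
  rw [polar, polarInv, add_comm, Real.cos_add_pi_div_two, Real.sin_add_pi_div_two]
  exact Prod.ext (by simp only [rotatedComplex]; linarith) hre

theorem polarInv_polar {c : ℝ × ℝ} (hc : c.1 ∈ Icc 0 Real.pi) : polarInv (polar c) = c := by
  have hexp : rotatedComplex (polar c) = Complex.exp ⟨c.2, c.1 - Real.pi / 2⟩ := by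
    apply Complex.ext
    · simp [Complex.exp_re, rotatedComplex, polar, Real.cos_sub_pi_div_two]
    · simp [Complex.exp_im, rotatedComplex, polar, Real.sin_sub_pi_div_two]
  have hpi := Real.pi_pos
  rw [polarInv, hexp,
    Complex.log_exp (by simp only; linarith [hc.1]) (by simp only; linarith [hc.2])]
  simp

theorem polarInv_fst_mem_Icc {p : ℝ × ℝ} (hp : p ∈ upperHalfPlane) :
    (polarInv p).1 ∈ Icc 0 Real.pi := by
  have h := abs_le.1 ((rotatedComplex p).abs_arg_le_pi_div_two_iff.2 hp)
  simp only [polarInv, Complex.log_im]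
  constructor <;> linarith [h.1, h.2]

theorem continuousAt_polarInv {p : ℝ × ℝ} (hp : p ∈ upperHalfPlane) (h0 : p ≠ 0) :
    ContinuousAt polarInv p := by
  have hlog : ContinuousAt (fun p => Complex.log (rotatedComplex p)) p := by
    refine ContinuousAt.clog ?_ (rotatedComplex_mem_slitPlane hp h0)
    simp only [funext rotatedComplex_eq]
    fun_prop
  exact (continuousAt_const.add (Complex.continuous_im.continuousAt.comp hlog)).prodMk
    (Complex.continuous_re.continuousAt.comp hlog)

theorem norm_polar_sub_le (θ : ℝ) {z z' : ℝ} (hz : z ≤ z') :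
    ‖polar (θ, z') - polar (θ, z)‖ ≤ Real.exp z' - Real.exp z := by
  have hexp : 0 ≤ Real.exp z' - Real.exp z := sub_nonneg.2 (Real.exp_le_exp.2 hz)
  have heq : polar (θ, z') - polar (θ, z) =
      (Real.exp z' - Real.exp z) • ((Real.cos θ, Real.sin θ) : ℝ × ℝ) := by
    ext <;> simp [polar] <;> ring
  rw [heq, norm_smul, Real.norm_of_nonneg hexp]
  exact mul_le_of_le_one_right hexp
    (max_le (Real.abs_cos_le_one _) (Real.abs_sin_le_one _))

theorem norm_polar_le (c : ℝ × ℝ) : ‖polar c‖ ≤ Real.exp c.2 := by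
  simp only [polar, Prod.norm_mk, norm_mul, Real.norm_eq_abs, Real.abs_exp]
  exact max_le (mul_le_of_le_one_right (Real.exp_nonneg _) (Real.abs_cos_le_one _))
    (mul_le_of_le_one_right (Real.exp_nonneg _) (Real.abs_sin_le_one _))

theorem exp_le_two_mul_norm_polar (c : ℝ × ℝ) : Real.exp c.2 ≤ 2 * ‖polar c‖ := by
  have hcos : Real.exp c.2 * |Real.cos c.1| ≤ ‖polar c‖ := by
    simp [polar]
  have hsin : Real.exp c.2 * |Real.sin c.1| ≤ ‖polar c‖ := by
    simp [polar]
  have hsum : 1 ≤ |Real.cos c.1| + |Real.sin c.1| := by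
    have := Real.sin_sq_add_cos_sq c.1
    rw [← sq_abs, ← sq_abs (Real.cos c.1)] at this
    nlinarith [abs_nonneg (Real.cos c.1), abs_nonneg (Real.sin c.1)]
  nlinarith [Real.exp_pos c.2]

theorem polar_ne_zero (c : ℝ × ℝ) : polar c ≠ 0 := fun h => by
  have := exp_le_two_mul_norm_polar c
  rw [h, norm_zero] at this
  linarith [Real.exp_pos c.2]

theorem isBlowUpChart_polar : IsBlowUpChart upperHalfPlane (Prod.fst ⁻¹' Icc 0 Real.pi) polar
    polarInv Prod.snd 2 where
  zero_mem := le_refl (0 : ℝ)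
  mapsTo c hc := ⟨mul_nonneg (Real.exp_nonneg _) (Real.sin_nonneg_of_mem_Icc hc), polar_ne_zero c⟩
  mapsTo_inv _ hp := polarInv_fst_mem_Icc hp.1
  invOn := ⟨fun _ hc => polarInv_polar hc, fun _ hp => polar_polarInv hp.2⟩
  continuous := continuous_polar
  continuousAt_inv _ := continuousAt_polarInv
  pos := two_pos
  norm_le c _ := (norm_polar_le c).trans (by linarith [Real.exp_pos c.2])
  exp_le c _ := exp_le_two_mul_norm_polar c

end Polar

section Rates

variable {F G : ℝ × ℝ → ℝ × ℝ} {δ : ℝ}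

/-- The logarithmic growth rate of the radius along `F`. -/
def radialRate (F : ℝ × ℝ → ℝ × ℝ) (c : ℝ × ℝ) : ℝ :=
  Real.exp (-c.2) * ((F (polar c)).1 * Real.cos c.1 + (F (polar c)).2 * Real.sin c.1)

/-- The angular velocity along `F`. -/
def angularRate (F : ℝ × ℝ → ℝ × ℝ) (c : ℝ × ℝ) : ℝ :=
  Real.exp (-c.2) * ((F (polar c)).2 * Real.cos c.1 - (F (polar c)).1 * Real.sin c.1)

/-- The slope of the orbits of `F` in logarithmic polar coordinates. -/
def polarSlope (F : ℝ × ℝ → ℝ × ℝ) (θ z : ℝ) : ℝ := radialRate F (θ, z) / angularRate F (θ, z)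

theorem exp_neg_mul_exp (z : ℝ) : Real.exp (-z) * Real.exp z = 1 := by
  rw [← Real.exp_add, neg_add_cancel, Real.exp_zero]

theorem apply_polar (F : ℝ × ℝ → ℝ × ℝ) (c : ℝ × ℝ) : F (polar c) =
    (Real.exp c.2 * (radialRate F c * Real.cos c.1 - angularRate F c * Real.sin c.1),
      Real.exp c.2 * (radialRate F c * Real.sin c.1 + angularRate F c * Real.cos c.1)) := by
  have htrig := Real.sin_sq_add_cos_sq c.1
  have hexp := exp_neg_mul_exp c.2
  simp only [radialRate, angularRate]
  ext
  · linear_combination (-(F (polar c)).1) * hexp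
      - (F (polar c)).1 * htrig * (Real.exp (-c.2) * Real.exp c.2)
  · linear_combination (-(F (polar c)).2) * hexp
      - (F (polar c)).2 * htrig * (Real.exp (-c.2) * Real.exp c.2)

theorem continuous_radialRate (hF : Continuous F) : Continuous (radialRate F) := by
  have := continuous_polar
  unfold radialRate
  fun_prop

theorem continuous_angularRate (hF : Continuous F) : Continuous (angularRate F) := by
  have := continuous_polar
  unfold angularRate
  fun_prop

theorem abs_mul_cos_add_mul_sin_le (v : ℝ × ℝ) (θ : ℝ) :
    |v.1 * Real.cos θ + v.2 * Real.sin θ| ≤ 2 * ‖v‖ := by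
  have hcos : |v.1 * Real.cos θ| ≤ ‖v‖ := by
    rw [abs_mul]
    exact (mul_le_of_le_one_right (abs_nonneg _) (Real.abs_cos_le_one _)).trans (norm_fst_le v)
  have hsin : |v.2 * Real.sin θ| ≤ ‖v‖ := by
    rw [abs_mul]
    exact (mul_le_of_le_one_right (abs_nonneg _) (Real.abs_sin_le_one _)).trans (norm_snd_le v)
  exact (abs_add_le _ _).trans (by linarith)

theorem abs_mul_cos_sub_mul_sin_le (v : ℝ × ℝ) (θ : ℝ) :
    |v.2 * Real.cos θ - v.1 * Real.sin θ| ≤ 2 * ‖v‖ := by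
  simpa [sub_eq_add_neg, Prod.norm_def, max_comm] using
    abs_mul_cos_add_mul_sin_le (v.2, -v.1) θ

theorem norm_exp_smul_apply_polar_le (hδ : 0 ≤ δ) (hG : IsPerturbation 0 δ G) (c : ℝ × ℝ) :
    ‖Real.exp (-c.2) • G (polar c)‖ ≤ δ := by
  have hle : ‖G (polar c)‖ ≤ δ * ‖polar c‖ := by simpa using hG.norm_sub_apply_le (polar c)
  rw [norm_smul, Real.norm_of_nonneg (Real.exp_nonneg _)]
  calc Real.exp (-c.2) * ‖G (polar c)‖ ≤ Real.exp (-c.2) * (δ * Real.exp c.2) := by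
        gcongr
        exact hle.trans (mul_le_mul_of_nonneg_left (norm_polar_le c) hδ)
    _ = δ := by linear_combination δ * exp_neg_mul_exp c.2

theorem norm_exp_smul_apply_polar_sub_le (hδ : 0 ≤ δ) (hG : IsPerturbation 0 δ G) (θ z z' : ℝ) :
    ‖Real.exp (-z') • G (polar (θ, z')) - Real.exp (-z) • G (polar (θ, z))‖ ≤
      2 * δ * |z' - z| := by
  wlog hz : z ≤ z' generalizing z z'
  · rw [norm_sub_rev, abs_sub_comm]
    exact this z' z (le_of_not_ge hz)
  have hexp : 0 ≤ Real.exp (-z) - Real.exp (-z') :=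
    sub_nonneg.2 (Real.exp_le_exp.2 (neg_le_neg hz))
  have hle : ‖G (polar (θ, z))‖ ≤ δ * Real.exp z := by
    refine le_trans (by simpa using hG.norm_sub_apply_le (polar (θ, z))) ?_
    exact mul_le_mul_of_nonneg_left (norm_polar_le (θ, z)) hδ
  have hlip : ‖G (polar (θ, z')) - G (polar (θ, z))‖ ≤ δ * (Real.exp z' - Real.exp z) := by
    refine le_trans (by simpa using hG.norm_sub_le (polar (θ, z')) (polar (θ, z))) ?_
    exact mul_le_mul_of_nonneg_left (norm_polar_sub_le θ hz) hδ
  have hcross : Real.exp (-z') * Real.exp z = Real.exp (z - z') := by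
    rw [← Real.exp_add]
    ring_nf
  calc ‖Real.exp (-z') • G (polar (θ, z')) - Real.exp (-z) • G (polar (θ, z))‖
      = ‖Real.exp (-z') • (G (polar (θ, z')) - G (polar (θ, z)))
          - (Real.exp (-z) - Real.exp (-z')) • G (polar (θ, z))‖ := by
        congr 1
        module
    _ ≤ Real.exp (-z') * (δ * (Real.exp z' - Real.exp z))
          + (Real.exp (-z) - Real.exp (-z')) * (δ * Real.exp z) := by
        refine (norm_sub_le _ _).trans ?_
        rw [norm_smul, norm_smul, Real.norm_of_nonneg (Real.exp_nonneg _),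
          Real.norm_of_nonneg hexp]
        gcongr
    _ = 2 * δ * (1 - Real.exp (z - z')) := by
        linear_combination δ * exp_neg_mul_exp z' + δ * exp_neg_mul_exp z - 2 * δ * hcross
    _ ≤ 2 * δ * |z' - z| := mul_le_mul_of_nonneg_left
        (by linarith [Real.add_one_le_exp (z - z'), le_abs_self (z' - z)]) (by linarith)

theorem radialRate_eq (c : ℝ × ℝ) : radialRate F c =
    (Real.exp (-c.2) • F (polar c)).1 * Real.cos c.1
      + (Real.exp (-c.2) • F (polar c)).2 * Real.sin c.1 := by
  simp only [radialRate, Prod.smul_fst, Prod.smul_snd, smul_eq_mul]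
  ring

theorem angularRate_eq (c : ℝ × ℝ) : angularRate F c =
    (Real.exp (-c.2) • F (polar c)).2 * Real.cos c.1
      - (Real.exp (-c.2) • F (polar c)).1 * Real.sin c.1 := by
  simp only [angularRate, Prod.smul_fst, Prod.smul_snd, smul_eq_mul]
  ring

theorem abs_radialRate_le (hδ : 0 ≤ δ) (hG : IsPerturbation 0 δ G) (c : ℝ × ℝ) :
    |radialRate G c| ≤ 2 * δ := by
  rw [radialRate_eq]
  refine (abs_mul_cos_add_mul_sin_le _ _).trans ?_
  linarith [norm_exp_smul_apply_polar_le hδ hG c]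

theorem abs_angularRate_le (hδ : 0 ≤ δ) (hG : IsPerturbation 0 δ G) (c : ℝ × ℝ) :
    |angularRate G c| ≤ 2 * δ := by
  rw [angularRate_eq]
  refine (abs_mul_cos_sub_mul_sin_le _ _).trans ?_
  linarith [norm_exp_smul_apply_polar_le hδ hG c]

theorem abs_radialRate_sub_radialRate_le (hδ : 0 ≤ δ) (hG : IsPerturbation 0 δ G) (θ z z' : ℝ) :
    |radialRate G (θ, z) - radialRate G (θ, z')| ≤ 4 * δ * |z - z'| := by
  calc |radialRate G (θ, z) - radialRate G (θ, z')|
      ≤ 2 * ‖Real.exp (-z) • G (polar (θ, z)) - Real.exp (-z') • G (polar (θ, z'))‖ := by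
        refine le_of_eq_of_le (congrArg _ ?_) (abs_mul_cos_add_mul_sin_le _ θ)
        rw [radialRate_eq, radialRate_eq, Prod.fst_sub, Prod.snd_sub]
        ring
    _ ≤ 4 * δ * |z - z'| := by linarith [norm_exp_smul_apply_polar_sub_le hδ hG θ z' z]

theorem abs_angularRate_sub_angularRate_le (hδ : 0 ≤ δ) (hG : IsPerturbation 0 δ G) (θ z z' : ℝ) :
    |angularRate G (θ, z) - angularRate G (θ, z')| ≤ 4 * δ * |z - z'| := by
  calc |angularRate G (θ, z) - angularRate G (θ, z')|
      ≤ 2 * ‖Real.exp (-z) • G (polar (θ, z)) - Real.exp (-z') • G (polar (θ, z'))‖ := by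
        refine le_of_eq_of_le (congrArg _ ?_) (abs_mul_cos_sub_mul_sin_le _ θ)
        rw [angularRate_eq, angularRate_eq, Prod.fst_sub, Prod.snd_sub]
        ring
    _ ≤ 4 * δ * |z - z'| := by linarith [norm_exp_smul_apply_polar_sub_le hδ hG θ z' z]

end Rates

section Spiral

variable {F : ℝ × ℝ → ℝ × ℝ} {α ω δ : ℝ}

/-- The linear field with eigenvalues `α ± ω * I` in normal form. -/
def spiral (α ω : ℝ) : ℝ × ℝ →L[ℝ] ℝ × ℝ := matrixMap α (-ω) ω α

theorem IsPerturbation.sub_spiral (hF : IsPerturbation (spiral α ω) δ F) :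
    IsPerturbation 0 δ fun x => F x - spiral α ω x :=
  ⟨by simp [hF.map_zero], fun x y => by simpa using hF.norm_sub_le x y⟩

theorem radialRate_eq_add (c : ℝ × ℝ) :
    radialRate F c = α + radialRate (fun x => F x - spiral α ω x) c := by
  have htrig := Real.sin_sq_add_cos_sq c.1
  simp only [radialRate, spiral, matrixMap_apply, Prod.fst_sub, Prod.snd_sub]
  simp only [polar]
  linear_combination α * htrig * (Real.exp (-c.2) * Real.exp c.2) + α * exp_neg_mul_exp c.2

theorem angularRate_eq_add (c : ℝ × ℝ) :
    angularRate F c = ω + angularRate (fun x => F x - spiral α ω x) c := by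
  have htrig := Real.sin_sq_add_cos_sq c.1
  simp only [angularRate, spiral, matrixMap_apply, Prod.fst_sub, Prod.snd_sub]
  simp only [polar]
  linear_combination ω * htrig * (Real.exp (-c.2) * Real.exp c.2) + ω * exp_neg_mul_exp c.2

theorem abs_div_sub_div_le {a a' w w' w₀ A W L : ℝ} (hw₀ : 0 < w₀) (hw : w₀ ≤ w) (hw' : w₀ ≤ w')
    (hA : |a| ≤ A) (hW : w ≤ W) (haa' : |a - a'| ≤ L) (hww' : |w - w'| ≤ L) :
    |a / w - a' / w'| ≤ (A + W) * L / (w₀ * w₀) := by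
  have hwpos : 0 < w := hw₀.trans_le hw
  have hwpos' : 0 < w' := hw₀.trans_le hw'
  have hnum : |w * (a - a') - a * (w - w')| ≤ (A + W) * L := by
    refine (abs_sub _ _).trans ?_
    rw [abs_mul, abs_mul, abs_of_pos hwpos, add_mul]
    have := mul_le_mul hW haa' (abs_nonneg _) (hwpos.le.trans hW)
    have := mul_le_mul hA hww' (abs_nonneg _) ((abs_nonneg _).trans hA)
    linarith
  have heq : a / w - a' / w' = (w * (a - a') - a * (w - w')) / (w * w') := by
    field_simp
    ring
  rw [heq, abs_div, abs_of_pos (mul_pos hwpos hwpos')]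
  exact div_le_div₀ ((abs_nonneg _).trans hnum) hnum (mul_pos hw₀ hw₀)
    (mul_le_mul hw hw' hw₀.le hwpos.le)

namespace IsPerturbation

theorem abs_radialRate_sub_le (hδ : 0 ≤ δ) (hF : IsPerturbation (spiral α ω) δ F) (c : ℝ × ℝ) :
    |radialRate F c - α| ≤ 2 * δ := by
  rw [radialRate_eq_add (α := α) (ω := ω), add_sub_cancel_left]
  exact abs_radialRate_le hδ hF.sub_spiral c

theorem abs_angularRate_sub_le (hδ : 0 ≤ δ) (hF : IsPerturbation (spiral α ω) δ F) (c : ℝ × ℝ) :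
    |angularRate F c - ω| ≤ 2 * δ := by
  rw [angularRate_eq_add (α := α) (ω := ω), add_sub_cancel_left]
  exact abs_angularRate_le hδ hF.sub_spiral c

theorem angularRate_mem_Icc (hδ : 0 ≤ δ) (hδω : 4 * δ ≤ ω)
    (hF : IsPerturbation (spiral α ω) δ F) (c : ℝ × ℝ) :
    angularRate F c ∈ Icc (ω / 2) (2 * ω) := by
  have := abs_le.1 (hF.abs_angularRate_sub_le hδ c)
  constructor <;> linarith

theorem abs_polarSlope_sub_le (hω : 0 < ω) (hδ : 0 ≤ δ) (hδω : 4 * δ ≤ ω)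
    (hF : IsPerturbation (spiral α ω) δ F) (θ z : ℝ) :
    |polarSlope F θ z - α / ω| ≤ 4 * δ * (ω + |α|) / ω ^ 2 := by
  have hw := (hF.angularRate_mem_Icc hδ hδω (θ, z)).1
  have hwpos : 0 < angularRate F (θ, z) := (half_pos hω).trans_le hw
  have heq : polarSlope F θ z - α / ω = (ω * (radialRate F (θ, z) - α)
      - α * (angularRate F (θ, z) - ω)) / (angularRate F (θ, z) * ω) := by
    rw [polarSlope]
    field_simp
    ring
  have hnum : |ω * (radialRate F (θ, z) - α) - α * (angularRate F (θ, z) - ω)| ≤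
      2 * δ * (ω + |α|) := by
    refine (abs_sub _ _).trans ?_
    rw [abs_mul, abs_mul, abs_of_pos hω]
    have := mul_le_mul_of_nonneg_left (hF.abs_radialRate_sub_le hδ (θ, z)) hω.le
    have := mul_le_mul_of_nonneg_left (hF.abs_angularRate_sub_le hδ (θ, z)) (abs_nonneg α)
    linarith
  rw [heq, abs_div, abs_of_pos (mul_pos hwpos hω)]
  calc _ ≤ 2 * δ * (ω + |α|) / (ω / 2 * ω) := by gcongr
    _ = 4 * δ * (ω + |α|) / ω ^ 2 := by
      field_simp
      ring

theorem exists_lipschitzWith_polarSlope (hω : 0 < ω) (hδ : 0 ≤ δ) (hδω : 4 * δ ≤ ω)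
    (hF : IsPerturbation (spiral α ω) δ F) : ∃ K, ∀ θ, LipschitzWith K (polarSlope F θ) := by
  refine ⟨((|α| + 2 * δ + 2 * ω) * (4 * δ) / (ω / 2 * (ω / 2))).toNNReal,
    fun θ => LipschitzWith.of_dist_le_mul fun z z' => ?_⟩
  have ha : |radialRate F (θ, z)| ≤ |α| + 2 * δ := by
    linarith [hF.abs_radialRate_sub_le hδ (θ, z), abs_sub_abs_le_abs_sub (radialRate F (θ, z)) α]
  have haa : |radialRate F (θ, z) - radialRate F (θ, z')| ≤ 4 * δ * |z - z'| := by
    simpa only [radialRate_eq_add (F := F) (α := α) (ω := ω), add_sub_add_left_eq_sub] using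
      abs_radialRate_sub_radialRate_le hδ hF.sub_spiral θ z z'
  have hww : |angularRate F (θ, z) - angularRate F (θ, z')| ≤ 4 * δ * |z - z'| := by
    simpa only [angularRate_eq_add (F := F) (α := α) (ω := ω), add_sub_add_left_eq_sub] using
      abs_angularRate_sub_angularRate_le hδ hF.sub_spiral θ z z'
  have hw := hF.angularRate_mem_Icc hδ hδω (θ, z)
  rw [Real.dist_eq, Real.dist_eq, Real.coe_toNNReal _ (by positivity)]
  refine (abs_div_sub_div_le (half_pos hω) hw.1 (hF.angularRate_mem_Icc hδ hδω (θ, z')).1 ha hw.2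
    haa hww).trans (le_of_eq ?_)
  ring

theorem exists_isScalarFlow_polarSlope (hω : 0 < ω) (hδ : 0 ≤ δ) (hδω : 4 * δ ≤ ω)
    (hF : IsPerturbation (spiral α ω) δ F) : ∃ S, IsScalarFlow (polarSlope F) S := by
  obtain ⟨K, hK⟩ := hF.exists_lipschitzWith_polarSlope hω hδ hδω
  have hcont := hF.isLipschitzField.continuous
  refine exists_isScalarFlow hK fun z => ?_
  have hgraph : Continuous fun s : ℝ => (s, z) := by fun_prop
  exact ((continuous_radialRate hcont).comp hgraph).div ((continuous_angularRate hcont).comp hgraph)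
    fun s => ((half_pos hω).trans_le (hF.angularRate_mem_Icc hδ hδω _).1).ne'

end IsPerturbation

theorem hasDerivAt_log_rotatedComplex {γ : ℝ → ℝ × ℝ} {t : ℝ} (hγ : HasDerivAt γ (F (γ t)) t)
    (hmem : γ t ∈ upperHalfPlane) (h0 : γ t ≠ 0) :
    HasDerivAt (fun t => Complex.log (rotatedComplex (γ t)))
      ⟨radialRate F (polarInv (γ t)), angularRate F (polarInv (γ t))⟩ t := by
  have hfst : HasDerivAt (fun t => (γ t).1) (F (γ t)).1 t := hγ.fst
  have hsnd : HasDerivAt (fun t => (γ t).2) (F (γ t)).2 t := hγ.snd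
  have hrot : HasDerivAt (fun t => rotatedComplex (γ t)) (rotatedComplex (F (γ t))) t := by
    simp only [rotatedComplex_eq]
    exact hsnd.ofReal_comp.sub (hfst.ofReal_comp.mul_const Complex.I)
  refine (hrot.clog_real (rotatedComplex_mem_slitPlane hmem h0)).congr_deriv ?_
  rw [div_eq_iff (rotatedComplex_ne_zero h0)]
  set c := polarInv (γ t)
  rw [← polar_polarInv h0, apply_polar F]
  simp only [polar, rotatedComplex, Complex.ext_iff, Complex.mul_re, Complex.mul_im]
  constructor <;> ring

theorem hasDerivAt_polar_graph {ζ : ℝ → ℝ} {s : ℝ} (hw : angularRate F (s, ζ s) ≠ 0)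
    (hζ : HasDerivAt ζ (polarSlope F s (ζ s)) s) :
    HasDerivAt (fun s => polar (s, ζ s))
      ((1 / angularRate F (s, ζ s)) • F (polar (s, ζ s))) s := by
  refine ((hζ.exp.mul (Real.hasDerivAt_cos s)).prodMk
    (hζ.exp.mul (Real.hasDerivAt_sin s))).congr_deriv ?_
  rw [apply_polar F, polarSlope]
  ext
  · simp only [Prod.smul_fst, smul_eq_mul]
    field_simp
    ring
  · simp only [Prod.smul_snd, smul_eq_mul]
    field_simp

theorem IsPerturbation.straightensTo_polar (hω : 0 < ω) (hδ : 0 ≤ δ) (hδω : 4 * δ ≤ ω)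
    (hF : IsPerturbation (spiral α ω) δ F) :
    StraightensTo upperHalfPlane (Prod.fst ⁻¹' Icc 0 Real.pi) polar polarInv F (angularRate F)
      (polarSlope F) := by
  have hw (c : ℝ × ℝ) := hF.angularRate_mem_Icc hδ hδω c
  have hne (c : ℝ × ℝ) : angularRate F c ≠ 0 := ((half_pos hω).trans_le (hw c).1).ne'
  refine ⟨fun γ t hγ hmem h0 => ?_, fun γ t hγ hmem h0 => ?_,
    fun ζ s _ => hasDerivAt_polar_graph (hne _),
    continuous_angularRate hF.isLipschitzField.continuous,
    ⟨ω / 2, half_pos hω, fun c => (hw c).1⟩, 2 * ω, fun c => (hw c).2⟩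
  · exact (Complex.imCLM.hasFDerivAt.comp_hasDerivAt t
      (hasDerivAt_log_rotatedComplex hγ hmem h0)).const_add (Real.pi / 2)
  · rw [polarSlope, mul_div_cancel₀ _ (hne _)]
    exact Complex.reCLM.hasFDerivAt.comp_hasDerivAt t (hasDerivAt_log_rotatedComplex hγ hmem h0)

end Spiral

section ReturnMap

variable {F : ℝ × ℝ → ℝ × ℝ} {α ω δ k : ℝ} {g g' : ℝ → ℝ → ℝ} {S S' : ℝ → ℝ ≃o ℝ}

theorem IsScalarFlow.abs_apply_sub_le {κ : ℝ} (hS : IsScalarFlow g S)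
    (hg : ∀ s z, |g s z - k| ≤ κ) {s T : ℝ} (hs : s ∈ Icc 0 T) (e : ℝ) :
    |S s e - e| ≤ (|k| + κ) * T := by
  have hκ : 0 ≤ κ := (abs_nonneg _).trans (hg 0 0)
  calc |S s e - e| = |(S s e - e - k * s) + k * s| := by rw [sub_add_cancel]
    _ ≤ κ * |s| + |k| * |s| :=
      (abs_add_le _ _).trans (add_le_add (hS.abs_apply_sub_sub_le hg e s) (abs_mul _ _).le)
    _ = (|k| + κ) * s := by
      rw [abs_of_nonneg hs.1]
      ring
    _ ≤ (|k| + κ) * T := by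
      gcongr
      exact hs.2

theorem exists_flowConj_snd_le {T : ℝ} (hS : IsScalarFlow g S) (hS' : IsScalarFlow g' S')
    (hk : ∀ s ∈ Icc 0 T, ∀ e, |S s e - e| ≤ k) (hk' : ∀ s ∈ Icc 0 T, ∀ e, |S' s e - e| ≤ k)
    (β : ℝ ≃o ℝ) (M : ℝ) : ∃ M', ∀ c ∈ Prod.fst ⁻¹' Icc 0 T, c.2 ≤ M' →
      (flowConj hS hS' (OrderIso.refl ℝ) β c).2 ≤ M := by
  refine ⟨β.symm (M - k) - k, fun c hc hcM => ?_⟩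
  have h₁ := (abs_le.1 (hk c.1 hc ((S c.1).symm c.2))).1
  have h₂ := (abs_le.1 (hk' c.1 hc (β ((S c.1).symm c.2)))).2
  rw [OrderIso.apply_symm_apply] at h₁
  have hβ : β ((S c.1).symm c.2) ≤ M - k := β.le_symm_apply.1 (by linarith)
  change S' c.1 (β ((S c.1).symm c.2)) ≤ M
  linarith

theorem chartMap_polar (hS : IsScalarFlow g S) (hS' : IsScalarFlow g' S') (β : ℝ ≃o ℝ) {θ : ℝ}
    (hθ : θ ∈ Icc 0 Real.pi) (z : ℝ) :
    chartMap polar polarInv (flowConj hS hS' (OrderIso.refl ℝ) β) (polar (θ, z)) =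
      polar (θ, S' θ (β ((S θ).symm z))) := by
  rw [chartMap_of_ne (polar_ne_zero _), polarInv_polar hθ]
  rfl

theorem IsPerturbation.isOrbitEquiv_spiral {δ' : ℝ} {F' : ℝ × ℝ → ℝ × ℝ} (hω : 0 < ω)
    (hδ : 0 ≤ δ) (hδω : 4 * δ ≤ ω) (hδ' : 0 ≤ δ') (hδω' : 4 * δ' ≤ ω)
    (hF : IsPerturbation (spiral α ω) δ F) (hF' : IsPerturbation (spiral α ω) δ' F')
    (hS : IsScalarFlow (polarSlope F) S) (hS' : IsScalarFlow (polarSlope F') S') (β : ℝ ≃o ℝ) :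
    IsOrbitEquiv F F' upperHalfPlane
      (chartMap polar polarInv (flowConj hS hS' (OrderIso.refl ℝ) β))
      (chartMap polar polarInv (flowConj hS' hS (OrderIso.refl ℝ) β.symm)) := by
  set k₁ := (|α / ω| + 4 * δ * (ω + |α|) / ω ^ 2) * Real.pi
  set k₂ := (|α / ω| + 4 * δ' * (ω + |α|) / ω ^ 2) * Real.pi
  have hk (s) (hs : s ∈ Icc 0 Real.pi) (e : ℝ) : |S s e - e| ≤ max k₁ k₂ :=
    (hS.abs_apply_sub_le (hF.abs_polarSlope_sub_le hω hδ hδω) hs e).trans (le_max_left _ _)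
  have hk' (s) (hs : s ∈ Icc 0 Real.pi) (e : ℝ) : |S' s e - e| ≤ max k₁ k₂ :=
    (hS'.abs_apply_sub_le (hF'.abs_polarSlope_sub_le hω hδ' hδω') hs e).trans (le_max_right _ _)
  exact StraightensTo.isOrbitEquiv_chartMap isBlowUpChart_polar
    (hF.straightensTo_polar hω hδ hδω) (hF'.straightensTo_polar hω hδ' hδω') hS hS'
    hF.isLipschitzField hF'.isLipschitzField (fun _ hc => hc) (fun _ hc => hc)
    (exists_flowConj_snd_le hS hS' hk hk' β) (exists_flowConj_snd_le hS' hS hk' hk β.symm)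

theorem IsScalarFlow.apply_of_polarSlope_spiral (hω : 0 < ω)
    (hS : IsScalarFlow (polarSlope (spiral α ω)) S) (s e : ℝ) : S s e = e + α / ω * s := by
  have hslope (s z : ℝ) : |polarSlope (spiral α ω) s z - α / ω| ≤ 0 := by
    simpa using (IsPerturbation.self (spiral α ω) le_rfl).abs_polarSlope_sub_le hω le_rfl
      (by linarith) s z
  have := hS.abs_apply_sub_sub_le hslope e s
  rw [zero_mul, abs_nonpos_iff] at this
  linarith

theorem IsPerturbation.halfPlaneEquiv_spiral (hω : 0 < ω) (hδ : 0 ≤ δ) (hδω : 4 * δ ≤ ω)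
    (hF : IsPerturbation (spiral α ω) δ F) (hS : IsScalarFlow (polarSlope F) S) {hR hL : ℝ ≃o ℝ}
    (hRL : ∀ s, hL (S Real.pi s) = hR s + Real.pi * α / ω) :
    HalfPlaneEquiv upperHalfPlane (1, 0) F (spiral α ω) hR hL := by
  have hA := IsPerturbation.self (spiral α ω) le_rfl
  obtain ⟨S', hS'⟩ := hA.exists_isScalarFlow_polarSlope hω le_rfl (by linarith)
  refine ⟨_, _, hF.isOrbitEquiv_spiral hω hδ hδω le_rfl (by linarith) hA hS hS' hR,
    chartMap_zero, fun s => ?_, fun s => ?_⟩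
  · simpa [polar, hS.zero_symm_apply, hS'.zero_apply] using
      chartMap_polar hS hS' hR ⟨le_rfl, Real.pi_nonneg⟩ s
  · have hlast : S' Real.pi (hR ((S Real.pi).symm s)) = hL s := by
      have := hRL ((S Real.pi).symm s)
      rw [OrderIso.apply_symm_apply] at this
      rw [this, hS'.apply_of_polarSlope_spiral hω]
      ring
    simpa [polar, hlast] using chartMap_polar hS hS' hR ⟨Real.pi_nonneg, le_rfl⟩ s

theorem hasReturnShift_spiral (hω : 0 < ω) :
    HasReturnShift upperHalfPlane (1, 0) (spiral α ω) (Real.pi * α / ω) := by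
  intro ε hε
  have hpi := Real.pi_pos
  set δ := min (ω / 4) (ε * ω ^ 2 / (4 * Real.pi * (ω + |α|)))
  have hδ : 0 < δ := by positivity
  have hδω : 4 * δ ≤ ω := by linarith [min_le_left (ω / 4) (ε * ω ^ 2 / (4 * Real.pi * (ω + |α|)))]
  have hδε : 4 * δ * (ω + |α|) / ω ^ 2 * Real.pi ≤ ε := by
    have : δ ≤ ε * ω ^ 2 / (4 * Real.pi * (ω + |α|)) := min_le_right _ _
    rw [le_div_iff₀ (by positivity)] at this
    rw [div_mul_eq_mul_div, div_le_iff₀ (by positivity)]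
    linarith
  refine ⟨δ, hδ, fun F hF => ?_⟩
  obtain ⟨S, hS⟩ := hF.exists_isScalarFlow_polarSlope hω hδ.le hδω
  refine ⟨S Real.pi, fun s => ?_, fun hR hL hRL =>
    hF.halfPlaneEquiv_spiral hω hδ.le hδω hS hRL⟩
  have := hS.abs_apply_sub_sub_le (hF.abs_polarSlope_sub_le hω hδ.le hδω) s Real.pi
  rw [abs_of_pos hpi] at this
  rw [mul_comm Real.pi, mul_div_right_comm]
  exact this.trans hδε

end ReturnMap

/-! ### Trapping strips -/

section TrappingStrip

/-- The strip `a ≤ z ≤ b` traps the solutions of the scalar equation `z' = g s z`: outside it they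
move towards it with speed at least `c`, and any two of them approach each other at exponential
rate `κ`. This is how the equation of a node or saddle looks in the blow-up of a cone around its
dominant eigendirection. -/
structure IsTrappingStrip (g : ℝ → ℝ → ℝ) (a b κ c : ℝ) : Prop where
  left_lt_right : a < b
  rate_pos : 0 < κ
  speed_pos : 0 < c
  sub_le : ∀ s z z', z ≤ z' → g s z' - g s z ≤ -κ * (z' - z)
  lt_neg_speed : ∀ s z, b ≤ z → g s z < -c
  speed_lt : ∀ s z, z ≤ a → c < g s z

theorem add_mul_le_of_lt_neg {g : ℝ → ℝ → ℝ} {b c : ℝ} (hc : 0 < c)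
    (hg : ∀ s z, b ≤ z → g s z < -c) {ζ : ℝ → ℝ} (hζ : IsIntegralCurve ζ g) {s x : ℝ}
    (hs : b ≤ ζ s) (hx : 0 ≤ x) : b + c * x ≤ ζ (s - x) := by
  have hder (y : ℝ) : HasDerivAt (fun y => -ζ (s - y)) (g (s - y) (ζ (s - y))) y :=
    ((hζ (s - y)).comp y ((hasDerivAt_id y).const_sub s)).neg.congr_deriv (by simp)
  have hder' (y : ℝ) : HasDerivAt (fun y => -b - c * y) (-c) y := by
    simpa using ((hasDerivAt_id y).const_mul c).const_sub (-b)
  have := image_le_of_deriv_right_lt_deriv_boundary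
    (fun y _ => (hder y).continuousAt.continuousWithinAt) (fun y _ => (hder y).hasDerivWithinAt)
    (by simpa using hs) hder'
    (fun y hy heq => hg _ _ (by linarith [mul_nonneg hc.le hy.1])) ⟨hx, le_rfl⟩
  linarith

theorem antitone_sub_mul_exp {g : ℝ → ℝ → ℝ} {κ : ℝ}
    (hg : ∀ s z z', z ≤ z' → g s z' - g s z ≤ -κ * (z' - z)) {ζ ζ' : ℝ → ℝ}
    (hζ : IsIntegralCurve ζ g) (hζ' : IsIntegralCurve ζ' g) (hle : ∀ s, ζ s ≤ ζ' s) :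
    Antitone fun s => (ζ' s - ζ s) * Real.exp (κ * s) := by
  have hder (s : ℝ) : HasDerivAt (fun s => (ζ' s - ζ s) * Real.exp (κ * s))
      ((g s (ζ' s) - g s (ζ s)) * Real.exp (κ * s)
        + (ζ' s - ζ s) * (Real.exp (κ * s) * κ)) s :=
    ((hζ' s).sub (hζ s)).mul (by simpa using ((hasDerivAt_id s).const_mul κ).exp)
  refine antitone_of_hasDerivAt_nonpos hder fun s => ?_
  have := mul_le_mul_of_nonneg_right (hg s _ _ (hle s)) (Real.exp_pos (κ * s)).le
  simp only [Pi.zero_apply]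
  linarith

variable {g g' : ℝ → ℝ → ℝ} {S S' : ℝ → ℝ ≃o ℝ} {a b κ c κ' c' : ℝ}

theorem IsScalarFlow.continuous_symm_apply_const (hS : IsScalarFlow g S) (z : ℝ) :
    Continuous fun s => (S s).symm z :=
  hS.continuous_symm_apply.comp (continuous_id.prodMk continuous_const)

namespace IsTrappingStrip

variable (hg : IsTrappingStrip g a b κ c) (hS : IsScalarFlow g S)
include hg hS

theorem le_apply_sub {s x : ℝ} (hx : 0 ≤ x) : b + c * x ≤ S (s - x) ((S s).symm b) :=
  add_mul_le_of_lt_neg hg.speed_pos hg.lt_neg_speed (hS.isIntegralCurve _)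
    ((S s).apply_symm_apply b).ge hx

theorem apply_sub_le {s x : ℝ} (hx : 0 ≤ x) : S (s - x) ((S s).symm a) ≤ a - c * x := by
  have hcurve : IsIntegralCurve (fun s' => -S s' ((S s).symm a)) fun s z => -g s (-z) := fun s' =>
    (hS.isIntegralCurve _ s').neg.congr_deriv (by simp only [neg_neg])
  have := add_mul_le_of_lt_neg (b := -a) hg.speed_pos
    (fun s z hz => neg_lt_neg (hg.speed_lt s _ (neg_le.1 hz))) hcurve (s := s)
    (by rw [OrderIso.apply_symm_apply]) hx
  linarith

theorem strictMono_symm_apply_right : StrictMono fun s => (S s).symm b := fun s s' hlt => by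
  rw [← (S s).lt_iff_lt, OrderIso.apply_symm_apply]
  have := hg.le_apply_sub hS (s := s') (sub_nonneg.2 hlt.le)
  rw [sub_sub_cancel] at this
  linarith [mul_pos hg.speed_pos (sub_pos.2 hlt)]

theorem strictAnti_symm_apply_left : StrictAnti fun s => (S s).symm a := fun s s' hlt => by
  rw [← (S s).lt_iff_lt, OrderIso.apply_symm_apply]
  have := hg.apply_sub_le hS (s := s') (sub_nonneg.2 hlt.le)
  rw [sub_sub_cancel] at this
  linarith [mul_pos hg.speed_pos (sub_pos.2 hlt)]

theorem exists_le_symm_apply_right (M : ℝ) : ∃ s, M ≤ (S s).symm b := by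
  have := hg.le_apply_sub hS (s := |M - b| / c) (x := |M - b| / c)
    (div_nonneg (abs_nonneg _) hg.speed_pos.le)
  rw [sub_self, hS.zero_apply, mul_div_cancel₀ _ hg.speed_pos.ne'] at this
  exact ⟨_, by linarith [le_abs_self (M - b)]⟩

theorem exists_symm_apply_left_le (M : ℝ) : ∃ s, (S s).symm a ≤ M := by
  have := hg.apply_sub_le hS (s := |M - a| / c) (x := |M - a| / c)
    (div_nonneg (abs_nonneg _) hg.speed_pos.le)
  rw [sub_self, hS.zero_apply, mul_div_cancel₀ _ hg.speed_pos.ne'] at this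
  exact ⟨_, by linarith [neg_abs_le (M - a)]⟩

theorem symm_apply_sub_le {s : ℝ} (hs : s ≤ 0) :
    (S s).symm b - (S s).symm a ≤ (b - a) * Real.exp (κ * s) := by
  have hle (s' : ℝ) : S s' ((S s).symm a) ≤ S s' ((S s).symm b) :=
    (S s').monotone ((S s).symm.monotone hg.left_lt_right.le)
  have := antitone_sub_mul_exp hg.sub_le (hS.isIntegralCurve _) (hS.isIntegralCurve _) hle hs
  simpa only [hS.zero_apply, OrderIso.apply_symm_apply, mul_zero, Real.exp_zero, mul_one] using this

theorem exists_symm_apply_sub_lt {ε : ℝ} (hε : 0 < ε) : ∃ s, (S s).symm b - (S s).symm a < ε := by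
  have hlim : Tendsto (fun s => (b - a) * Real.exp (κ * s)) atBot (𝓝 0) := by
    simpa using (Real.tendsto_exp_atBot.comp
      (tendsto_id.const_mul_atBot hg.rate_pos)).const_mul (b - a)
  obtain ⟨s, hs, hlt⟩ := ((eventually_le_atBot 0).and (hlim.eventually_lt_const hε)).exists
  exact ⟨s, (hg.symm_apply_sub_le hS hs).trans_lt hlt⟩

theorem exists_orderIso_apply_symm_apply (hg' : IsTrappingStrip g' a b κ' c')
    (hS' : IsScalarFlow g' S') (η : ℝ ≃o ℝ) :
    ∃ β : ℝ ≃o ℝ, (∀ s, β ((S s).symm a) = (S' (η s)).symm a) ∧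
      ∀ s, β ((S s).symm b) = (S' (η s)).symm b := by
  obtain ⟨ξ, hb, ha⟩ := exists_orderIso_apply_exp (hg.strictMono_symm_apply_right hS)
    (hg.strictAnti_symm_apply_left hS) (hS.continuous_symm_apply_const b)
    (hS.continuous_symm_apply_const a) (fun s => (S s).symm.strictMono hg.left_lt_right)
    (hg.exists_le_symm_apply_right hS) (hg.exists_symm_apply_left_le hS)
    fun _ => hg.exists_symm_apply_sub_lt hS
  obtain ⟨ξ', hb', ha'⟩ := exists_orderIso_apply_exp
    ((hg'.strictMono_symm_apply_right hS').comp η.strictMono)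
    (fun _ _ hlt => hg'.strictAnti_symm_apply_left hS' (η.strictMono hlt))
    ((hS'.continuous_symm_apply_const b).comp η.continuous)
    ((hS'.continuous_symm_apply_const a).comp η.continuous)
    (fun s => (S' (η s)).symm.strictMono hg'.left_lt_right)
    (fun M => (η.surjective.exists).1 (hg'.exists_le_symm_apply_right hS' M))
    (fun M => (η.surjective.exists).1 (hg'.exists_symm_apply_left_le hS' M))
    fun _ hε => (η.surjective.exists).1 (hg'.exists_symm_apply_sub_lt hS' hε)
  refine ⟨ξ.symm.trans ξ', fun s => ?_, fun s => ?_⟩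
  · rw [← ha s, OrderIso.trans_apply, ξ.symm_apply_apply, ha']
  · rw [← hb s, OrderIso.trans_apply, ξ.symm_apply_apply, hb']
    rfl

end IsTrappingStrip

variable {η β : ℝ ≃o ℝ}

theorem flowConj_apply_boundary (hS : IsScalarFlow g S) (hS' : IsScalarFlow g' S') {z : ℝ}
    (h : ∀ s, β ((S s).symm z) = (S' (η s)).symm z) (s : ℝ) :
    flowConj hS hS' η β (s, z) = (η s, z) := by
  rw [flowConj_apply, h, OrderIso.apply_symm_apply]

theorem mapsTo_flowConj_strip (hS : IsScalarFlow g S) (hS' : IsScalarFlow g' S')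
    (ha : ∀ s, β ((S s).symm a) = (S' (η s)).symm a)
    (hb : ∀ s, β ((S s).symm b) = (S' (η s)).symm b) :
    MapsTo (flowConj hS hS' η β) (Prod.snd ⁻¹' Icc a b) (Prod.snd ⁻¹' Icc a b) := by
  rintro ⟨s, z⟩ ⟨hz, hz'⟩
  have hmono : Monotone fun z => (flowConj hS hS' η β (s, z)).2 := fun z z' hle => by
    exact (S' _).monotone (β.monotone ((S s).symm.monotone hle))
  constructor
  · simpa only [flowConj_apply_boundary hS hS' ha] using hmono hz
  · simpa only [flowConj_apply_boundary hS hS' hb] using hmono hz'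

end TrappingStrip

theorem isTrappingStrip_of_abs_le {r : ℝ → ℝ → ℝ} {a b k : ℝ} (ha : a < 0) (hb : 0 < b)
    (hk : 0 < k) (hr : ∀ s z, |r s z| ≤ k * min (-a) b / 4)
    (hr' : ∀ s z z', |r s z - r s z'| ≤ k / 2 * |z - z'|) :
    IsTrappingStrip (fun s z => -k * z + r s z) a b (k / 2) (k * min (-a) b / 2) := by
  have hpos : 0 < k * min (-a) b := mul_pos hk (lt_min (neg_pos.2 ha) hb)
  refine ⟨ha.trans hb, half_pos hk, half_pos hpos, fun s z z' hz => ?_, fun s z hz => ?_,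
    fun s z hz => ?_⟩
  · have := (abs_le.1 (hr' s z' z)).2
    rw [abs_of_nonneg (sub_nonneg.2 hz)] at this
    linarith
  · have := (abs_le.1 (hr s z)).2
    linarith [mul_le_mul_of_nonneg_left ((min_le_right (-a) b).trans hz) hk.le]
  · have := (abs_le.1 (hr s z)).1
    linarith [mul_le_mul_of_nonneg_left ((min_le_left (-a) b).trans (neg_le_neg hz)) hk.le]

/-! ### Sectors around an eigendirection -/

section Clamp

/-- The projection of the real line onto `[a, b]`. -/
def clamp (a b z : ℝ) : ℝ := max a (min z b)

variable {a b z : ℝ}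

theorem clamp_of_mem (hz : z ∈ Icc a b) : clamp a b z = z := by
  rw [clamp, min_eq_left hz.2, max_eq_right hz.1]

theorem clamp_mem (hab : a ≤ b) (z : ℝ) : clamp a b z ∈ Icc a b :=
  ⟨le_max_left _ _, max_le hab (min_le_right _ _)⟩

theorem lipschitzWith_clamp (a b : ℝ) : LipschitzWith 1 (clamp a b) :=
  (LipschitzWith.id.min_const b).const_max a

theorem abs_clamp_sub_clamp_le (a b z z' : ℝ) : |clamp a b z - clamp a b z'| ≤ |z - z'| := by
  simpa [Real.dist_eq] using (lipschitzWith_clamp a b).dist_le_mul z z'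

end Clamp

section SectorChart

/-- The sector between the rays through `(1, -1)` and `(1, m)`. -/
def sector (m : ℝ) : Set (ℝ × ℝ) := {p | 0 ≤ p.1 + p.2 ∧ p.2 ≤ m * p.1}

/-- Projective coordinates: `s` is the time the flow of `x' = μ x` takes to reach the abscissa
from `1`, and `z` is the slope. -/
def sectorChart (μ : ℝ) (c : ℝ × ℝ) : ℝ × ℝ :=
  (Real.exp (μ * c.1), Real.exp (μ * c.1) * c.2)

/-- The inverse of `sectorChart μ` on the half-plane of positive abscissae. -/
def sectorChartInv (μ : ℝ) (p : ℝ × ℝ) : ℝ × ℝ := (Real.log p.1 / μ, p.2 / p.1)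

variable {μ m : ℝ}

theorem isClosed_sector (m : ℝ) : IsClosed (sector m) :=
  (isClosed_le continuous_const (continuous_fst.add continuous_snd)).inter
    (isClosed_le continuous_snd (continuous_const.mul continuous_fst))

theorem fst_pos_of_mem_sector (hm : 0 < m) {p : ℝ × ℝ} (hp : p ∈ sector m) (h0 : p ≠ 0) :
    0 < p.1 := by
  obtain ⟨hlow, hup⟩ := hp
  refine lt_of_le_of_ne (by nlinarith) fun heq => h0 (Prod.ext heq.symm ?_)
  rw [← heq] at hlow hup
  exact le_antisymm (by simpa using hup) (by simpa using hlow)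

theorem sectorChart_sectorChartInv (hμ : μ ≠ 0) {p : ℝ × ℝ} (hp : 0 < p.1) :
    sectorChart μ (sectorChartInv μ p) = p := by
  simp only [sectorChart, sectorChartInv, mul_div_cancel₀ _ hμ, Real.exp_log hp,
    mul_div_cancel₀ _ hp.ne']

theorem sectorChartInv_sectorChart (hμ : μ ≠ 0) (c : ℝ × ℝ) :
    sectorChartInv μ (sectorChart μ c) = c := by
  simp only [sectorChart, sectorChartInv, Real.log_exp, mul_div_cancel_left₀ _ hμ,
    mul_div_cancel_left₀ _ (Real.exp_ne_zero _)]

theorem sectorChart_mem_sector {c : ℝ × ℝ} (hc : c.2 ∈ Icc (-1) m) :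
    sectorChart μ c ∈ sector m := by
  have hexp := Real.exp_pos (μ * c.1)
  constructor
  · simp only [sectorChart]
    nlinarith [hc.1]
  · simp only [sectorChart]
    rw [mul_comm m]
    exact mul_le_mul_of_nonneg_left hc.2 hexp.le

theorem sectorChart_ne_zero (c : ℝ × ℝ) : sectorChart μ c ≠ 0 := fun h =>
  Real.exp_ne_zero (μ * c.1) (congrArg Prod.fst h)

theorem continuous_sectorChart : Continuous (sectorChart μ) := by unfold sectorChart; fun_prop

theorem abs_le_add_one_of_mem_Icc (hm : 0 < m) {z : ℝ} (hz : z ∈ Icc (-1) m) : |z| ≤ m + 1 :=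
  abs_le.2 ⟨by linarith [hz.1], by linarith [hz.2]⟩

theorem norm_sectorChart_le (hm : 0 < m) {c : ℝ × ℝ} (hc : c.2 ∈ Icc (-1) m) :
    ‖sectorChart μ c‖ ≤ (m + 1) * Real.exp (μ * c.1) := by
  have hexp := Real.exp_pos (μ * c.1)
  simp only [sectorChart, Prod.norm_mk, norm_mul, Real.norm_eq_abs, Real.abs_exp]
  refine max_le (by nlinarith) ?_
  rw [mul_comm]
  exact mul_le_mul_of_nonneg_right (abs_le_add_one_of_mem_Icc hm hc) hexp.le

theorem isBlowUpChart_sectorChart (hμ : μ ≠ 0) (hm : 0 < m) :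
    IsBlowUpChart (sector m) (Prod.snd ⁻¹' Icc (-1) m) (sectorChart μ) (sectorChartInv μ)
      (fun c => μ * c.1) (m + 1) where
  zero_mem := by simp [sector]
  mapsTo c hc := ⟨sectorChart_mem_sector hc, sectorChart_ne_zero c⟩
  mapsTo_inv p hp := by
    have hpos := fst_pos_of_mem_sector hm hp.1 hp.2
    exact ⟨(le_div_iff₀ hpos).2 (by linarith [hp.1.1]), (div_le_iff₀ hpos).2 hp.1.2⟩
  invOn := ⟨fun c _ => sectorChartInv_sectorChart hμ c, fun _ hp =>
    sectorChart_sectorChartInv hμ (fst_pos_of_mem_sector hm hp.1 hp.2)⟩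
  continuous := continuous_sectorChart
  continuousAt_inv p hp h0 := by
    have hne := (fst_pos_of_mem_sector hm hp h0).ne'
    exact ((continuousAt_fst.log hne).div_const μ).prodMk
      (continuousAt_snd.div continuousAt_fst hne)
  pos := by linarith
  norm_le _ hc := norm_sectorChart_le hm hc
  exp_le c _ := by
    have hexp := norm_fst_le (sectorChart μ c)
    simp only [sectorChart, Real.norm_eq_abs, Real.abs_exp] at hexp ⊢
    nlinarith [Real.exp_pos (μ * c.1)]

end SectorChart

section SectorField

/-- The linear map of the plane with matrix `!![μ, 0; 0, ν]`. -/
def diagonalMap (μ ν : ℝ) : ℝ × ℝ →L[ℝ] ℝ × ℝ := matrixMap μ 0 0 ν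

theorem diagonalMap_apply (μ ν : ℝ) (p : ℝ × ℝ) : diagonalMap μ ν p = (μ * p.1, ν * p.2) := by
  simp [diagonalMap, matrixMap_apply]

/-- The point of `sector m` with projective coordinates `c`, the slope being clamped to `[-1, m]`
so that the quantities below are defined and bounded on the whole plane. -/
def sectorPoint (μ m : ℝ) (c : ℝ × ℝ) : ℝ × ℝ := sectorChart μ (c.1, clamp (-1) m c.2)

/-- The nonlinear part of `F` in projective coordinates, divided by the abscissa. -/
def sectorRemainder (μ ν m : ℝ) (F : ℝ × ℝ → ℝ × ℝ) (c : ℝ × ℝ) : ℝ × ℝ :=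
  Real.exp (-(μ * c.1)) • (F (sectorPoint μ m c) - diagonalMap μ ν (sectorPoint μ m c))

/-- The velocity of `F` along the first projective coordinate. -/
def sectorSpeed (μ ν m : ℝ) (F : ℝ × ℝ → ℝ × ℝ) (c : ℝ × ℝ) : ℝ :=
  1 + (sectorRemainder μ ν m F c).1 / μ

/-- `sectorSpeed` times the deviation of `sectorSlope` from its linear part. -/
def sectorForcing (μ ν m : ℝ) (F : ℝ × ℝ → ℝ × ℝ) (c : ℝ × ℝ) : ℝ :=
  (sectorRemainder μ ν m F c).2 - ν * clamp (-1) m c.2 * ((sectorRemainder μ ν m F c).1 / μ)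

/-- The slope of the orbits of `F` in projective coordinates. -/
def sectorSlope (μ ν m : ℝ) (F : ℝ × ℝ → ℝ × ℝ) (s z : ℝ) : ℝ :=
  -(μ - ν) * z + sectorForcing μ ν m F (s, z) / sectorSpeed μ ν m F (s, z)

/-- A Lipschitz constant of `F ↦ sectorSpeed μ ν m F` and `F ↦ sectorForcing μ ν m F`. -/
def sectorConst (μ ν m : ℝ) : ℝ := (m + 1) * (1 + |μ|⁻¹ + 2 * |ν| * (m + 1) * |μ|⁻¹)

variable {μ ν m δ : ℝ} {F : ℝ × ℝ → ℝ × ℝ}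

theorem abs_clamp_le (hm : 0 < m) (z : ℝ) : |clamp (-1) m z| ≤ m + 1 :=
  abs_le_add_one_of_mem_Icc hm (clamp_mem (by linarith) z)

theorem norm_sectorRemainder_le (hm : 0 < m) (hδ : 0 ≤ δ)
    (hF : IsPerturbation (diagonalMap μ ν) δ F) (c : ℝ × ℝ) :
    ‖sectorRemainder μ ν m F c‖ ≤ (m + 1) * δ := by
  have hpoint : ‖sectorPoint μ m c‖ ≤ (m + 1) * Real.exp (μ * c.1) :=
    norm_sectorChart_le hm (clamp_mem (by linarith) _)
  rw [sectorRemainder, norm_smul, Real.norm_of_nonneg (Real.exp_nonneg _)]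
  calc _ ≤ Real.exp (-(μ * c.1)) * (δ * ((m + 1) * Real.exp (μ * c.1))) := by
        gcongr
        exact (hF.norm_sub_apply_le _).trans (by gcongr)
    _ = (m + 1) * δ := by linear_combination δ * (m + 1) * exp_neg_mul_exp (μ * c.1)

theorem norm_sectorRemainder_sub_le (hδ : 0 ≤ δ) (hF : IsPerturbation (diagonalMap μ ν) δ F)
    (s z z' : ℝ) :
    ‖sectorRemainder μ ν m F (s, z) - sectorRemainder μ ν m F (s, z')‖ ≤ δ * |z - z'| := by
  have hpoint : ‖sectorPoint μ m (s, z) - sectorPoint μ m (s, z')‖ ≤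
      Real.exp (μ * s) * |z - z'| := by
    simp only [sectorPoint, sectorChart, Prod.mk_sub_mk, sub_self, ← mul_sub, Prod.norm_mk,
      norm_zero, norm_mul, Real.norm_eq_abs, Real.abs_exp]
    exact max_le (by positivity)
      (mul_le_mul_of_nonneg_left (abs_clamp_sub_clamp_le _ _ _ _) (Real.exp_nonneg _))
  simp only [sectorRemainder]
  rw [← smul_sub, norm_smul, Real.norm_of_nonneg (Real.exp_nonneg _)]
  calc _ ≤ Real.exp (-(μ * s)) * (δ * (Real.exp (μ * s) * |z - z'|)) := by
        gcongr
        exact (hF.norm_sub_le _ _).trans (by gcongr)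
    _ = δ * |z - z'| := by linear_combination δ * |z - z'| * exp_neg_mul_exp (μ * s)

theorem abs_sectorRemainder_fst_div_le (hm : 0 < m) (hδ : 0 ≤ δ)
    (hF : IsPerturbation (diagonalMap μ ν) δ F) (c : ℝ × ℝ) :
    |(sectorRemainder μ ν m F c).1 / μ| ≤ (m + 1) * δ * |μ|⁻¹ := by
  rw [abs_div, div_eq_mul_inv]
  gcongr
  exact (norm_fst_le _).trans (norm_sectorRemainder_le hm hδ hF c)

theorem abs_sectorRemainder_fst_div_sub_le (hδ : 0 ≤ δ)
    (hF : IsPerturbation (diagonalMap μ ν) δ F) (s z z' : ℝ) :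
    |(sectorRemainder μ ν m F (s, z)).1 / μ - (sectorRemainder μ ν m F (s, z')).1 / μ| ≤
      δ * |z - z'| * |μ|⁻¹ := by
  rw [← sub_div, abs_div, div_eq_mul_inv]
  gcongr
  exact (norm_fst_le (sectorRemainder μ ν m F (s, z) - sectorRemainder μ ν m F (s, z'))).trans
    (norm_sectorRemainder_sub_le hδ hF s z z')

theorem abs_sectorSpeed_sub_one_le (hm : 0 < m) (hδ : 0 ≤ δ)
    (hF : IsPerturbation (diagonalMap μ ν) δ F) (c : ℝ × ℝ) :
    |sectorSpeed μ ν m F c - 1| ≤ sectorConst μ ν m * δ := by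
  rw [sectorSpeed, add_sub_cancel_left, sectorConst]
  have : 0 ≤ (m + 1) * δ * (1 + 2 * |ν| * (m + 1) * |μ|⁻¹) := by positivity
  linarith [abs_sectorRemainder_fst_div_le hm hδ hF c]

theorem abs_sectorSpeed_sub_le (hm : 0 < m) (hδ : 0 ≤ δ)
    (hF : IsPerturbation (diagonalMap μ ν) δ F) (s z z' : ℝ) :
    |sectorSpeed μ ν m F (s, z) - sectorSpeed μ ν m F (s, z')| ≤
      sectorConst μ ν m * δ * |z - z'| := by
  rw [sectorSpeed, sectorSpeed, add_sub_add_left_eq_sub, sectorConst]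
  have : 0 ≤ δ * |z - z'| *
      (1 + 2 * |ν| * (m + 1) * |μ|⁻¹ + m * (1 + |μ|⁻¹ + 2 * |ν| * (m + 1) * |μ|⁻¹)) := by positivity
  linarith [abs_sectorRemainder_fst_div_sub_le (m := m) hδ hF s z z']

theorem abs_sectorForcing_le (hm : 0 < m) (hδ : 0 ≤ δ)
    (hF : IsPerturbation (diagonalMap μ ν) δ F) (c : ℝ × ℝ) :
    |sectorForcing μ ν m F c| ≤ sectorConst μ ν m * δ := by
  have hsnd : |(sectorRemainder μ ν m F c).2| ≤ (m + 1) * δ :=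
    (norm_snd_le _).trans (norm_sectorRemainder_le hm hδ hF c)
  have hfst : |ν * clamp (-1) m c.2 * ((sectorRemainder μ ν m F c).1 / μ)| ≤
      |ν| * (m + 1) * ((m + 1) * δ * |μ|⁻¹) := by
    rw [abs_mul, abs_mul]
    gcongr
    exacts [abs_clamp_le hm _, abs_sectorRemainder_fst_div_le hm hδ hF c]
  have : 0 ≤ (m + 1) * δ * (|μ|⁻¹ + |ν| * (m + 1) * |μ|⁻¹) := by positivity
  rw [sectorConst]
  exact (abs_sub _ _).trans (by linarith)

theorem abs_sectorForcing_sub_le (hm : 0 < m) (hδ : 0 ≤ δ)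
    (hF : IsPerturbation (diagonalMap μ ν) δ F) (s z z' : ℝ) :
    |sectorForcing μ ν m F (s, z) - sectorForcing μ ν m F (s, z')| ≤
      sectorConst μ ν m * δ * |z - z'| := by
  set h := sectorRemainder μ ν m F
  have hsnd : |(h (s, z)).2 - (h (s, z')).2| ≤ δ * |z - z'| :=
    (norm_snd_le (h (s, z) - h (s, z'))).trans (norm_sectorRemainder_sub_le hδ hF s z z')
  have hclamp : |ν * (clamp (-1) m z - clamp (-1) m z') * ((h (s, z)).1 / μ)| ≤
      |ν| * |z - z'| * ((m + 1) * δ * |μ|⁻¹) := by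
    rw [abs_mul, abs_mul]
    exact mul_le_mul
      (mul_le_mul_of_nonneg_left (abs_clamp_sub_clamp_le _ _ _ _) (abs_nonneg _))
      (abs_sectorRemainder_fst_div_le hm hδ hF _) (abs_nonneg _) (by positivity)
  have hfst : |ν * clamp (-1) m z' * ((h (s, z)).1 / μ - (h (s, z')).1 / μ)| ≤
      |ν| * (m + 1) * (δ * |z - z'| * |μ|⁻¹) := by
    rw [abs_mul, abs_mul]
    gcongr
    exacts [abs_clamp_le hm _, abs_sectorRemainder_fst_div_sub_le hδ hF s z z']
  have heq : sectorForcing μ ν m F (s, z) - sectorForcing μ ν m F (s, z') =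
      ((h (s, z)).2 - (h (s, z')).2)
        - (ν * (clamp (-1) m z - clamp (-1) m z') * ((h (s, z)).1 / μ)
          + ν * clamp (-1) m z' * ((h (s, z)).1 / μ - (h (s, z')).1 / μ)) := by
    simp only [sectorForcing, h]
    ring
  have : 0 ≤ δ * |z - z'| *
      (|μ|⁻¹ + m * (1 + |μ|⁻¹ + 2 * |ν| * (m + 1) * |μ|⁻¹)) := by positivity
  rw [heq, sectorConst]
  refine (abs_sub _ _).trans ?_
  linarith [abs_add_le (ν * (clamp (-1) m z - clamp (-1) m z') * ((h (s, z)).1 / μ))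
    (ν * clamp (-1) m z' * ((h (s, z)).1 / μ - (h (s, z')).1 / μ))]

theorem apply_sectorPoint (hμ : μ ≠ 0) (c : ℝ × ℝ) : F (sectorPoint μ m c) =
    Real.exp (μ * c.1) • ((μ * sectorSpeed μ ν m F c,
      ν * clamp (-1) m c.2 + (sectorRemainder μ ν m F c).2) : ℝ × ℝ) := by
  have hexp := exp_neg_mul_exp (μ * c.1)
  simp only [sectorSpeed, mul_add, mul_one, mul_div_cancel₀ _ hμ]
  simp only [sectorRemainder, diagonalMap_apply, Prod.smul_fst, Prod.smul_snd, Prod.fst_sub,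
    Prod.snd_sub, smul_eq_mul]
  ext
  · simp only [Prod.smul_fst, smul_eq_mul]
    have : (sectorPoint μ m c).1 = Real.exp (μ * c.1) := rfl
    linear_combination (μ * (sectorPoint μ m c).1 - (F (sectorPoint μ m c)).1) * hexp
      + μ * this
  · simp only [Prod.smul_snd, smul_eq_mul]
    have : (sectorPoint μ m c).2 = Real.exp (μ * c.1) * clamp (-1) m c.2 := rfl
    linear_combination (ν * (sectorPoint μ m c).2 - (F (sectorPoint μ m c)).2) * hexp
      + ν * this

theorem continuous_sectorPoint : Continuous (sectorPoint μ m) :=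
  continuous_sectorChart.comp
    (continuous_fst.prodMk ((lipschitzWith_clamp _ _).continuous.comp continuous_snd))

theorem continuous_sectorRemainder (hF : Continuous F) : Continuous (sectorRemainder μ ν m F) := by
  have := continuous_sectorPoint (μ := μ) (m := m)
  unfold sectorRemainder
  fun_prop

theorem continuous_sectorSpeed (hF : Continuous F) : Continuous (sectorSpeed μ ν m F) :=
  continuous_const.add ((continuous_fst.comp (continuous_sectorRemainder hF)).div_const μ)

theorem continuous_sectorForcing (hF : Continuous F) : Continuous (sectorForcing μ ν m F) := by
  have hrem := continuous_sectorRemainder (μ := μ) (ν := ν) (m := m) hF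
  have hclamp := (lipschitzWith_clamp (-1) m).continuous
  exact (continuous_snd.comp hrem).sub ((continuous_const.mul (hclamp.comp continuous_snd)).mul
    ((continuous_fst.comp hrem).div_const μ))

end SectorField

section SectorStraightening

variable {μ ν m δ : ℝ} {F : ℝ × ℝ → ℝ × ℝ}

theorem sectorSpeed_mem_Icc (hm : 0 < m) (hδ : 0 ≤ δ) (hF : IsPerturbation (diagonalMap μ ν) δ F)
    (hsmall : sectorConst μ ν m * δ ≤ 1 / 2) (c : ℝ × ℝ) :
    sectorSpeed μ ν m F c ∈ Icc (1 / 2) (3 / 2) := by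
  obtain ⟨hlo, hhi⟩ := abs_le.1 ((abs_sectorSpeed_sub_one_le hm hδ hF c).trans hsmall)
  exact ⟨by linarith, by linarith⟩

theorem abs_sectorForcing_div_sectorSpeed_le (hm : 0 < m) (hδ : 0 ≤ δ)
    (hF : IsPerturbation (diagonalMap μ ν) δ F) (hsmall : sectorConst μ ν m * δ ≤ 1 / 2)
    (c : ℝ × ℝ) :
    |sectorForcing μ ν m F c / sectorSpeed μ ν m F c| ≤ 2 * (sectorConst μ ν m * δ) := by
  have hlo := (sectorSpeed_mem_Icc hm hδ hF hsmall c).1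
  have hpos : 0 < sectorSpeed μ ν m F c := by linarith
  have hforcing := abs_sectorForcing_le hm hδ hF c
  rw [abs_div, abs_of_pos hpos, div_le_iff₀ hpos]
  nlinarith [abs_nonneg (sectorForcing μ ν m F c)]

theorem abs_sectorForcing_div_sectorSpeed_sub_le (hm : 0 < m) (hδ : 0 ≤ δ)
    (hF : IsPerturbation (diagonalMap μ ν) δ F) (hsmall : sectorConst μ ν m * δ ≤ 1 / 2)
    (s z z' : ℝ) :
    |sectorForcing μ ν m F (s, z) / sectorSpeed μ ν m F (s, z)
        - sectorForcing μ ν m F (s, z') / sectorSpeed μ ν m F (s, z')| ≤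
      8 * (sectorConst μ ν m * δ) * |z - z'| := by
  have hspeed (z : ℝ) := sectorSpeed_mem_Icc hm hδ hF hsmall (s, z)
  refine (abs_div_sub_div_le one_half_pos (hspeed z).1 (hspeed z').1
    ((abs_sectorForcing_le hm hδ hF _).trans hsmall) (hspeed z).2
    (abs_sectorForcing_sub_le hm hδ hF s z z')
    (abs_sectorSpeed_sub_le hm hδ hF s z z')).trans_eq ?_
  ring

theorem sectorSpeed_mul_sectorSlope {s z : ℝ} (hw : sectorSpeed μ ν m F (s, z) ≠ 0)
    (hz : z ∈ Icc (-1) m) : sectorSpeed μ ν m F (s, z) * sectorSlope μ ν m F s z =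
      ν * z + (sectorRemainder μ ν m F (s, z)).2 - μ * sectorSpeed μ ν m F (s, z) * z := by
  rw [sectorSlope, mul_add, mul_div_cancel₀ _ hw, sectorForcing, clamp_of_mem hz, sectorSpeed]
  ring

theorem apply_sectorChart (hμ : μ ≠ 0) {s z : ℝ} (hz : z ∈ Icc (-1) m) :
    F (sectorChart μ (s, z)) = Real.exp (μ * s) •
      ((μ * sectorSpeed μ ν m F (s, z), ν * z + (sectorRemainder μ ν m F (s, z)).2) : ℝ × ℝ) := by
  simpa only [sectorPoint, clamp_of_mem hz] using apply_sectorPoint (ν := ν) (m := m) hμ (s, z)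

theorem apply_of_mem_sector (hμ : μ ≠ 0) (hm : 0 < m) {p : ℝ × ℝ} (hp : p ∈ sector m)
    (h0 : p ≠ 0) : F p = p.1 • ((μ * sectorSpeed μ ν m F (sectorChartInv μ p),
      ν * (p.2 / p.1) + (sectorRemainder μ ν m F (sectorChartInv μ p)).2) : ℝ × ℝ) := by
  have hpos := fst_pos_of_mem_sector hm hp h0
  have := apply_sectorChart (F := F) (ν := ν) hμ (s := Real.log p.1 / μ)
    ((isBlowUpChart_sectorChart hμ hm).mapsTo_inv ⟨hp, h0⟩)
  rwa [mul_div_cancel₀ _ hμ, Real.exp_log hpos,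
    show sectorChart μ (Real.log p.1 / μ, (sectorChartInv μ p).2) = p from
      sectorChart_sectorChartInv hμ hpos] at this

theorem hasDerivAt_sectorChartInv_fst (hμ : μ ≠ 0) (hm : 0 < m) {γ : ℝ → ℝ × ℝ} {t : ℝ}
    (hγ : HasDerivAt γ (F (γ t)) t) (hsec : γ t ∈ sector m) (h0 : γ t ≠ 0) :
    HasDerivAt (fun t => (sectorChartInv μ (γ t)).1)
      (sectorSpeed μ ν m F (sectorChartInv μ (γ t))) t := by
  have hne := (fst_pos_of_mem_sector hm hsec h0).ne'
  have hfst : HasDerivAt (fun t => (γ t).1) (F (γ t)).1 t := hγ.fst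
  refine ((hfst.log hne).div_const μ).congr_deriv ?_
  rw [apply_of_mem_sector (F := F) (ν := ν) hμ hm hsec h0, Prod.smul_fst, smul_eq_mul,
    mul_div_cancel_left₀ _ hne, mul_div_cancel_left₀ _ hμ]

theorem hasDerivAt_sectorChartInv_snd (hμ : μ ≠ 0) (hm : 0 < m) {γ : ℝ → ℝ × ℝ} {t : ℝ}
    (hw : sectorSpeed μ ν m F (sectorChartInv μ (γ t)) ≠ 0)
    (hγ : HasDerivAt γ (F (γ t)) t) (hsec : γ t ∈ sector m) (h0 : γ t ≠ 0) :
    HasDerivAt (fun t => (sectorChartInv μ (γ t)).2)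
      (sectorSpeed μ ν m F (sectorChartInv μ (γ t)) *
        sectorSlope μ ν m F (sectorChartInv μ (γ t)).1 (sectorChartInv μ (γ t)).2) t := by
  have hne := (fst_pos_of_mem_sector hm hsec h0).ne'
  have hfst : HasDerivAt (fun t => (γ t).1) (F (γ t)).1 t := hγ.fst
  have hsnd : HasDerivAt (fun t => (γ t).2) (F (γ t)).2 t := hγ.snd
  refine (hsnd.div hfst hne).congr_deriv ?_
  have hslope := sectorSpeed_mul_sectorSlope hw
    ((isBlowUpChart_sectorChart hμ hm).mapsTo_inv ⟨hsec, h0⟩)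
  rw [apply_of_mem_sector (F := F) (ν := ν) hμ hm hsec h0, Prod.smul_fst, Prod.smul_snd,
    smul_eq_mul, smul_eq_mul]
  refine Eq.trans ?_ hslope.symm
  simp only [sectorChartInv]
  field_simp

theorem hasDerivAt_sectorChart (hμ : μ ≠ 0) {ζ : ℝ → ℝ} {s : ℝ}
    (hw : sectorSpeed μ ν m F (s, ζ s) ≠ 0) (hz : ζ s ∈ Icc (-1) m)
    (hζ : HasDerivAt ζ (sectorSlope μ ν m F s (ζ s)) s) :
    HasDerivAt (fun s => sectorChart μ (s, ζ s))
      ((1 / sectorSpeed μ ν m F (s, ζ s)) • F (sectorChart μ (s, ζ s))) s := by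
  have hexp : HasDerivAt (fun s => Real.exp (μ * s)) (Real.exp (μ * s) * μ) s := by
    simpa using ((hasDerivAt_id s).const_mul μ).exp
  refine (hexp.prodMk (hexp.mul hζ)).congr_deriv ?_
  have hslope := sectorSpeed_mul_sectorSlope hw hz
  rw [apply_sectorChart (F := F) (ν := ν) hμ hz]
  ext
  · simp only [Prod.smul_fst, smul_eq_mul]
    field_simp
  · simp only [Prod.smul_snd, smul_eq_mul]
    field_simp
    linear_combination hslope

theorem straightensTo_sectorSlope (hμ : μ ≠ 0) (hm : 0 < m) (hδ : 0 ≤ δ)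
    (hF : IsPerturbation (diagonalMap μ ν) δ F) (hsmall : sectorConst μ ν m * δ ≤ 1 / 2) :
    StraightensTo (sector m) (Prod.snd ⁻¹' Icc (-1) m) (sectorChart μ) (sectorChartInv μ) F
      (sectorSpeed μ ν m F) (sectorSlope μ ν m F) := by
  have hspeed := sectorSpeed_mem_Icc hm hδ hF hsmall
  have hne (c : ℝ × ℝ) : sectorSpeed μ ν m F c ≠ 0 := (one_half_pos.trans_le (hspeed c).1).ne'
  exact ⟨fun _ _ => hasDerivAt_sectorChartInv_fst hμ hm,
    fun _ _ => hasDerivAt_sectorChartInv_snd hμ hm (hne _),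
    fun _ _ => hasDerivAt_sectorChart hμ (hne _),
    continuous_sectorSpeed hF.isLipschitzField.continuous,
    ⟨1 / 2, one_half_pos, fun c => (hspeed c).1⟩, 3 / 2, fun c => (hspeed c).2⟩

theorem exists_isScalarFlow_sectorSlope (hνμ : ν < μ) (hm : 0 < m) (hδ : 0 ≤ δ)
    (hF : IsPerturbation (diagonalMap μ ν) δ F) (hsmall : sectorConst μ ν m * δ ≤ 1 / 2) :
    ∃ S, IsScalarFlow (sectorSlope μ ν m F) S := by
  have hcont := hF.isLipschitzField.continuous
  have hne (c : ℝ × ℝ) : sectorSpeed μ ν m F c ≠ 0 :=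
    (one_half_pos.trans_le (sectorSpeed_mem_Icc hm hδ hF hsmall c).1).ne'
  refine exists_isScalarFlow
    (K := (μ - ν + 8 * (sectorConst μ ν m * δ)).toNNReal) (fun s => ?_) fun z => ?_
  · refine LipschitzWith.of_dist_le' fun z z' => ?_
    rw [Real.dist_eq, Real.dist_eq, sectorSlope, sectorSlope, add_sub_add_comm, ← mul_sub, add_mul]
    refine (abs_add_le _ _).trans (add_le_add ?_
      (abs_sectorForcing_div_sectorSpeed_sub_le hm hδ hF hsmall s z z'))
    rw [abs_mul, abs_neg, abs_of_pos (sub_pos.2 hνμ)]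
  · exact continuous_const.add (((continuous_sectorForcing hcont).div
      (continuous_sectorSpeed hcont) hne).comp (.prodMk_left z))

theorem isTrappingStrip_sectorSlope (hνμ : ν < μ) (hm : 0 < m) (hδ : 0 ≤ δ)
    (hF : IsPerturbation (diagonalMap μ ν) δ F) (hsmall : sectorConst μ ν m * δ ≤ 1 / 2)
    (hsub : 8 * (sectorConst μ ν m * δ) ≤ (μ - ν) / 2)
    (hle : 2 * (sectorConst μ ν m * δ) ≤ (μ - ν) * min 1 m / 4) :
    IsTrappingStrip (sectorSlope μ ν m F) (-1) m ((μ - ν) / 2) ((μ - ν) * min 1 m / 2) := by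
  have := isTrappingStrip_of_abs_le neg_one_lt_zero hm (sub_pos.2 hνμ)
    (r := fun s z => sectorForcing μ ν m F (s, z) / sectorSpeed μ ν m F (s, z))
    (fun s z => by
      rw [neg_neg]
      exact (abs_sectorForcing_div_sectorSpeed_le hm hδ hF hsmall (s, z)).trans hle)
    fun s z z' => (abs_sectorForcing_div_sectorSpeed_sub_le hm hδ hF hsmall s z z').trans
      (mul_le_mul_of_nonneg_right hsub (abs_nonneg _))
  rwa [neg_neg] at this

end SectorStraightening

section SectorEquiv

/-- An orbit equivalence from `F` to `F'` on `sector m` which acts by `h` on both boundary rays in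
logarithmic coordinates. -/
def SectorEquiv (m : ℝ) (F F' : ℝ × ℝ → ℝ × ℝ) (h : ℝ → ℝ) : Prop :=
  ∃ H Hi, IsOrbitEquiv F F' (sector m) H Hi ∧ H 0 = 0 ∧
    (∀ s, H (Real.exp s • (1, -1)) = Real.exp (h s) • (1, -1)) ∧
    ∀ s, H (Real.exp s • (1, m)) = Real.exp (h s) • (1, m)

variable {μ ν m δ : ℝ} {F F' : ℝ × ℝ → ℝ × ℝ}

theorem exists_orderIso_mul_apply (hμ : μ ≠ 0) (h : ℝ ≃o ℝ) :
    ∃ η : ℝ ≃o ℝ, ∀ s, μ * η s = h (μ * s) := by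
  have hmono : StrictMono fun s => h (μ * s) / μ := fun s s' hlt => by
    rcases lt_or_gt_of_ne hμ with hneg | hpos
    · exact div_lt_div_of_neg_of_lt hneg (h.strictMono (mul_lt_mul_of_neg_left hlt hneg))
    · exact div_lt_div_of_pos_right (h.strictMono (mul_lt_mul_of_pos_left hlt hpos)) hpos
  refine ⟨hmono.orderIsoOfRightInverse _ (fun s => h.symm (μ * s) / μ) fun s => ?_, fun s => ?_⟩
  · simp only [mul_div_cancel₀ _ hμ, OrderIso.apply_symm_apply, mul_div_cancel_left₀ _ hμ]
  · exact mul_div_cancel₀ _ hμ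

theorem smul_one_prod (r z : ℝ) : r • ((1, z) : ℝ × ℝ) = (r, r * z) := by simp

theorem chartMap_sectorChart_of_boundary (hμ : μ ≠ 0) {K : ℝ × ℝ → ℝ × ℝ} {η h : ℝ → ℝ} {z : ℝ}
    (hη : ∀ s, μ * η s = h (μ * s)) (hK : ∀ s, K (s, z) = (η s, z)) (s : ℝ) :
    chartMap (sectorChart μ) (sectorChartInv μ) K (Real.exp s • (1, z)) =
      Real.exp (h s) • (1, z) := by
  have hchart (s : ℝ) : Real.exp s • (1, z) = sectorChart μ (s / μ, z) := by
    rw [smul_one_prod, sectorChart, mul_div_cancel₀ _ hμ]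
  rw [hchart, chartMap_of_ne (sectorChart_ne_zero _), sectorChartInv_sectorChart hμ, hK,
    smul_one_prod, sectorChart, hη, mul_div_cancel₀ _ hμ]

/-- In the sector chart the orbits of both fields solve equations for which `[-1, m]` is a trapping
strip, so the correspondence of their boundary points extends to a conjugacy of the strips. -/
theorem sectorEquiv_of_small (hμ : μ ≠ 0) (hνμ : ν < μ) (hm : 0 < m) (hδ : 0 ≤ δ)
    (hsmall : sectorConst μ ν m * δ ≤ 1 / 2)
    (hsub : 8 * (sectorConst μ ν m * δ) ≤ (μ - ν) / 2)
    (hle : 2 * (sectorConst μ ν m * δ) ≤ (μ - ν) * min 1 m / 4)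
    (hF : IsPerturbation (diagonalMap μ ν) δ F) (hF' : IsPerturbation (diagonalMap μ ν) δ F')
    (h : ℝ ≃o ℝ) : SectorEquiv m F F' h := by
  obtain ⟨S, hS⟩ := exists_isScalarFlow_sectorSlope hνμ hm hδ hF hsmall
  obtain ⟨S', hS'⟩ := exists_isScalarFlow_sectorSlope hνμ hm hδ hF' hsmall
  obtain ⟨η, hη⟩ := exists_orderIso_mul_apply hμ h
  have hη_symm (s : ℝ) : μ * η.symm s = h.symm (μ * s) := by
    rw [h.eq_symm_apply, ← hη, OrderIso.apply_symm_apply]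
  obtain ⟨β, hlow, hup⟩ :=
    (isTrappingStrip_sectorSlope hνμ hm hδ hF hsmall hsub hle).exists_orderIso_apply_symm_apply hS
      (isTrappingStrip_sectorSlope hνμ hm hδ hF' hsmall hsub hle) hS' η
  have hsymm {z : ℝ} (hz : ∀ s, β ((S s).symm z) = (S' (η s)).symm z) (s : ℝ) :
      β.symm ((S' s).symm z) = (S (η.symm s)).symm z := by
    rw [β.symm_apply_eq, hz, OrderIso.apply_symm_apply]
  refine ⟨_, _, StraightensTo.isOrbitEquiv_chartMap (isBlowUpChart_sectorChart hμ hm)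
    (straightensTo_sectorSlope hμ hm hδ hF hsmall)
    (straightensTo_sectorSlope hμ hm hδ hF' hsmall) hS hS' hF.isLipschitzField
    hF'.isLipschitzField (mapsTo_flowConj_strip hS hS' hlow hup)
    (mapsTo_flowConj_strip hS' hS (hsymm hlow) (hsymm hup))
    (fun M => ⟨h.symm M, fun c _ hc => ?_⟩) (fun M => ⟨h M, fun c _ hc => ?_⟩), chartMap_zero,
    chartMap_sectorChart_of_boundary hμ hη (flowConj_apply_boundary hS hS' hlow),
    chartMap_sectorChart_of_boundary hμ hη (flowConj_apply_boundary hS hS' hup)⟩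
  · change μ * η c.1 ≤ M
    rwa [hη, ← h.le_symm_apply]
  · change μ * η.symm c.1 ≤ M
    rwa [hη_symm, h.symm_apply_le]

theorem exists_pos_forall_sectorEquiv (hμ : μ ≠ 0) (hνμ : ν < μ) (hm : 0 < m) :
    ∃ δ > 0, ∀ F F', IsPerturbation (diagonalMap μ ν) δ F →
      IsPerturbation (diagonalMap μ ν) δ F' → ∀ h : ℝ ≃o ℝ, SectorEquiv m F F' h := by
  have := sub_pos.2 hνμ
  have hC : 0 < sectorConst μ ν m := by unfold sectorConst; positivity
  set ρ := min (1 / 2) (min ((μ - ν) / 16) ((μ - ν) * min 1 m / 8))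
  have hpos : 0 < ρ := by positivity
  have hCρ : sectorConst μ ν m * (ρ / sectorConst μ ν m) = ρ := mul_div_cancel₀ _ hC.ne'
  have h₁ : ρ ≤ 1 / 2 := min_le_left _ _
  have h₂ : ρ ≤ (μ - ν) / 16 := (min_le_right _ _).trans (min_le_left _ _)
  have h₃ : ρ ≤ (μ - ν) * min 1 m / 8 := (min_le_right _ _).trans (min_le_right _ _)
  exact ⟨ρ / sectorConst μ ν m, div_pos hpos hC, fun F F' hF hF' =>
    sectorEquiv_of_small hμ hνμ hm (div_pos hpos hC).le (by rwa [hCρ]) (by rw [hCρ]; linarith)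
      (by rw [hCρ]; linarith) hF hF'⟩

end SectorEquiv

/-! ### Half planes containing an eigendirection -/

section Crossing

theorem nonpos_of_hasDerivAt_neg {φ φ' : ℝ → ℝ} {a b : ℝ} (hd : ∀ t, HasDerivAt φ (φ' t) t)
    (hφ' : ∀ t ∈ Icc a b, φ t = 0 → φ' t < 0) (hab : a ≤ b) (ha : φ a ≤ 0) : φ b ≤ 0 :=
  image_le_of_deriv_right_lt_deriv_boundary
    (fun t _ => (hd t).continuousAt.continuousWithinAt) (fun t _ => (hd t).hasDerivWithinAt)
    ha (fun t => hasDerivAt_const t 0) (fun t ht h0 => hφ' t (Ico_subset_Icc_self ht) h0)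
    ⟨hab, le_rfl⟩

theorem nonneg_of_hasDerivAt_neg {φ φ' : ℝ → ℝ} {a b : ℝ} (hd : ∀ t, HasDerivAt φ (φ' t) t)
    (hφ' : ∀ t ∈ Icc a b, φ t = 0 → φ' t < 0) (hab : a ≤ b) (hb : 0 ≤ φ b) : 0 ≤ φ a := by
  have hrev (t : ℝ) : HasDerivAt (fun t => -φ (-t)) (φ' (-t)) t :=
    ((hd (-t)).comp t (hasDerivAt_neg t)).neg.congr_deriv (by simp)
  have := nonpos_of_hasDerivAt_neg hrev (a := -b) (b := -a)
    (fun t ht h0 => hφ' _ ⟨by linarith [ht.2], by linarith [ht.1]⟩ (neg_eq_zero.1 h0))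
    (neg_le_neg hab) (by simpa using hb)
  simpa using this

variable {E : Type*} [NormedAddCommGroup E] [NormedSpace ℝ E] {F : E → E}

theorem crossesOnce_of_map_neg (hF : IsLipschitzField F) (ℓ : E →L[ℝ] ℝ) {T : Set E}
    (hℓ : ∀ x ∈ T, x ≠ 0 → ℓ x = 0 → ℓ (F x) < 0) :
    CrossesOnce F (T ∩ {x | 0 ≤ ℓ x}) (T ∩ {x | ℓ x ≤ 0}) := by
  intro γ I hγ hI hS
  have hT (t : ℝ) (ht : t ∈ I) : γ t ∈ T := (hS ht).elim And.left And.left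
  by_cases h0 : ∃ t ∈ I, γ t = 0
  · obtain ⟨t₀, -, h0⟩ := h0
    refine Or.inl fun t ht => ⟨hT t ht, ?_⟩
    simp [hF.eq_zero_of_isIntegralCurve hγ h0]
  push Not at h0
  have hd (t : ℝ) : HasDerivAt (fun t => ℓ (γ t)) (ℓ (F (γ t))) t :=
    ℓ.hasFDerivAt.comp_hasDerivAt t (hγ t)
  have hneg {a b : ℝ} (ha : a ∈ I) (hb : b ∈ I) (t : ℝ) (ht : t ∈ Icc a b) :
      ℓ (γ t) = 0 → ℓ (F (γ t)) < 0 := hℓ _ (hT t (hI.out ha hb ht)) (h0 t (hI.out ha hb ht))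
  by_cases hzero : ∃ c ∈ I, ℓ (γ c) = 0
  · obtain ⟨c, hc, hc0⟩ := hzero
    refine Or.inr (Or.inr ⟨c, hc, fun t ht => ⟨hT t ht.1, ?_⟩, fun t ht => ⟨hT t ht.1, ?_⟩⟩)
    · exact nonneg_of_hasDerivAt_neg hd (hneg ht.1 hc) ht.2 hc0.ge
    · exact nonpos_of_hasDerivAt_neg hd (hneg hc ht.1) ht.2 hc0.le
  · by_cases hpos : ∀ t ∈ I, 0 ≤ ℓ (γ t)
    · exact Or.inl fun t ht => ⟨hT t ht, hpos t ht⟩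
    · push Not at hpos
      obtain ⟨t₀, ht₀, hlt⟩ := hpos
      refine Or.inr (Or.inl fun t ht => ⟨hT t ht, ?_⟩)
      by_contra hgt
      exact hzero (hI.isPreconnected.intermediate_value ht₀ ht
        (fun t _ => (hd t).continuousAt.continuousWithinAt) ⟨hlt.le, (not_le.1 hgt).le⟩)

end Crossing

section ObliqueHalfPlane

/-- The half plane `p.1 + p.2 ≥ 0`, which contains one half of each coordinate axis in its
interior. -/
def obliqueHalfPlane : Set (ℝ × ℝ) := {p | 0 ≤ p.1 + p.2}

/-- The part of the half plane `p.1 + p.2 ≥ 0` left over by `sector m`. -/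
def coSector (m : ℝ) : Set (ℝ × ℝ) := {p | 0 ≤ p.1 + p.2 ∧ m * p.1 ≤ p.2}

/-- The reflection exchanging the coordinates. -/
def swap : (ℝ × ℝ) ≃L[ℝ] (ℝ × ℝ) := ContinuousLinearEquiv.prodComm ℝ ℝ ℝ

/-- An orbit equivalence from `F` to `F'` on `coSector (exp d)`; in logarithmic coordinates it acts
by `h` on the boundary ray through `(-1, 1)` and by `s ↦ h (s + d) - d` on the other one. -/
def CoSectorEquiv (d : ℝ) (F F' : ℝ × ℝ → ℝ × ℝ) (h : ℝ → ℝ) : Prop :=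
  ∃ H Hi, IsOrbitEquiv F F' (coSector (Real.exp d)) H Hi ∧ H 0 = 0 ∧
    (∀ s, H (Real.exp s • (-1, 1)) = Real.exp (h s) • (-1, 1)) ∧
    ∀ s, H (Real.exp s • (1, Real.exp d)) = Real.exp (h (s + d) - d) • (1, Real.exp d)



variable {μ ν m δ d : ℝ} {F F' : ℝ × ℝ → ℝ × ℝ}

theorem swap_apply (p : ℝ × ℝ) : swap p = (p.2, p.1) := rfl

theorem swap_symm_apply (p : ℝ × ℝ) : swap.symm p = (p.2, p.1) := rfl

theorem swap_preimage_sector_inv (hm : 0 < m) : swap ⁻¹' sector m⁻¹ = coSector m := by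
  ext p
  simp only [mem_preimage, swap_apply, sector, coSector, mem_ofPred_eq, inv_mul_eq_div,
    le_div_iff₀ hm, add_comm p.2, mul_comm p.1]

theorem swap_comp_neg_diagonalMap_comp_swap :
    (swap : ℝ × ℝ →L[ℝ] ℝ × ℝ) ∘L (-diagonalMap μ ν) ∘L (swap.symm : ℝ × ℝ →L[ℝ] ℝ × ℝ) =
      diagonalMap (-ν) (-μ) := by
  ext <;> simp [diagonalMap_apply, swap_apply, swap_symm_apply]

theorem isClosed_coSector (m : ℝ) : IsClosed (coSector m) :=
  (isClosed_le continuous_const (continuous_fst.add continuous_snd)).inter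
    (isClosed_le (continuous_const.mul continuous_fst) continuous_snd)

theorem coSector_union_sector (m : ℝ) : coSector m ∪ sector m = obliqueHalfPlane := by
  ext p
  simp only [coSector, sector, obliqueHalfPlane, mem_union, mem_ofPred_eq, ← and_or_left,
    le_total, and_true]

theorem coSector_inter_sector (hm : 0 < m) :
    coSector m ∩ sector m = insert 0 (range fun s => Real.exp s • (1, m)) := by
  ext p
  constructor
  · rintro ⟨hco, hsec⟩
    refine or_iff_not_imp_left.2 fun h0 => ⟨Real.log p.1, ?_⟩
    have hp := fst_pos_of_mem_sector hm hsec h0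
    simp only [smul_one_prod, Real.exp_log hp, mul_comm p.1, hco.2.antisymm hsec.2]
  · rintro (rfl | ⟨s, rfl⟩)
    · simp [coSector, sector]
    · have hs := Real.exp_pos s
      have hsm := mul_pos hs hm
      simp only [smul_one_prod, coSector, sector, mul_comm m, mem_inter_iff, mem_ofPred_eq, le_rfl,
        and_true, and_self]
      linarith

theorem coSectorEquiv_of_sectorEquiv {h : ℝ → ℝ}
    (hE : SectorEquiv (Real.exp d)⁻¹ (conj swap fun x => -F x) (conj swap fun x => -F' x) h) :
    CoSectorEquiv d F F' h := by
  obtain ⟨H, Hi, hequiv, hzero, hlow, hup⟩ := hE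
  have hequiv' := (hequiv.of_conj swap).of_neg
  rw [swap_preimage_sector_inv (Real.exp_pos d)] at hequiv'
  have hray (s : ℝ) :
      swap (Real.exp s • (1, Real.exp d)) = Real.exp (s + d) • (1, (Real.exp d)⁻¹) := by
    simp [swap_apply, Real.exp_add]
  have hray' (s : ℝ) :
      swap.symm (Real.exp s • (1, (Real.exp d)⁻¹)) = Real.exp (s - d) • (1, Real.exp d) := by
    simp [swap_symm_apply, Real.exp_sub, div_eq_mul_inv]
  refine ⟨_, _, hequiv', by simp [hzero], fun s => ?_, fun s => ?_⟩
  · have hswap (r : ℝ) : swap (Real.exp r • (-1, 1)) = Real.exp r • (1, -1) := by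
      simp [swap_apply]
    rw [Function.comp_apply, Function.comp_apply, hswap, hlow, ← hswap, swap.symm_apply_apply]
  · rw [Function.comp_apply, Function.comp_apply, hray, hup, hray']

theorem exists_pos_forall_coSectorEquiv (hν : ν ≠ 0) (hνμ : ν < μ) (d : ℝ) :
    ∃ δ > 0, ∀ F F', IsPerturbation (diagonalMap μ ν) δ F →
      IsPerturbation (diagonalMap μ ν) δ F' → ∀ h : ℝ ≃o ℝ, CoSectorEquiv d F F' h := by
  obtain ⟨ε, hε, hsector⟩ := exists_pos_forall_sectorEquiv (μ := -ν) (ν := -μ) (neg_ne_zero.2 hν)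
    (neg_lt_neg hνμ) (inv_pos.2 (Real.exp_pos d))
  obtain ⟨δ, hδ, hconj⟩ := IsPerturbation.exists_pos_forall_conj (-diagonalMap μ ν) swap hε
  rw [swap_comp_neg_diagonalMap_comp_swap] at hconj
  exact ⟨δ, hδ, fun F F' hF hF' h =>
    coSectorEquiv_of_sectorEquiv (hsector _ _ (hconj _ hF.neg) (hconj _ hF'.neg) h)⟩

theorem snd_sub_mul_fst_neg (hm : 0 < m) (hνμ : ν < μ) (hδ : 0 ≤ δ)
    (hsmall : (1 + m) * (1 + m) * δ ≤ m * (μ - ν) / 2)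
    (hF : IsPerturbation (diagonalMap μ ν) δ F) {p : ℝ × ℝ} (hp : 0 < p.1)
    (hpm : p.2 = m * p.1) : (F p).2 - m * (F p).1 < 0 := by
  have hnorm : ‖p‖ ≤ (1 + m) * p.1 := by
    rw [Prod.norm_def, Real.norm_of_nonneg hp.le, hpm, Real.norm_of_nonneg (by positivity)]
    exact max_le (by nlinarith) (by nlinarith)
  have herr := (hF.norm_sub_apply_le p).trans (mul_le_mul_of_nonneg_left hnorm hδ)
  rw [diagonalMap_apply, hpm] at herr
  have hfst := neg_le_of_abs_le ((norm_fst_le _).trans herr)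
  have hsnd := le_of_abs_le ((norm_snd_le _).trans herr)
  simp only [Prod.fst_sub, Prod.snd_sub] at hfst hsnd
  have hgap : 0 < m * (μ - ν) / 2 * p.1 := by have := sub_pos.2 hνμ; positivity
  linarith [mul_le_mul_of_nonneg_left hfst hm.le, mul_le_mul_of_nonneg_right hsmall hp.le]

theorem crossesOnce_coSector_sector (hm : 0 < m) (hνμ : ν < μ) (hδ : 0 ≤ δ)
    (hsmall : (1 + m) * (1 + m) * δ ≤ m * (μ - ν) / 2)
    (hF : IsPerturbation (diagonalMap μ ν) δ F) : CrossesOnce F (coSector m) (sector m) := by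
  have := crossesOnce_of_map_neg hF.isLipschitzField (T := obliqueHalfPlane)
    (ContinuousLinearMap.snd ℝ ℝ ℝ - m • ContinuousLinearMap.fst ℝ ℝ ℝ) fun p hp h0 hzero => by
      have hpm : p.2 = m * p.1 := sub_eq_zero.1 hzero
      exact snd_sub_mul_fst_neg hm hνμ hδ hsmall hF
        (fst_pos_of_mem_sector hm ⟨hp, hpm.le⟩ h0) hpm
  simpa [obliqueHalfPlane, ← ofPred_and, coSector, sector] using this

theorem halfPlaneEquiv_of_coSectorEquiv (hF : IsLipschitzField F) (hF' : IsLipschitzField F')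
    (hcross : CrossesOnce F (coSector (Real.exp d)) (sector (Real.exp d)))
    (hcross' : CrossesOnce F' (coSector (Real.exp d)) (sector (Real.exp d))) {hR hL : ℝ ≃o ℝ}
    (hRL : ∀ s, hL (s + d) = hR s + d) (hco : CoSectorEquiv d F F' hL)
    (hsec : SectorEquiv (Real.exp d) F F' hR) :
    HalfPlaneEquiv obliqueHalfPlane (1, -1) F F' hR hL := by
  obtain ⟨H₁, Hi₁, hequiv₁, hzero₁, hleft, hray₁⟩ := hco
  obtain ⟨H₂, Hi₂, hequiv₂, hzero₂, hright, hray₂⟩ := hsec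
  simp only [hRL, add_sub_cancel_right] at hray₁
  have hinter := coSector_inter_sector (Real.exp_pos d)
  have heq : EqOn H₁ H₂ (coSector (Real.exp d) ∩ sector (Real.exp d)) := by
    rw [hinter]
    rintro _ (rfl | ⟨s, rfl⟩)
    · rw [hzero₁, hzero₂]
    · exact (hray₁ s).trans (hray₂ s).symm
  have hsurj : SurjOn H₁ (coSector (Real.exp d) ∩ sector (Real.exp d))
      (coSector (Real.exp d) ∩ sector (Real.exp d)) := by
    rw [hinter]
    rintro _ (rfl | ⟨s, rfl⟩)
    · exact ⟨0, mem_insert _ _, hzero₁⟩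
    · exact ⟨_, mem_insert_of_mem _ ⟨hR.symm s, rfl⟩, by simp only [hray₁, hR.apply_symm_apply]⟩
  obtain ⟨H, Hi, hequiv, hH₁, hH₂⟩ := IsOrbitEquiv.exists_union hF hF' hequiv₁ hequiv₂
    (isClosed_coSector _) (isClosed_sector _) heq hsurj hcross hcross'
  rw [coSector_union_sector] at hequiv
  have hmem : (0 : ℝ × ℝ) ∈ sector (Real.exp d) := by simp [sector]
  have hpos (s : ℝ) : 0 < Real.exp s * Real.exp d := by positivity
  refine ⟨H, Hi, hequiv, by rw [hH₂ hmem, hzero₂], fun s => ?_, fun s => ?_⟩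
  · have hmemR : Real.exp s • ((1, -1) : ℝ × ℝ) ∈ sector (Real.exp d) :=
      ⟨by simp, by simp; linarith [hpos s, Real.exp_pos s]⟩
    rw [hH₂ hmemR, hright]
  · have hmemL : Real.exp s • ((-1, 1) : ℝ × ℝ) ∈ coSector (Real.exp d) :=
      ⟨by simp, by simp; linarith [hpos s, Real.exp_pos s]⟩
    rw [Prod.neg_mk, neg_neg, hH₁ hmemL, hleft]

theorem exists_pos_forall_halfPlaneEquiv (hμ : μ ≠ 0) (hν : ν ≠ 0) (hνμ : ν < μ) (d : ℝ) :
    ∃ δ > 0, ∀ F F', IsPerturbation (diagonalMap μ ν) δ F →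
      IsPerturbation (diagonalMap μ ν) δ F' → ∀ hR hL : ℝ ≃o ℝ, (∀ s, hL (s + d) = hR s + d) →
        HalfPlaneEquiv obliqueHalfPlane (1, -1) F F' hR hL := by
  have hm := Real.exp_pos d
  obtain ⟨δ₁, hδ₁, hco⟩ := exists_pos_forall_coSectorEquiv hν hνμ d
  obtain ⟨δ₂, hδ₂, hsec⟩ := exists_pos_forall_sectorEquiv hμ hνμ hm
  set c := (1 + Real.exp d) * (1 + Real.exp d)
  set δ₃ := Real.exp d * (μ - ν) / 2 / c
  have hδ₃ : 0 < δ₃ := by have := sub_pos.2 hνμ; positivity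
  have hsmall : c * δ₃ ≤ Real.exp d * (μ - ν) / 2 := (mul_div_cancel₀ _ (by positivity)).le
  refine ⟨min (min δ₁ δ₂) δ₃, by positivity, fun F F' hF hF' hR hL hRL => ?_⟩
  have hle₁ : min (min δ₁ δ₂) δ₃ ≤ δ₁ := (min_le_left _ _).trans (min_le_left _ _)
  have hle₂ : min (min δ₁ δ₂) δ₃ ≤ δ₂ := (min_le_left _ _).trans (min_le_right _ _)
  have hle₃ : min (min δ₁ δ₂) δ₃ ≤ δ₃ := min_le_right _ _
  have hcross {G : ℝ × ℝ → ℝ × ℝ} (hG : IsPerturbation (diagonalMap μ ν) δ₃ G) :=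
    crossesOnce_coSector_sector hm hνμ hδ₃.le hsmall hG
  exact halfPlaneEquiv_of_coSectorEquiv hF.isLipschitzField hF'.isLipschitzField
    (hcross (hF.mono hle₃)) (hcross (hF'.mono hle₃)) hRL
    (hco F F' (hF.mono hle₁) (hF'.mono hle₁) hL)
    (hsec F F' (hF.mono hle₂) (hF'.mono hle₂) hR)

theorem hasReturnShift_diagonalMap (hμ : μ ≠ 0) (hν : ν ≠ 0) (hνμ : ν < μ) (k : ℝ) :
    HasReturnShift obliqueHalfPlane (1, -1) (diagonalMap μ ν) k := by
  intro ε hε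
  obtain ⟨δ, hδ, h⟩ := exists_pos_forall_halfPlaneEquiv hμ hν hνμ k
  exact ⟨δ, hδ, fun F hF => ⟨OrderIso.addRight k, fun s => by simpa using hε.le,
    h F _ hF (IsPerturbation.self _ hδ.le)⟩⟩

end ObliqueHalfPlane

/-! ### Linear normal forms -/

section NormalForm

variable {a b c d α ω μ ν k : ℝ}

/-- The linear automorphism of the plane with invertible matrix `!![a, b; c, d]`. -/
def matrixEquiv (a b c d : ℝ) (h : a * d - b * c ≠ 0) : (ℝ × ℝ) ≃L[ℝ] (ℝ × ℝ) :=
  ContinuousLinearEquiv.equivOfInverse (matrixMap a b c d)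
    ((a * d - b * c)⁻¹ • matrixMap d (-b) (-c) a)
    (fun p => by
      simp only [smul_apply, matrixMap_apply, Prod.smul_mk, smul_eq_mul]
      have hdet := inv_mul_cancel₀ h
      exact Prod.ext (by linear_combination p.1 * hdet) (by linear_combination p.2 * hdet))
    (fun p => by
      simp only [smul_apply, matrixMap_apply, Prod.smul_fst, Prod.smul_snd, smul_eq_mul]
      have hdet := inv_mul_cancel₀ h
      exact Prod.ext (by linear_combination p.1 * hdet) (by linear_combination p.2 * hdet))

theorem matrixEquiv_apply (h : a * d - b * c ≠ 0) (p : ℝ × ℝ) :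
    matrixEquiv a b c d h p = (a * p.1 + b * p.2, c * p.1 + d * p.2) :=
  matrixMap_apply a b c d p

theorem neg_matrixMap (a b c d : ℝ) : -matrixMap a b c d = matrixMap (-a) (-b) (-c) (-d) := by
  ext <;> simp [matrixMap_apply]

theorem hasReturnShift_of_focus_of_pos (hc : 0 < c) (hω : 0 < ω) (htr : a + d = 2 * α)
    (hdet : a * d - b * c = α ^ 2 + ω ^ 2) :
    HasReturnShift upperHalfPlane (1, 0) (matrixMap a b c d) (Real.pi * α / ω) := by
  set L := matrixEquiv 1 (-((a - α) / c)) 0 (ω / c) (by simpa using ⟨hω.ne', hc.ne'⟩)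
  have hL (p : ℝ × ℝ) : L p = (p.1 - (a - α) / c * p.2, ω / c * p.2) :=
    (matrixEquiv_apply _ p).trans (by ext <;> simp; ring)
  have hpreimage : L ⁻¹' upperHalfPlane = upperHalfPlane := by
    ext p
    rw [mem_preimage, hL]
    change 0 ≤ ω / c * p.2 ↔ 0 ≤ p.2
    exact mul_nonneg_iff_of_pos_left (div_pos hω hc)
  rw [← hpreimage]
  refine HasReturnShift.of_semiconj L (B := spiral α ω) (fun p => ?_)
    (by simpa [hL] using hasReturnShift_spiral hω)
  obtain rfl : d = 2 * α - a := by linarith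
  simp only [hL, spiral, matrixMap_apply]
  ext
  · field_simp
    linear_combination (-p.2) * hdet
  · field_simp
    ring

theorem hasReturnShift_of_focus (hc : c ≠ 0) (hω : 0 < ω) (htr : a + d = 2 * α)
    (hdet : a * d - b * c = α ^ 2 + ω ^ 2) :
    HasReturnShift upperHalfPlane (1, 0) (matrixMap a b c d)
      (Real.sign c * (Real.pi * α / ω)) := by
  rcases hc.lt_or_gt with hc | hc
  · have hneg := hasReturnShift_of_focus_of_pos (neg_pos.2 hc) hω (a := -a) (b := -b) (d := -d)
      (α := -α) (by linarith) (by linarith)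
    rw [← neg_matrixMap, mul_neg, neg_div] at hneg
    simpa [Real.sign_of_neg hc] using hneg.of_neg
  · simpa [Real.sign_of_pos hc] using hasReturnShift_of_focus_of_pos hc hω htr hdet

theorem hasReturnShift_of_real_of_pos (hc : 0 < c) (hμ : μ ≠ 0) (hν : ν ≠ 0) (hνμ : ν < μ)
    (htr : a + d = μ + ν) (hdet : a * d - b * c = μ * ν) (k : ℝ) :
    HasReturnShift upperHalfPlane (1, 0) (matrixMap a b c d) k := by
  have hgap : 0 < (μ - ν) / c := div_pos (sub_pos.2 hνμ) hc
  set L := matrixEquiv 1 ((μ - a) / c) (-1) ((a - ν) / c) (by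
    convert hgap.ne' using 1
    ring)
  have hL (p : ℝ × ℝ) : L p = (p.1 + (μ - a) / c * p.2, -p.1 + (a - ν) / c * p.2) :=
    (matrixEquiv_apply _ p).trans (by simp)
  have hpreimage : L ⁻¹' obliqueHalfPlane = upperHalfPlane := by
    ext p
    have hsum : (L p).1 + (L p).2 = (μ - ν) / c * p.2 := by
      rw [hL]
      ring
    change 0 ≤ (L p).1 + (L p).2 ↔ 0 ≤ p.2
    rw [hsum]
    exact mul_nonneg_iff_of_pos_left hgap
  rw [← hpreimage]
  refine HasReturnShift.of_semiconj L (B := diagonalMap μ ν) (fun p => ?_)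
    (by simpa [hL] using hasReturnShift_diagonalMap hμ hν hνμ k)
  obtain rfl : d = μ + ν - a := by linarith
  simp only [hL, diagonalMap_apply, matrixMap_apply]
  ext
  · field_simp
    linear_combination (-p.2) * hdet
  · field_simp
    linear_combination p.2 * hdet

theorem hasReturnShift_of_real (hc : c ≠ 0) (hμ : μ ≠ 0) (hν : ν ≠ 0) (hνμ : ν < μ)
    (htr : a + d = μ + ν) (hdet : a * d - b * c = μ * ν) (k : ℝ) :
    HasReturnShift upperHalfPlane (1, 0) (matrixMap a b c d) k := by
  rcases hc.lt_or_gt with hc | hc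
  · have hneg := hasReturnShift_of_real_of_pos (neg_pos.2 hc) (neg_ne_zero.2 hν)
      (neg_ne_zero.2 hμ) (neg_lt_neg hνμ) (a := -a) (b := -b) (d := -d) (by linarith)
      (by linarith) k
    rw [← neg_matrixMap] at hneg
    exact hneg.of_neg
  · exact hasReturnShift_of_real_of_pos hc hμ hν hνμ htr hdet k

end NormalForm

section Eigenvalues

variable {X Y : ℝ × ℝ → ℝ × ℝ}

theorem fderiv_eq_matrixMap (X : ℝ × ℝ → ℝ × ℝ) :
    fderiv ℝ X (0, 0) = matrixMap (jac11 X) (jac12 X) (jac21 X) (jac22 X) := eq_matrixMap _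

theorem eig1_im_eq_zero_iff : (eig1 X).im = 0 ↔ 0 ≤ trJ X ^ 2 - 4 * detJ X := by
  refine ⟨fun him => not_lt.1 fun hD => ?_, fun hD => by rw [eig1, if_pos hD, Complex.ofReal_im]⟩
  rw [eig1, if_neg (not_le.2 hD)] at him
  have hpos : 0 < √(4 * detJ X - trJ X ^ 2) := Real.sqrt_pos.2 (by linarith)
  simp at him
  linarith

theorem trJ_eq_and_detJ_eq_of_im_ne_zero (him : (eig1 X).im ≠ 0) :
    trJ X = 2 * (eig1 X).re ∧ detJ X = (eig1 X).re ^ 2 + |(eig1 X).im| ^ 2 := by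
  have hD := not_le.1 (mt eig1_im_eq_zero_iff.2 him)
  have hsq := Real.sq_sqrt (show 0 ≤ 4 * detJ X - trJ X ^ 2 by linarith)
  rw [sq_abs, eig1, if_neg (not_le.2 hD)]
  constructor
  · simp
    ring
  · simp
    linarith

theorem trJ_eq_and_detJ_eq_of_im_eq_zero (him : (eig1 X).im = 0) :
    trJ X = (eig1 X).re + (eig2 X).re ∧ detJ X = (eig1 X).re * (eig2 X).re := by
  have hD := eig1_im_eq_zero_iff.1 him
  have hsq := Real.sq_sqrt hD
  rw [eig1, eig2, if_pos hD, if_pos hD, Complex.ofReal_re, Complex.ofReal_re]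
  constructor <;> linarith

theorem eig2_re_lt_eig1_re (him : (eig1 X).im = 0) (hne : eig1 X ≠ eig2 X) :
    (eig2 X).re < (eig1 X).re := by
  have hD := eig1_im_eq_zero_iff.1 him
  rw [eig1, eig2, if_pos hD, if_pos hD] at hne ⊢
  rw [Complex.ofReal_re, Complex.ofReal_re]
  refine lt_of_le_of_ne ?_ fun h => hne (congrArg _ h.symm)
  linarith [Real.sqrt_nonneg (trJ X ^ 2 - 4 * detJ X)]

theorem hasReturnShift_fderiv_of_im_ne_zero (hc : jac21 X ≠ 0) (him : (eig1 X).im ≠ 0) :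
    HasReturnShift upperHalfPlane (1, 0) (fderiv ℝ X (0, 0))
      (Real.sign (jac21 X) * (Real.pi * (eig1 X).re / |(eig1 X).im|)) := by
  obtain ⟨htr, hdet⟩ := trJ_eq_and_detJ_eq_of_im_ne_zero him
  rw [fderiv_eq_matrixMap]
  exact hasReturnShift_of_focus hc (abs_pos.2 him) htr hdet

theorem hasReturnShift_fderiv_of_im_eq_zero (hc : jac21 X ≠ 0) (hdet₀ : detJ X ≠ 0)
    (hne : eig1 X ≠ eig2 X) (him : (eig1 X).im = 0) (k : ℝ) :
    HasReturnShift upperHalfPlane (1, 0) (fderiv ℝ X (0, 0)) k := by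
  obtain ⟨htr, hdet⟩ := trJ_eq_and_detJ_eq_of_im_eq_zero him
  rw [fderiv_eq_matrixMap]
  rw [hdet] at hdet₀
  exact hasReturnShift_of_real hc (left_ne_zero_of_mul hdet₀) (right_ne_zero_of_mul hdet₀)
    (eig2_re_lt_eig1_re him hne) htr hdet k

theorem sign_eq_sign_of_mul_pos {x y : ℝ} (h : 0 < x * y) : Real.sign x = Real.sign y := by
  rcases mul_pos_iff.1 h with ⟨hx, hy⟩ | ⟨hx, hy⟩
  · rw [Real.sign_of_pos hx, Real.sign_of_pos hy]
  · rw [Real.sign_of_neg hx, Real.sign_of_neg hy]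

theorem exists_hasReturnShift_fderiv (hc : jac21 X ≠ 0) (hdet : detJ X ≠ 0)
    (hne : eig1 X ≠ eig2 X) : ∃ k, HasReturnShift upperHalfPlane (1, 0) (fderiv ℝ X (0, 0)) k :=
  if him : (eig1 X).im = 0 then ⟨0, hasReturnShift_fderiv_of_im_eq_zero hc hdet hne him 0⟩
  else ⟨_, hasReturnShift_fderiv_of_im_ne_zero hc him⟩

theorem exists_hasReturnShift_add_ne_zero {U : Set (ℝ × ℝ)} (hZ : InOmega1 U X Y) :
    ∃ k₁ k₂, k₁ + k₂ ≠ 0 ∧ HasReturnShift upperHalfPlane (1, 0) (fderiv ℝ X (0, 0)) k₁ ∧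
      HasReturnShift upperHalfPlane (1, 0) (fderiv ℝ Y (0, 0)) k₂ := by
  obtain ⟨⟨-, -, -, -, -, -, hdet, hc⟩, hneX, hneY, hell⟩ := hZ
  have hcX := left_ne_zero_of_mul hc.ne'
  have hcY := right_ne_zero_of_mul hc.ne'
  have hdetX := left_ne_zero_of_mul hdet
  have hdetY := right_ne_zero_of_mul hdet
  by_cases himX : (eig1 X).im = 0
  · obtain ⟨k, hk⟩ := exists_hasReturnShift_fderiv hcY hdetY hneY
    exact ⟨1 - k, k, by simp, hasReturnShift_fderiv_of_im_eq_zero hcX hdetX hneX himX _, hk⟩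
  by_cases himY : (eig1 Y).im = 0
  · obtain ⟨k, hk⟩ := exists_hasReturnShift_fderiv hcX hdetX hneX
    exact ⟨k, 1 - k, by simp, hk, hasReturnShift_fderiv_of_im_eq_zero hcY hdetY hneY himY _⟩
  refine ⟨_, _, ?_, hasReturnShift_fderiv_of_im_ne_zero hcX himX,
    hasReturnShift_fderiv_of_im_ne_zero hcY himY⟩
  rw [ellVal, if_pos (mul_ne_zero himX himY)] at hell
  rw [sign_eq_sign_of_mul_pos hc, ← mul_add, mul_div_assoc, mul_div_assoc, ← mul_add]
  exact mul_ne_zero (mt Real.sign_eq_zero_iff.1 hcY) (mul_ne_zero Real.pi_pos.ne' hell)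

end Eigenvalues

/-! ### Localization and gluing -/

theorem exists_isPerturbation_eqOn {X : ℝ × ℝ → ℝ × ℝ} {A : ℝ × ℝ →L[ℝ] ℝ × ℝ}
    (hX : HasStrictFDerivAt X A 0) (hzero : X 0 = 0) {δ : ℝ} (hδ : 0 < δ) :
    ∃ r > 0, ∃ F, IsPerturbation A δ F ∧ EqOn F X (Metric.closedBall 0 r) := by
  obtain ⟨s, hs, hXs⟩ :=
    hX.approximates_deriv_on_nhds (c := δ.toNNReal) (Or.inr (by simpa using hδ))
  obtain ⟨r, hr, hrs⟩ := Metric.nhds_basis_closedBall.mem_iff.1 hs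
  have hball (p : ℝ × ℝ) :
      p ∈ Metric.closedBall 0 r ↔ p.1 ∈ Icc (-r) r ∧ p.2 ∈ Icc (-r) r := by
    rw [mem_closedBall_zero_iff, Prod.norm_def, max_le_iff, Real.norm_eq_abs, Real.norm_eq_abs,
      abs_le, abs_le, mem_Icc, mem_Icc]
  set c : ℝ × ℝ → ℝ × ℝ := Prod.map (clamp (-r) r) (clamp (-r) r)
  have hc_mem (p : ℝ × ℝ) : c p ∈ s :=
    hrs ((hball _).2 ⟨clamp_mem (by linarith) _, clamp_mem (by linarith) _⟩)
  have hc_eq : EqOn c id (Metric.closedBall 0 r) := fun p hp =>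
    Prod.ext (clamp_of_mem ((hball p).1 hp).1) (clamp_of_mem ((hball p).1 hp).2)
  have hc_le (p q : ℝ × ℝ) : ‖c p - c q‖ ≤ ‖p - q‖ :=
    max_le_max (abs_clamp_sub_clamp_le _ _ _ _) (abs_clamp_sub_clamp_le _ _ _ _)
  have hF : EqOn (fun p => A p + (X (c p) - A (c p))) X (Metric.closedBall 0 r) := fun p hp => by
    simp [hc_eq hp]
  refine ⟨r, hr, _, ⟨(hF (Metric.mem_closedBall_self hr.le)).trans hzero, fun p q => ?_⟩, hF⟩
  calc _ = ‖X (c p) - X (c q) - A (c p - c q)‖ := by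
        rw [map_sub]
        congr 1
        abel
    _ ≤ δ.toNNReal * ‖c p - c q‖ := hXs _ (hc_mem p) _ (hc_mem q)
    _ ≤ δ * ‖p - q‖ := by
        rw [Real.coe_toNNReal _ hδ.le]
        exact mul_le_mul_of_nonneg_left (hc_le p q) hδ.le

theorem IsOrbitMap.mapsOrbits {F F' X X' H : ℝ × ℝ → ℝ × ℝ} {S S' T : Set (ℝ × ℝ)}
    (h : IsOrbitMap F F' T H) (hF : IsLipschitzField F) (hX : EqOn F X S) (hX' : EqOn F' X' S')
    (hST : S ⊆ T) (hS : MapsTo H S S') : MapsOrbits X X' H S S' := by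
  intro γ I hI hγ hIS
  rcases I.eq_empty_or_nonempty with rfl | ⟨t₀, ht₀⟩
  · exact ⟨γ, ∅, id, ordConnected_empty, by simp [IsSolutionOn], by simp, bijOn_empty _,
      fun _ ht => ht.elim, continuousOn_empty _, by simp⟩
  obtain ⟨Γ, hΓ₀, hΓ⟩ := hF.exists_isIntegralCurve t₀ (γ t₀)
  obtain ⟨K, hK⟩ := hF.exists_lipschitzWith
  have hγΓ : EqOn γ Γ I := by
    refine eqOn_of_isIntegralCurveOn hI (fun _ _ => hK) (fun t ht => ?_)
      (hΓ.isIntegralCurveOn I) ht₀ hΓ₀.symm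
    rw [hX (hIS t ht)]
    exact (hγ t ht).hasDerivWithinAt
  obtain ⟨δ, τ, hδ, hmono, hcont, hHΓ⟩ := h.isOrbitArc Γ I hΓ hI fun t ht => by
    rw [← hγΓ ht]
    exact hST (hIS t ht)
  have hHγ (t : ℝ) (ht : t ∈ I) : H (γ t) = δ (τ t) := by
    rw [hγΓ ht]
    exact hHΓ ht
  have hmem : ∀ s ∈ τ '' I, δ s ∈ S' := by
    rintro _ ⟨t, ht, rfl⟩
    rw [← hHγ t ht]
    exact hS (hIS t ht)
  refine ⟨δ, τ '' I, τ, (hI.isPreconnected.image τ hcont).ordConnected, fun s hs => ?_, hmem,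
    hmono.injOn.bijOn_image, hmono, hcont, hHγ⟩
  rw [← hX' (hmem s hs)]
  exact hδ s

section Glue

variable {E : Type*} [NormedAddCommGroup E] [NormedSpace ℝ E] {F F' G G' : E → E} {S₁ S₂ : Set E}
  {u x : E}

theorem eq_zero_or_exp_smul_of_mem_span (hx : x ∈ Submodule.span ℝ {u}) :
    x = 0 ∨ (∃ s, x = Real.exp s • u) ∨ ∃ s, x = Real.exp s • -u := by
  obtain ⟨c, rfl⟩ := Submodule.mem_span_singleton.1 hx
  rcases lt_trichotomy c 0 with hc | rfl | hc
  · exact Or.inr (Or.inr ⟨Real.log (-c), by rw [Real.exp_log (neg_pos.2 hc), neg_smul_neg]⟩)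
  · exact Or.inl (zero_smul ℝ u)
  · exact Or.inr (Or.inl ⟨Real.log c, by rw [Real.exp_log hc]⟩)

theorem HalfPlaneEquiv.exists_glue {hR hL : ℝ ≃o ℝ} (h₁ : HalfPlaneEquiv S₁ u F F' hR hL)
    (h₂ : HalfPlaneEquiv S₂ (-u) G G' hL hR) (hline : S₁ ∩ S₂ = Submodule.span ℝ {u}) :
    ∃ H Hi, IsOrbitEquiv F F' S₁ H Hi ∧ IsOrbitEquiv G G' S₂ H Hi ∧ H 0 = 0 := by
  obtain ⟨H₁, Hi₁, hequiv₁, hzero₁, hright₁, hleft₁⟩ := h₁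
  obtain ⟨H₂, Hi₂, hequiv₂, hzero₂, hleft₂, hright₂⟩ := h₂
  rw [neg_neg] at hright₂
  have hu : u ∈ Submodule.span ℝ {u} := Submodule.mem_span_singleton_self u
  have heq : EqOn H₁ H₂ (S₁ ∩ S₂) := fun x hx => by
    rcases eq_zero_or_exp_smul_of_mem_span (hline.subset hx) with rfl | ⟨s, rfl⟩ | ⟨s, rfl⟩
    · rw [hzero₁, hzero₂]
    · rw [hright₁, hright₂]
    · rw [hleft₁, hleft₂]
  have hsurj : SurjOn H₁ (S₁ ∩ S₂) (S₁ ∩ S₂) := by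
    rw [hline]
    intro x hx
    rcases eq_zero_or_exp_smul_of_mem_span hx with rfl | ⟨s, rfl⟩ | ⟨s, rfl⟩
    · exact ⟨0, hx, hzero₁⟩
    · exact ⟨Real.exp (hR.symm s) • u, Submodule.smul_mem _ _ hu, by
        rw [hright₁, hR.apply_symm_apply]⟩
    · exact ⟨Real.exp (hL.symm s) • -u, Submodule.smul_mem _ _ (neg_mem hu), by
        rw [hleft₁, hL.apply_symm_apply]⟩
  obtain ⟨H, Hi, h₁, h₂, hH₁, -⟩ := hequiv₁.exists_glue hequiv₂ heq hsurj
  have hzero : (0 : E) ∈ S₁ ∩ S₂ := hline.superset (zero_mem _)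
  exact ⟨H, Hi, h₁, h₂, (hH₁ hzero.1).trans hzero₁⟩

end Glue

section Plane

variable {F G F' G' X Y X' Y' : ℝ × ℝ → ℝ × ℝ}

/-- The closed lower half plane. -/
def lowerHalfPlane : Set (ℝ × ℝ) := {p | p.2 ≤ 0}

theorem isClosed_upperHalfPlane : IsClosed upperHalfPlane :=
  isClosed_le continuous_const continuous_snd

theorem isClosed_lowerHalfPlane : IsClosed lowerHalfPlane :=
  isClosed_le continuous_snd continuous_const

theorem upperHalfPlane_union_lowerHalfPlane : upperHalfPlane ∪ lowerHalfPlane = univ :=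
  eq_univ_of_forall fun p => le_total 0 p.2

theorem mem_upperHalfPlane_inter_lowerHalfPlane {p : ℝ × ℝ} :
    p ∈ upperHalfPlane ∩ lowerHalfPlane ↔ p.2 = 0 :=
  ⟨fun h => le_antisymm h.2 h.1, fun h => ⟨h.ge, h.le⟩⟩

theorem upperHalfPlane_inter_lowerHalfPlane :
    upperHalfPlane ∩ lowerHalfPlane = Submodule.span ℝ {((1, 0) : ℝ × ℝ)} := by
  ext p
  rw [mem_upperHalfPlane_inter_lowerHalfPlane, SetLike.mem_coe, Submodule.mem_span_singleton]
  refine ⟨fun h => ⟨p.1, by ext <;> simp [h]⟩, ?_⟩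
  rintro ⟨c, rfl⟩
  simp

theorem IsOrbitMap.continuous_of_half_planes {H : ℝ × ℝ → ℝ × ℝ}
    (h₁ : IsOrbitMap F F' upperHalfPlane H) (h₂ : IsOrbitMap G G' lowerHalfPlane H) :
    Continuous H := by
  rw [← continuousOn_univ, ← upperHalfPlane_union_lowerHalfPlane]
  exact h₁.continuousOn.union_of_isClosed h₂.continuousOn isClosed_upperHalfPlane
    isClosed_lowerHalfPlane

theorem IsOrbitMap.mapsTo_axis {H : ℝ × ℝ → ℝ × ℝ} (h₁ : IsOrbitMap F F' upperHalfPlane H)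
    (h₂ : IsOrbitMap G G' lowerHalfPlane H) : MapsTo H {p | p.2 = 0} {p | p.2 = 0} :=
  fun _ hp =>
    have hp := mem_upperHalfPlane_inter_lowerHalfPlane.2 hp
    mem_upperHalfPlane_inter_lowerHalfPlane.1 ⟨h₁.mapsTo hp.1, h₂.mapsTo hp.2⟩

theorem localSigmaEquiv_of_isOrbitEquiv {H Hi : ℝ × ℝ → ℝ × ℝ} {r : ℝ} (hr : 0 < r)
    (hF : IsLipschitzField F) (hG : IsLipschitzField G) (hF' : IsLipschitzField F')
    (hG' : IsLipschitzField G') (hX : EqOn F X (Metric.ball 0 r))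
    (hY : EqOn G Y (Metric.ball 0 r)) (h₁ : IsOrbitEquiv F F' upperHalfPlane H Hi)
    (h₂ : IsOrbitEquiv G G' lowerHalfPlane H Hi) (hzero : H 0 = 0) :
    LocalSigmaEquiv X Y F' G' := by
  have hcont := h₁.isOrbitMap.continuous_of_half_planes h₂.isOrbitMap
  have hconti := h₁.isOrbitMap_inv.continuous_of_half_planes h₂.isOrbitMap_inv
  have hinv := h₁.invOn_union h₂
  rw [upperHalfPlane_union_lowerHalfPlane] at hinv
  have hleft : Function.LeftInverse Hi H := fun p => hinv.1 (mem_univ p)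
  have hright : Function.RightInverse Hi H := fun p => hinv.2 (mem_univ p)
  have hzeroi : Hi 0 = 0 := by simpa [hzero] using hleft 0
  have hmaps : MapsTo H (Metric.ball 0 r) (Hi ⁻¹' Metric.ball 0 r) := fun p hp => by
    rwa [mem_preimage, hleft]
  have hmapsi : MapsTo Hi (Hi ⁻¹' Metric.ball 0 r) (Metric.ball 0 r) := mapsTo_preimage _ _
  have haxis := h₁.isOrbitMap.mapsTo_axis h₂.isOrbitMap
  have haxisi := h₁.isOrbitMap_inv.mapsTo_axis h₂.isOrbitMap_inv
  refine ⟨Metric.ball 0 r, Hi ⁻¹' Metric.ball 0 r, H, Hi, Metric.ball_mem_nhds 0 hr,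
    hconti.continuousAt.preimage_mem_nhds (by
      rw [Prod.mk_zero_zero, hzeroi]
      exact Metric.ball_mem_nhds 0 hr),
    hcont.continuousOn, hconti.continuousOn,
    InvOn.bijOn ⟨hleft.leftInvOn _, hright.leftInvOn _⟩ hmaps hmapsi,
    fun p _ => hleft p, fun q _ => hright q, hzero, ?_,
    h₁.isOrbitMap.mapsOrbits hF (hX.mono inter_subset_left) (eqOn_refl _ _) inter_subset_right
      (hmaps.inter_inter h₁.isOrbitMap.mapsTo),
    h₂.isOrbitMap.mapsOrbits hG (hY.mono inter_subset_left) (eqOn_refl _ _) inter_subset_right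
      (hmaps.inter_inter h₂.isOrbitMap.mapsTo),
    h₁.isOrbitMap_inv.mapsOrbits hF' (eqOn_refl _ _) (hX.mono inter_subset_left)
      inter_subset_right (hmapsi.inter_inter h₁.isOrbitMap_inv.mapsTo),
    h₂.isOrbitMap_inv.mapsOrbits hG' (eqOn_refl _ _) (hY.mono inter_subset_left)
      inter_subset_right (hmapsi.inter_inter h₂.isOrbitMap_inv.mapsTo)⟩
  exact (hmaps.inter_inter haxis).image_subset.antisymm fun q hq =>
    ⟨Hi q, hmapsi.inter_inter haxisi hq, hright q⟩

theorem HasReturnShift.lowerHalfPlane {A : ℝ × ℝ →L[ℝ] ℝ × ℝ} {k : ℝ}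
    (h : HasReturnShift upperHalfPlane (1, 0) A k) :
    HasReturnShift lowerHalfPlane (-(1, 0)) A k := by
  have hpreimage : ContinuousLinearEquiv.neg ℝ ⁻¹' upperHalfPlane =
      PiecewiseSmooth.lowerHalfPlane := by
    ext p
    exact neg_nonneg (a := p.2)
  rw [← hpreimage]
  exact of_semiconj (ContinuousLinearEquiv.neg ℝ) (B := A) (fun p => (map_neg A p).symm)
    (by simpa using h)

theorem exists_halfPlaneEquiv_pair {A B : ℝ × ℝ →L[ℝ] ℝ × ℝ} {k₁ k₂ : ℝ} (hk : k₁ + k₂ ≠ 0)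
    (hA : HasReturnShift upperHalfPlane (1, 0) A k₁)
    (hB : HasReturnShift upperHalfPlane (1, 0) B k₂) :
    ∃ δ > 0, ∀ F G, IsPerturbation A δ F → IsPerturbation B δ G → ∃ hR hL : ℝ ≃o ℝ,
      HalfPlaneEquiv upperHalfPlane (1, 0) F A hR hL ∧
        HalfPlaneEquiv lowerHalfPlane (-(1, 0)) G B hL hR := by
  have hε : 0 < |k₁ + k₂| / 4 := by positivity
  obtain ⟨δ₁, hδ₁, hA⟩ := hA _ hε
  obtain ⟨δ₂, hδ₂, hB⟩ := hB.lowerHalfPlane _ hε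
  refine ⟨min δ₁ δ₂, lt_min hδ₁ hδ₂, fun F G hF hG => ?_⟩
  obtain ⟨p, hp, hA⟩ := hA F (hF.mono (min_le_left _ _))
  obtain ⟨q, hq, hB⟩ := hB G (hG.mono (min_le_right _ _))
  obtain ⟨h, hh⟩ := exists_conj_translation (P := p.trans q) (k := k₁ + k₂) fun s => by
    have hadd : (p.trans q) s - s - (k₁ + k₂) = (q (p s) - p s - k₂) + (p s - s - k₁) := by
      rw [OrderIso.trans_apply]
      ring
    rw [hadd]
    linarith [abs_add_le (q (p s) - p s - k₂) (p s - s - k₁), hp s, hq (p s)]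
  -- `h` conjugates the full return map to a translation; the left boundary map is then forced.
  set g := (p.symm.trans h).trans (OrderIso.addRight k₁)
  have hg (s : ℝ) : g s = h (p.symm s) + k₁ := rfl
  refine ⟨h, g, hA h g fun s => by rw [hg, p.symm_apply_apply], hB g h fun s => ?_⟩
  have hreturn := hh (p.symm s)
  rw [OrderIso.trans_apply, p.apply_symm_apply] at hreturn
  rw [hreturn, hg, add_assoc]

theorem localSigmaEquiv_of_hasReturnShift {A B : ℝ × ℝ →L[ℝ] ℝ × ℝ} {k₁ k₂ : ℝ}
    (hk : k₁ + k₂ ≠ 0) (hA : HasReturnShift upperHalfPlane (1, 0) A k₁)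
    (hB : HasReturnShift upperHalfPlane (1, 0) B k₂) (hXA : HasStrictFDerivAt X A 0)
    (hYB : HasStrictFDerivAt Y B 0) (hX : X 0 = 0) (hY : Y 0 = 0) : LocalSigmaEquiv X Y A B := by
  obtain ⟨δ, hδ, hAB⟩ := exists_halfPlaneEquiv_pair hk hA hB
  obtain ⟨r₁, hr₁, F, hF, hFX⟩ := exists_isPerturbation_eqOn hXA hX hδ
  obtain ⟨r₂, hr₂, G, hG, hGY⟩ := exists_isPerturbation_eqOn hYB hY hδ
  obtain ⟨hR, hL, h₁, h₂⟩ := hAB F G hF hG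
  obtain ⟨H, Hi, h₁, h₂, hzero⟩ := h₁.exists_glue h₂ upperHalfPlane_inter_lowerHalfPlane
  exact localSigmaEquiv_of_isOrbitEquiv (lt_min hr₁ hr₂) hF.isLipschitzField hG.isLipschitzField
    (IsPerturbation.self A hδ.le).isLipschitzField (IsPerturbation.self B hδ.le).isLipschitzField
    (hFX.mono (Metric.ball_subset_closedBall.trans (Metric.closedBall_subset_closedBall
      (min_le_left _ _))))
    (hGY.mono (Metric.ball_subset_closedBall.trans (Metric.closedBall_subset_closedBall
      (min_le_right _ _)))) h₁ h₂ hzero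

end Plane

end PiecewiseSmooth

open PiecewiseSmooth in
/-- Every `Z ∈ Ω₁` is locally Σ-equivalent near the origin to its piecewise linear part
`Z_L = (A⁺·(x,y)ᵀ, A⁻·(x,y)ᵀ)`. -/
theorem stmt7 (U : Set (ℝ × ℝ)) (X Y : ℝ × ℝ → ℝ × ℝ)
    (hZ : InOmega1 U X Y) :
    LocalSigmaEquiv X Y
      (fun p : ℝ × ℝ => fderiv ℝ X (0, 0) p)
      (fun p : ℝ × ℝ => fderiv ℝ Y (0, 0) p) := by
  obtain ⟨k₁, k₂, hk, hkX, hkY⟩ := exists_hasReturnShift_add_ne_zero hZ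
  obtain ⟨⟨hU, h0, hX, hY, hX0, hY0, -⟩, -⟩ := hZ
  have hX' : HasStrictFDerivAt X (fderiv ℝ X (0, 0)) 0 :=
    (hX.contDiffAt (hU.mem_nhds h0)).hasStrictFDerivAt one_ne_zero
  have hY' : HasStrictFDerivAt Y (fderiv ℝ Y (0, 0)) 0 :=
    (hY.contDiffAt (hU.mem_nhds h0)).hasStrictFDerivAt one_ne_zero
  exact localSigmaEquiv_of_hasReturnShift hk hkX hkY hX' hY' hX0 hY0
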